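/- arXiv:math/0509559 — 4 statements merged into one kernel-verified Lean document; each statement's English description precedes it below -/
import Mathlib

section
/- For Lebesgue-almost every x ∈ [0,1], the arithmetic mean of the continued fraction digits diverges: lim_{n→∞} (a_1(x) + ⋯ + a_n(x))/n = ∞. -/
open MeasureTheory Filter

/-- The Gauss map `G(x) = 1/x - ⌊1/x⌋` (with `G 0 = 0`). -/
noncomputable def gaussMap (x : ℝ) : ℝ := if x = 0 then 0 else Int.fract (1 / x)

/-- The `n`-th continued fraction digit (`n ≥ 1`): `a_n(x) = ⌊1 / G^{n-1}(x)⌋`. -/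
noncomputable def cfDigit (x : ℝ) (n : ℕ) : ℤ := ⌊1 / (gaussMap^[n - 1] x)⌋

namespace CFMean

lemma measurable_gauss : Measurable gaussMap := by
  unfold gaussMap
  refine Measurable.ite (measurableSet_singleton 0) measurable_const ?_
  exact (measurable_const.div measurable_id).fract

/-- Partial sums of the digits. -/
noncomputable def S (n : ℕ) (x : ℝ) : ℝ := ∑ i ∈ Finset.range n, (cfDigit x (i + 1) : ℝ)

lemma measurable_S (n : ℕ) : Measurable (S n) := by
  unfold S
  refine Finset.measurable_sum _ fun i _ => ?_
  unfold cfDigit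
  have h : Measurable fun x : ℝ => ⌊1 / (gaussMap^[i + 1 - 1] x)⌋ :=
    (measurable_const.div (measurable_gauss.iterate _)).floor
  exact (measurable_from_top (f := fun z : ℤ => (z : ℝ))).comp h

lemma S_succ (n k : ℕ) (y : ℝ) (hy : y ∈ Set.Ico (0 : ℝ) 1) :
    S (n + 1) (1 / ((k : ℝ) + 1 + y)) = (k + 1) + S n y := by
  have hpos : (0 : ℝ) < (k : ℝ) + 1 + y := by have := hy.1; positivity
  have hG : gaussMap (1 / ((k : ℝ) + 1 + y)) = y := by
    unfold gaussMap
    rw [if_neg (by positivity), one_div_one_div]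
    have : (k : ℝ) + 1 + y = ((k + 1 : ℕ) : ℝ) + y := by push_cast; ring
    rw [this, Int.fract_natCast_add, Int.fract_eq_self.2 hy]
  unfold S
  rw [Finset.sum_range_succ']
  rw [add_comm]
  congr 1
  · unfold cfDigit
    simp only [zero_add, Nat.sub_self, Function.iterate_zero, id_eq]
    rw [one_div_one_div]
    have : (k : ℝ) + 1 + y = ((k + 1 : ℕ) : ℝ) + y := by push_cast; ring
    rw [this, Int.floor_natCast_add, Int.floor_eq_zero_iff.2 hy]
    push_cast; ring
  · refine Finset.sum_congr rfl fun i _ => ?_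
    unfold cfDigit
    simp only [Nat.add_sub_cancel, Function.iterate_succ_apply, hG]

noncomputable def F (t : ℝ) (n : ℕ) (x : ℝ) : ENNReal :=
  ENNReal.ofReal (1 / (1 + x)) * ENNReal.ofReal (Real.exp (-t * S n x))

lemma measurable_F (t : ℝ) (n : ℕ) : Measurable (F t n) := by
  unfold F
  have := measurable_S n
  fun_prop

noncomputable def E (t : ℝ) (n : ℕ) : ENNReal := ∫⁻ x in Set.Ico (0 : ℝ) 1, F t n x

lemma union_eq : Set.Ioc (0 : ℝ) 1 = ⋃ k : ℕ, (fun y : ℝ => 1 / ((k : ℝ) + 1 + y)) '' Set.Ico 0 1 := by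
  ext x
  simp only [Set.mem_iUnion, Set.mem_image]
  constructor
  · rintro ⟨h0, h1⟩
    have h2 : 1 ≤ 1 / x := by rw [le_div_iff₀ h0]; linarith
    have h3 : 1 ≤ ⌊1 / x⌋₊ := by rw [Nat.one_le_floor_iff]; exact h2
    refine ⟨⌊1 / x⌋₊ - 1, 1 / x - ⌊1 / x⌋₊, ⟨?_, ?_⟩, ?_⟩
    · have := Nat.floor_le (a := 1 / x) (by linarith); linarith
    · have := Nat.lt_floor_add_one (1 / x); linarith
    · push_cast [h3]
      rw [show ((⌊1 / x⌋₊ : ℝ) - 1 + 1 + (1 / x - ⌊1 / x⌋₊)) = 1 / x by ring, one_div_one_div]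
  · rintro ⟨k, y, ⟨h0, h1⟩, rfl⟩
    have : (0 : ℝ) ≤ k := by positivity
    refine ⟨by positivity, ?_⟩
    rw [div_le_one (by positivity)]; linarith

lemma fib_inj {k l : ℕ} {y z : ℝ} (hy : y ∈ Set.Ico (0 : ℝ) 1) (hz : z ∈ Set.Ico (0 : ℝ) 1)
    (h : 1 / ((k : ℝ) + 1 + y) = 1 / ((l : ℝ) + 1 + z)) : k = l ∧ y = z := by
  have h1 : (k : ℝ) + 1 + y = (l : ℝ) + 1 + z := by
    have := congrArg (fun w : ℝ => 1 / w) h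
    simpa only [one_div_one_div] using this
  have h2 : (k : ℝ) < l + 1 := by linarith [hy.1, hz.2]
  have h3 : (l : ℝ) < k + 1 := by linarith [hz.1, hy.2]
  have h2' : k < l + 1 := by exact_mod_cast h2
  have h3' : l < k + 1 := by exact_mod_cast h3
  have : k = l := by omega
  subst this
  exact ⟨rfl, by linarith⟩

lemma hasDeriv (k : ℕ) (y : ℝ) (hy : y ∈ Set.Ico (0 : ℝ) 1) :
    HasDerivAt (fun y : ℝ => 1 / ((k : ℝ) + 1 + y)) (-(1 / ((k : ℝ) + 1 + y) ^ 2)) y := by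
  have hpos : (k : ℝ) + 1 + y ≠ 0 := by have := hy.1; positivity
  have h := ((hasDerivAt_id' y).const_add ((k : ℝ) + 1)).fun_inv hpos
  simp only [one_div]
  refine h.congr_deriv ?_
  rw [neg_div, one_div]

lemma E_succ (t : ℝ) (n : ℕ) : E t (n + 1) = ∫⁻ y in Set.Ico (0 : ℝ) 1,
    (∑' k : ℕ, ENNReal.ofReal (Real.exp (-t * (k + 1)) / (((k : ℝ) + 1 + y) * ((k : ℝ) + 2 + y))))
      * ENNReal.ofReal (Real.exp (-t * S n y)) := by
  have hS := measurable_S n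
  unfold E
  rw [setLIntegral_congr (Ico_ae_eq_Ioc (μ := volume) (a := (0 : ℝ)) (b := 1)), union_eq,
    lintegral_iUnion]
  · simp_rw [← ENNReal.tsum_mul_right]
    rw [lintegral_tsum]
    · congr 1
      ext k
      rw [lintegral_image_eq_lintegral_abs_deriv_mul measurableSet_Ico
        (fun y hy => (hasDeriv k y hy).hasDerivWithinAt)
        (fun y hy z hz h => (fib_inj hy hz h).2)]
      refine setLIntegral_congr_fun measurableSet_Ico fun y hy => ?_
      have hpos : (0 : ℝ) < (k : ℝ) + 1 + y := by have := hy.1; positivity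
      have hpos2 : (0 : ℝ) < (k : ℝ) + 2 + y := by have := hy.1; positivity
      simp only [F]
      rw [S_succ n k y hy, abs_neg, abs_of_pos (by positivity),
        ← ENNReal.ofReal_mul (by positivity), ← ENNReal.ofReal_mul (by positivity),
        ← ENNReal.ofReal_mul (by positivity), mul_add, Real.exp_add]
      congr 1
      have : 1 + 1 / ((k : ℝ) + 1 + y) = ((k : ℝ) + 2 + y) / ((k : ℝ) + 1 + y) := by
        field_simp; ring
      rw [this]
      field_simp
    · intro k
      fun_prop
  · intro k
    exact measurableSet_Ico.image_of_continuousOn_injOn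
      (fun y hy => (hasDeriv k y hy).continuousAt.continuousWithinAt)
      (fun y hy z hz h => (fib_inj hy hz h).2)
  · intro k l hkl
    rw [Function.onFun, Set.disjoint_left]
    rintro _ ⟨y, hy, rfl⟩ ⟨z, hz, h⟩
    exact hkl (fib_inj hz hy h).1.symm

noncomputable def del (N : ℕ) (t : ℝ) : ℝ :=
  ∑ j ∈ Finset.range N, (1 - Real.exp (-t * (j + 1))) / (((j : ℝ) + 2) * ((j : ℝ) + 3))

lemma tele (y : ℝ) (hy : 0 ≤ y) (n : ℕ) :
    ∑ j ∈ Finset.range n, 1 / (((j : ℝ) + 1 + y) * ((j : ℝ) + 2 + y))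
      = 1 / (1 + y) - 1 / ((n : ℝ) + 1 + y) := by
  induction n with
  | zero => simp
  | succ n ih =>
    rw [Finset.sum_range_succ, ih]
    push_cast
    have : (0 : ℝ) < (n : ℝ) + 1 + y := by positivity
    have : (0 : ℝ) < (n : ℝ) + 2 + y := by positivity
    rw [show (n : ℝ) + 1 + 1 + y = n + 2 + y by ring]
    field_simp
    ring

lemma tsum_bound (N : ℕ) (t : ℝ) (ht : 0 ≤ t) (y : ℝ) (hy : y ∈ Set.Ico (0 : ℝ) 1) :
    (∑' k : ℕ, ENNReal.ofReal (Real.exp (-t * (k + 1)) / (((k : ℝ) + 1 + y) * ((k : ℝ) + 2 + y))))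
      ≤ ENNReal.ofReal (1 - del N t) * ENNReal.ofReal (1 / (1 + y)) := by
  have hy0 := hy.1
  have hy1 := hy.2
  rw [← ENNReal.ofReal_mul' (by positivity)]
  refine ENNReal.tsum_le_of_sum_range_le fun n => ?_
  rw [← ENNReal.ofReal_sum_of_nonneg (fun _ _ => by positivity)]
  refine ENNReal.ofReal_le_ofReal ?_
  have hexp : ∀ j : ℕ, 0 ≤ 1 - Real.exp (-t * ((j : ℝ) + 1)) := fun j => by
    have : -t * ((j : ℝ) + 1) ≤ 0 := by
      have : 0 ≤ t * ((j : ℝ) + 1) := by positivity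
      linarith
    linarith [Real.exp_le_one_iff.2 this]
  have hdel : 0 ≤ del N t := Finset.sum_nonneg fun j _ => div_nonneg (hexp j) (by positivity)
  have h1 : ∑ j ∈ Finset.range n, Real.exp (-t * (j + 1)) / (((j : ℝ) + 1 + y) * ((j : ℝ) + 2 + y))
      ≤ ∑ j ∈ Finset.range (n + N),
        Real.exp (-t * (j + 1)) / (((j : ℝ) + 1 + y) * ((j : ℝ) + 2 + y)) :=
    Finset.sum_le_sum_of_subset_of_nonneg (by simp) (fun _ _ _ => by positivity)
  have h2 : ∑ j ∈ Finset.range (n + N),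
        Real.exp (-t * (j + 1)) / (((j : ℝ) + 1 + y) * ((j : ℝ) + 2 + y))
      = 1 / (1 + y) - 1 / (((n + N : ℕ) : ℝ) + 1 + y) - ∑ j ∈ Finset.range (n + N),
        (1 - Real.exp (-t * (j + 1))) / (((j : ℝ) + 1 + y) * ((j : ℝ) + 2 + y)) := by
    rw [← tele y hy0, ← Finset.sum_sub_distrib]
    refine Finset.sum_congr rfl fun j _ => ?_
    rw [← sub_div]; ring
  have h3 : del N t ≤ ∑ j ∈ Finset.range (n + N),
        (1 - Real.exp (-t * (j + 1))) / (((j : ℝ) + 1 + y) * ((j : ℝ) + 2 + y)) := by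
    refine le_trans (Finset.sum_le_sum fun j _ => ?_)
      (Finset.sum_le_sum_of_subset_of_nonneg (s := Finset.range N) (by simp)
        (fun j _ _ => div_nonneg (hexp j) (by positivity)))
    refine div_le_div_of_nonneg_left (hexp j) (by positivity) ?_
    refine mul_le_mul (by linarith) (by linarith) (by positivity) (by positivity)
  have h4 : 0 ≤ 1 / (((n + N : ℕ) : ℝ) + 1 + y) := by positivity
  have h5 : del N t * (1 / (1 + y)) ≤ del N t := by
    refine mul_le_of_le_one_right hdel ?_
    rw [div_le_one (by positivity)]; linarith
  rw [sub_mul, one_mul]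
  linarith

lemma E_step (N : ℕ) (t : ℝ) (ht : 0 ≤ t) (n : ℕ) :
    E t (n + 1) ≤ ENNReal.ofReal (1 - del N t) * E t n := by
  rw [E_succ]
  unfold E
  rw [← lintegral_const_mul _ (measurable_F t n)]
  refine setLIntegral_mono' measurableSet_Ico fun y hy => ?_
  unfold F
  rw [← mul_assoc]
  gcongr
  exact tsum_bound N t ht y hy

lemma E_zero (t : ℝ) : E t 0 ≤ 1 := by
  calc E t 0 ≤ ∫⁻ _ in Set.Ico (0 : ℝ) 1, 1 := by
        refine setLIntegral_mono' measurableSet_Ico fun y hy => ?_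
        have := hy.1
        simp only [F, S, Finset.range_zero, Finset.sum_empty, mul_zero, Real.exp_zero,
          ENNReal.ofReal_one, mul_one]
        rw [ENNReal.ofReal_le_one, div_le_one (by positivity)]
        linarith
    _ = 1 := by simp

lemma E_le (N : ℕ) (t : ℝ) (ht : 0 ≤ t) (n : ℕ) :
    E t n ≤ ENNReal.ofReal (1 - del N t) ^ n := by
  induction n with
  | zero => simpa using E_zero t
  | succ n ih =>
    rw [pow_succ']
    exact (E_step N t ht n).trans (by gcongr)

lemma exists_t (L : ℕ) : ∃ N : ℕ, ∃ t : ℝ, 0 < t ∧ Real.exp (t * L) * (1 - del N t) < 1 := by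
  have hD : ∃ N : ℕ, (L : ℝ) < ∑ j ∈ Finset.range N,
      ((j : ℝ) + 1) / (((j : ℝ) + 2) * ((j : ℝ) + 3)) := by
    obtain ⟨N, hN⟩ := (Real.tendsto_sum_range_one_div_nat_succ_atTop.eventually_gt_atTop
      (6 * (L : ℝ))).exists
    refine ⟨N, ?_⟩
    have : ∑ j ∈ Finset.range N, 1 / ((j : ℝ) + 1) ≤ 6 * ∑ j ∈ Finset.range N,
      ((j : ℝ) + 1) / (((j : ℝ) + 2) * ((j : ℝ) + 3)) := by
      rw [Finset.mul_sum]
      refine Finset.sum_le_sum fun j _ => ?_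
      have : (0 : ℝ) ≤ j := by positivity
      rw [← mul_div_assoc, div_le_div_iff₀ (by positivity) (by positivity)]
      nlinarith
    linarith
  obtain ⟨N, hN⟩ := hD
  refine ⟨N, ?_⟩
  set D := ∑ j ∈ Finset.range N, ((j : ℝ) + 1) / (((j : ℝ) + 2) * ((j : ℝ) + 3)) with hDdef
  have hdel : HasDerivAt (del N) D 0 := by
    unfold del
    rw [hDdef]
    refine HasDerivAt.fun_sum fun j _ => ?_
    have h := ((((hasDerivAt_id' (0 : ℝ)).fun_neg.mul_const ((j : ℝ) + 1)).exp).const_sub 1).div_const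
      (((j : ℝ) + 2) * ((j : ℝ) + 3))
    refine h.congr_deriv ?_
    simp
  have hdel0 : del N 0 = 0 := by simp [del]
  have hg : HasDerivAt (fun t : ℝ => Real.exp (t * L) * (1 - del N t)) (L - D) 0 := by
    have h := (((hasDerivAt_id' (0 : ℝ)).mul_const (L : ℝ)).exp).fun_mul (hdel.const_sub 1)
    refine h.congr_deriv ?_
    simp [hdel0]
    ring
  have hneg : (L : ℝ) - D < 0 := by linarith
  have hs' := hg.tendsto_slope.eventually_lt_const hneg
  have hs2 : ∀ᶠ t in nhdsWithin (0 : ℝ) (Set.Ioi 0),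
      slope (fun t : ℝ => Real.exp (t * L) * (1 - del N t)) 0 t < 0 :=
    hs'.filter_mono (nhdsWithin_mono _ (fun x hx => (ne_of_gt hx)))
  obtain ⟨t, ht, ht0⟩ := (hs2.and self_mem_nhdsWithin).exists
  have ht0' : (0 : ℝ) < t := ht0
  refine ⟨t, ht0', ?_⟩
  rw [slope_def_field] at ht
  simp only [hdel0, sub_zero, zero_mul, Real.exp_zero, mul_one] at ht
  rw [div_lt_iff₀ ht0'] at ht
  linarith

lemma meas_bound (L N : ℕ) (t : ℝ) (ht : 0 < t) (n : ℕ) :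
    (volume.restrict (Set.Ico (0 : ℝ) 1)) {x | S n x ≤ L * n}
      ≤ 2 * ENNReal.ofReal (Real.exp (t * L) * (1 - del N t)) ^ n := by
  have hmeas : MeasurableSet {x | S n x ≤ L * n} := measurableSet_le (measurable_S n) measurable_const
  rw [← lintegral_indicator_one hmeas]
  rw [ENNReal.ofReal_mul (by positivity), mul_pow, ← mul_assoc]
  refine le_trans ?_ (mul_le_mul_right (E_le N t ht.le n) _)
  unfold E
  rw [← lintegral_const_mul _ (measurable_F t n)]
  refine setLIntegral_mono' measurableSet_Ico fun x hx => ?_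
  by_cases h : S n x ≤ L * n
  · rw [Set.indicator_of_mem (by exact h)]
    have := hx.1
    have := hx.2
    have h2 : (2 : ENNReal) = ENNReal.ofReal 2 := by simp
    rw [F, h2, ← ENNReal.ofReal_pow (by positivity), ← ENNReal.ofReal_mul (by positivity),
      ← ENNReal.ofReal_mul (by positivity), ← ENNReal.ofReal_mul (by positivity), Pi.one_apply,
      ENNReal.one_le_ofReal, ← Real.exp_nat_mul]
    have e1 : 1 ≤ Real.exp (n * (t * L)) * Real.exp (-t * S n x) := by
      rw [← Real.exp_add]
      apply Real.one_le_exp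
      nlinarith
    have e2 : 1 ≤ 2 * (1 / (1 + x)) := by
      rw [mul_one_div, le_div_iff₀ (by positivity)]; linarith
    calc (1 : ℝ) ≤ (2 * (1 / (1 + x))) * (Real.exp (n * (t * L)) * Real.exp (-t * S n x)) :=
          one_le_mul_of_one_le_of_one_le e2 e1
      _ = _ := by ring
  · rw [Set.indicator_of_notMem (by exact h)]
    exact zero_le

lemma ae_L (L : ℕ) : ∀ᵐ x ∂(volume.restrict (Set.Ico (0 : ℝ) 1)),
    ∀ᶠ n : ℕ in atTop, (L : ℝ) * n < S n x := by
  obtain ⟨N, t, ht, hlt⟩ := exists_t L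
  have hsum : ∑' n : ℕ, (volume.restrict (Set.Ico (0 : ℝ) 1)) {x | S n x ≤ L * n} ≠ ⊤ := by
    refine ne_top_of_le_ne_top ?_ (ENNReal.tsum_le_tsum fun n => meas_bound L N t ht n)
    rw [ENNReal.tsum_mul_left, ENNReal.tsum_geometric]
    refine ENNReal.mul_ne_top (by simp) (ENNReal.inv_ne_top.2 ?_)
    rw [← ENNReal.ofReal_one] 
    exact (tsub_pos_of_lt ((ENNReal.ofReal_lt_ofReal_iff one_pos).2 hlt)).ne'
  filter_upwards [ae_eventually_notMem hsum] with x hx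
  filter_upwards [hx] with n hn
  simpa using hn

end CFMean

/-- For Lebesgue-a.e. `x ∈ [0,1]`, the arithmetic mean of the continued fraction
digits diverges: `(a_1(x) + ⋯ + a_n(x))/n → ∞`. -/
theorem cf_digit_mean_tendsto_atTop :
    ∀ᵐ x ∂(volume.restrict (Set.Icc (0 : ℝ) 1)),
      Tendsto (fun n : ℕ => (∑ i ∈ Finset.range n, (cfDigit x (i + 1) : ℝ)) / n)
        atTop atTop := by
  rw [← Measure.restrict_congr_set (Ico_ae_eq_Icc (μ := volume) (a := (0 : ℝ)) (b := 1))]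
  filter_upwards [ae_all_iff.2 CFMean.ae_L] with x hx
  rw [tendsto_atTop]
  intro b
  obtain ⟨L, hL⟩ := exists_nat_ge b
  filter_upwards [hx L, eventually_gt_atTop 0] with n hn hn0
  have hn0' : (0 : ℝ) < n := by exact_mod_cast hn0
  rw [le_div_iff₀ hn0']
  have hn' : (L : ℝ) * n < ∑ i ∈ Finset.range n, (cfDigit x (i + 1) : ℝ) := hn
  nlinarith
end

section
/- Let (X,T,A,μ) be a conservative ergodic measure preserving system with μ σ-finite infinite, A a uniform set for f ∈ P_μ with normalizing sequence (b_n), and suppose the wandering rate (W_n) is regularly varying with exponent 1-α for some α ∈ (0,1], and the sequence (T̂^n f restricted to A) is decreasing. Then W_n · T̂^n f → 1/(Γ(α)Γ(2-α)) μ-a.e. uniformly on A; in particular A is uniformly returning for f. -/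
open MeasureTheory Filter

lemma abel_fin (p : ℕ → ℝ) (s : ℝ) (N : ℕ) :
    ∑ k ∈ Finset.range N, s ^ k * p k = s ^ N * ∑ k ∈ Finset.range N, p k
      + (1 - s) * ∑ n ∈ Finset.range N, s ^ n * ∑ k ∈ Finset.range (n + 1), p k := by
  induction N with
  | zero => simp
  | succ N ih =>
    rw [Finset.sum_range_succ, ih, Finset.sum_range_succ (fun n => s ^ n * _) N,
      Finset.sum_range_succ p N]
    ring

lemma abel_le (p q : ℕ → ℝ) (K s : ℝ) (hs0 : 0 ≤ s) (hs1 : s ≤ 1) (hp : ∀ k, 0 ≤ p k)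
    (hq : ∀ k, 0 ≤ q k) (hK : 0 ≤ K) (n0 : ℕ)
    (h : ∀ n ≥ n0, ∑ k ∈ Finset.range n, p k ≤ K * ∑ k ∈ Finset.range n, q k)
    (N : ℕ) (hN : n0 ≤ N) :
    ∑ k ∈ Finset.range N, s ^ k * p k ≤ K * ∑ k ∈ Finset.range N, s ^ k * q k
      + (1 - s) * (n0 * ∑ k ∈ Finset.range n0, p k) := by
  rw [abel_fin p, abel_fin q]
  have h1 : s ^ N * ∑ k ∈ Finset.range N, p k ≤ s ^ N * (K * ∑ k ∈ Finset.range N, q k) :=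
    mul_le_mul_of_nonneg_left (h N hN) (by positivity)
  have h2 : ∑ n ∈ Finset.range N, s ^ n * ∑ k ∈ Finset.range (n + 1), p k ≤
      K * ∑ n ∈ Finset.range N, s ^ n * ∑ k ∈ Finset.range (n + 1), q k
      + n0 * ∑ k ∈ Finset.range n0, p k := by
    have e : ∑ n ∈ Finset.range N, (if n < n0 then ∑ k ∈ Finset.range n0, p k else 0)
        = n0 * ∑ k ∈ Finset.range n0, p k := by
      rw [← Finset.sum_filter]
      have : Finset.filter (fun n => n < n0) (Finset.range N) = Finset.range n0 := by
        ext n; simp; omega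
      rw [this]; simp
    rw [← e, Finset.mul_sum, ← Finset.sum_add_distrib]
    apply Finset.sum_le_sum
    intro n _
    have hqn : 0 ≤ ∑ k ∈ Finset.range (n + 1), q k := Finset.sum_nonneg (fun k _ => hq k)
    have hpn : 0 ≤ ∑ k ∈ Finset.range (n + 1), p k := Finset.sum_nonneg (fun k _ => hp k)
    have hsn : 0 ≤ s ^ n := by positivity
    have hsn1 : s ^ n ≤ 1 := pow_le_one₀ hs0 hs1
    split_ifs with hn
    · have : ∑ k ∈ Finset.range (n + 1), p k ≤ ∑ k ∈ Finset.range n0, p k :=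
        Finset.sum_le_sum_of_subset_of_nonneg (Finset.range_mono (by omega)) (fun k _ _ => hp k)
      have h3 : 0 ≤ K * (s ^ n * ∑ k ∈ Finset.range (n + 1), q k) := by positivity
      have h4 : s ^ n * ∑ k ∈ Finset.range (n + 1), p k ≤ 1 * ∑ k ∈ Finset.range (n + 1), p k :=
        mul_le_mul_of_nonneg_right hsn1 hpn
      linarith
    · have := mul_le_mul_of_nonneg_left (h (n + 1) (by omega)) hsn
      linarith
  have := mul_le_mul_of_nonneg_left h2 (sub_nonneg.2 hs1)
  linarith

lemma summ_bdd (p : ℕ → ℝ) (M s : ℝ) (hs0 : 0 ≤ s) (hs1 : s < 1) (hp : ∀ k, 0 ≤ p k)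
    (hM : ∀ k, p k ≤ M) : Summable (fun k => s ^ k * p k) :=
  Summable.of_nonneg_of_le (fun k => mul_nonneg (by positivity) (hp k))
    (fun k => mul_le_mul_of_nonneg_left (hM k) (by positivity))
    ((summable_geometric_of_lt_one hs0 hs1).mul_right M)

lemma abel_tsum_le (p q : ℕ → ℝ) (K s Mp Mq : ℝ) (hs0 : 0 ≤ s) (hs1 : s < 1) (hp : ∀ k, 0 ≤ p k)
    (hq : ∀ k, 0 ≤ q k) (hMp : ∀ k, p k ≤ Mp) (hMq : ∀ k, q k ≤ Mq) (hK : 0 ≤ K) (n0 : ℕ)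
    (h : ∀ n ≥ n0, ∑ k ∈ Finset.range n, p k ≤ K * ∑ k ∈ Finset.range n, q k) :
    ∑' k, s ^ k * p k ≤ K * ∑' k, s ^ k * q k
      + (1 - s) * (n0 * ∑ k ∈ Finset.range n0, p k) := by
  have h1 := (summ_bdd p Mp s hs0 hs1 hp hMp).hasSum.tendsto_sum_nat
  have h2 := (summ_bdd q Mq s hs0 hs1 hq hMq).hasSum.tendsto_sum_nat
  refine le_of_tendsto_of_tendsto h1 ((h2.const_mul K).add_const _) ?_
  filter_upwards [eventually_ge_atTop n0] with N hN
  exact abel_le p q K s hs0 hs1.le hp hq hK n0 h N hN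

lemma abel_unif {ι : Type*} (p : ι → ℕ → ℝ) (q : ℕ → ℝ) (M : ι → ℝ)
    (hp : ∀ i k, 0 ≤ p i k) (hM : ∀ i k, p i k ≤ M i) (hq : ∀ k, 0 ≤ q k)
    (hq0 : 0 < q 0) (hq1 : ∀ k, q k ≤ q 0)
    (h : ∀ ε > 0, ∃ n0 : ℕ, ∀ n ≥ n0, ∀ i,
      ∑ k ∈ Finset.range n, p i k ≤ (1 + ε) * ∑ k ∈ Finset.range n, q k ∧
      ∑ k ∈ Finset.range n, q k ≤ (1 + ε) * ∑ k ∈ Finset.range n, p i k)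
    (ε : ℝ) (hε : 0 < ε) : ∃ s0 < 1, ∀ s, 0 ≤ s → s0 < s → s < 1 → ∀ i,
      ∑' k, s ^ k * p i k ≤ (1 + ε) * ∑' k, s ^ k * q k ∧
      ∑' k, s ^ k * q k ≤ (1 + ε) * ∑' k, s ^ k * p i k := by
  obtain ⟨η, hη0, hη1, hηε⟩ : ∃ η : ℝ, 0 < η ∧ η ≤ 1 / 4 ∧ 4 * η ≤ ε :=
    ⟨min (1 / 4) (ε / 4), by positivity, min_le_left _ _, by
      have := min_le_right (1 / 4) (ε / 4); linarith⟩
  obtain ⟨n0, hn0⟩ := h η hη0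
  set Q0 := ∑ k ∈ Finset.range n0, q k with hQ0
  have hQ0n : 0 ≤ Q0 := Finset.sum_nonneg (fun k _ => hq k)
  set D : ℝ := n0 * (2 * Q0) + 1 with hD
  have hDpos : 0 < D := by positivity
  refine ⟨1 - η * q 0 / D, by have : 0 < η * q 0 / D := by positivity
                              linarith, ?_⟩
  intro s hs0 hs1 hs2 i
  have hsD : (1 - s) * D ≤ η * q 0 := by
    have : 1 - s ≤ η * q 0 / D := by linarith
    rwa [le_div_iff₀ hDpos] at this
  have hQge : q 0 ≤ ∑' k, s ^ k * q k := by
    have := (summ_bdd q (q 0) s hs0 hs2 hq hq1).le_tsum 0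
      (fun k _ => mul_nonneg (by positivity) (hq k))
    simpa using this
  have hpn0 : ∑ k ∈ Finset.range n0, p i k ≤ 2 * Q0 := by
    have := (hn0 n0 le_rfl i).1
    nlinarith
  have h1s : 0 ≤ 1 - s := by linarith
  have a1 := abel_tsum_le (p i) q (1 + η) s _ _ hs0 hs2 (hp i) hq (hM i) hq1 (by linarith) n0
    (fun n hn => (hn0 n hn i).1)
  have a2 := abel_tsum_le q (p i) (1 + η) s _ _ hs0 hs2 hq (hp i) hq1 (hM i) (by linarith) n0
    (fun n hn => (hn0 n hn i).2)
  have hP : 0 ≤ ∑' k, s ^ k * p i k :=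
    tsum_nonneg (fun k => mul_nonneg (by positivity) (hp i k))
  set P := ∑' k, s ^ k * p i k
  set Q := ∑' k, s ^ k * q k
  have hη2 : η * q 0 ≤ η * Q := mul_le_mul_of_nonneg_left hQge hη0.le
  have b1 : (1 - s) * (n0 * ∑ k ∈ Finset.range n0, p i k) ≤ η * Q := by
    refine le_trans (mul_le_mul_of_nonneg_left ?_ h1s) (hsD.trans hη2)
    have := mul_le_mul_of_nonneg_left hpn0 (Nat.cast_nonneg (α := ℝ) n0)
    linarith
  have b2 : (1 - s) * (n0 * Q0) ≤ η * Q := by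
    refine le_trans (mul_le_mul_of_nonneg_left ?_ h1s) (hsD.trans hη2)
    have := mul_nonneg (Nat.cast_nonneg (α := ℝ) n0) hQ0n
    linarith
  have hQ : 0 < Q := hq0.trans_le hQge
  constructor
  · nlinarith
  · have c1 : (1 - η) * Q ≤ (1 + η) * P := by linarith
    have c2 : (1 + η) * P ≤ (1 - η) * (1 + 4 * η) * P := by
      apply mul_le_mul_of_nonneg_right _ hP
      nlinarith
    have c3 : Q ≤ (1 + 4 * η) * P := by
      have : (1 - η) * Q ≤ (1 - η) * ((1 + 4 * η) * P) := by linarith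
      exact le_of_mul_le_mul_left this (by linarith)
    refine c3.trans (mul_le_mul_of_nonneg_right (by linarith) hP)

lemma summ_h (v : ℕ → ℝ) (M B s : ℝ) (hs0 : 0 < s) (hs1 : s < 1) (hv : ∀ k, 0 ≤ v k)
    (hM : ∀ k, v k ≤ M) (h : ℝ → ℝ) (hB : ∀ y ∈ Set.Icc (0:ℝ) 1, |h y| ≤ B) :
    Summable (fun k : ℕ => s ^ k * h (s ^ k) * v k) := by
  refine Summable.of_norm_bounded (g := fun k => s ^ k * (B * M))
    ((summable_geometric_of_lt_one hs0.le hs1).mul_right _) ?_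
  intro k
  have hk : s ^ k ∈ Set.Icc (0:ℝ) 1 := ⟨by positivity, pow_le_one₀ hs0.le hs1.le⟩
  rw [Real.norm_eq_abs, abs_mul, abs_mul, abs_of_nonneg hk.1, abs_of_nonneg (hv k), mul_assoc]
  refine mul_le_mul_of_nonneg_left ?_ hk.1
  exact mul_le_mul (hB _ hk) (hM k) (hv k) ((abs_nonneg _).trans (hB _ hk))

lemma bdd_of_cont (h : ℝ → ℝ) (hh : Continuous h) : ∃ B, ∀ y ∈ Set.Icc (0:ℝ) 1, |h y| ≤ B := by
  obtain ⟨B, hB⟩ := isCompact_Icc.exists_bound_of_continuousOn (s := Set.Icc (0:ℝ) 1) hh.continuousOn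
  exact ⟨B, fun y hy => by simpa using hB y hy⟩

lemma integrable_h (α : ℝ) (hα : 0 < α) (h : ℝ → ℝ) (hh : Continuous h) :
    IntegrableOn (fun t : ℝ => t ^ (α - 1) * (Real.exp (-t) * h (Real.exp (-t)))) (Set.Ioi 0) := by
  obtain ⟨B, hB⟩ := bdd_of_cont h hh
  have h1 := Real.GammaIntegral_convergent hα
  have h2 : IntegrableOn (fun t : ℝ => (Real.exp (-t) * t ^ (α - 1)) * h (Real.exp (-t)))
      (Set.Ioi 0) := by
    refine Integrable.mul_bdd (c := B) h1 ?_ ?_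
    · exact (by fun_prop : Continuous fun t : ℝ => h (Real.exp (-t))).aestronglyMeasurable
    · filter_upwards [ae_restrict_mem measurableSet_Ioi] with t ht
      exact hB _ ⟨(Real.exp_pos _).le, by simpa using (le_of_lt ht : (0:ℝ) ≤ t)⟩
  refine h2.congr (Eventually.of_forall fun t => ?_)
  ring

lemma karamata (α C : ℝ) (hα : 0 < α) (r s : ℕ → ℝ) (v : ℕ → ℕ → ℝ) (M : ℕ → ℝ)
    (hr : ∀ n, 0 ≤ r n) (hs : ∀ᶠ n in atTop, 0 < s n ∧ s n < 1)
    (hv : ∀ n k, 0 ≤ v n k) (hM : ∀ n k, v n k ≤ M n)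
    (hlim : ∀ m : ℕ, Tendsto (fun n => r n * ∑' k, (s n ^ (m + 1)) ^ k * v n k) atTop
      (nhds (C * (1 / ((m : ℝ) + 1)) ^ α)))
    (h : ℝ → ℝ) (hh : Continuous h) :
    Tendsto (fun n => r n * ∑' k : ℕ, s n ^ k * h (s n ^ k) * v n k) atTop
      (nhds (C / Real.Gamma α *
        ∫ t in Set.Ioi (0:ℝ), t ^ (α - 1) * (Real.exp (-t) * h (Real.exp (-t))))) := by
  have hG := Real.Gamma_pos_of_pos hα
  -- polynomials
  have hpoly : ∀ p : Polynomial ℝ,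
      Tendsto (fun n => r n * ∑' k : ℕ, s n ^ k * p.eval (s n ^ k) * v n k) atTop
      (nhds (C / Real.Gamma α *
        ∫ t in Set.Ioi (0:ℝ), t ^ (α - 1) * (Real.exp (-t) * p.eval (Real.exp (-t))))) := by
    intro p
    induction p using Polynomial.induction_on' with
    | add p q hp hq =>
      have := hp.add hq
      rw [← mul_add, ← integral_add (integrable_h α hα _ p.continuous)
        (integrable_h α hα _ q.continuous)] at this
      have e : ∀ t : ℝ, t ^ (α - 1) * (Real.exp (-t) * (p + q).eval (Real.exp (-t)))
        = t ^ (α - 1) * (Real.exp (-t) * p.eval (Real.exp (-t)))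
          + t ^ (α - 1) * (Real.exp (-t) * q.eval (Real.exp (-t))) := by
        intro t; rw [Polynomial.eval_add]; ring
      simp_rw [e]
      refine this.congr' ?_
      filter_upwards [hs] with n hn
      obtain ⟨B1, hB1⟩ := bdd_of_cont _ p.continuous
      obtain ⟨B2, hB2⟩ := bdd_of_cont _ q.continuous
      rw [← mul_add, ← (summ_h _ _ _ _ hn.1 hn.2 (hv n) (hM n) _ hB1).tsum_add
        (summ_h _ _ _ _ hn.1 hn.2 (hv n) (hM n) _ hB2)]
      congr 1
      refine tsum_congr fun k => ?_
      rw [Polynomial.eval_add]; ring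
    | monomial m a =>
      have := (hlim m).const_mul a
      have e : C / Real.Gamma α * ∫ t in Set.Ioi (0:ℝ), t ^ (α - 1) *
          (Real.exp (-t) * (Polynomial.monomial m a).eval (Real.exp (-t)))
          = a * (C * (1 / ((m : ℝ) + 1)) ^ α) := by
        have e1 : ∀ t : ℝ, t ^ (α - 1) *
          (Real.exp (-t) * (Polynomial.monomial m a).eval (Real.exp (-t)))
          = a * (t ^ (α - 1) * Real.exp (-(((m:ℝ) + 1) * t))) := by
          intro t
          rw [Polynomial.eval_monomial, ← Real.exp_nat_mul]
          have : Real.exp (-(((m:ℝ) + 1) * t)) = Real.exp (-t) * Real.exp (m * -t) := by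
            rw [← Real.exp_add]; congr 1; ring
          rw [this]; ring
        simp_rw [e1]
        rw [integral_const_mul, Real.integral_rpow_mul_exp_neg_mul_Ioi hα (by positivity)]
        field_simp
      rw [e]
      refine this.congr fun n => ?_
      rw [mul_left_comm, ← tsum_mul_left]
      congr 1
      refine tsum_congr fun k => ?_
      rw [Polynomial.eval_monomial]; ring
  have h0 : Tendsto (fun n => r n * ∑' k, s n ^ k * v n k) atTop (nhds C) := by
    simpa using hlim 0
  have hC : 0 ≤ C := by
    refine ge_of_tendsto h0 ?_
    filter_upwards [hs] with n hn
    exact mul_nonneg (hr n) (tsum_nonneg fun k => mul_nonneg (pow_nonneg hn.1.le k) (hv n k))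
  rw [Metric.tendsto_atTop']
  intro δ hδ
  set ε := δ / (4 * (C + 1)) with hε
  have hεpos : 0 < ε := by positivity
  have hεδ : ε * (4 * (C + 1)) = δ := by rw [hε]; field_simp
  obtain ⟨p, hp⟩ := exists_polynomial_near_of_continuousOn 0 1 h hh.continuousOn ε hεpos
  have ev1 := (tendsto_order.1 h0).2 (C + 1) (by linarith)
  have ev2 := (Metric.tendsto_nhds.1 (hpoly p)) (δ / 4) (by positivity)
  obtain ⟨B1, hB1⟩ := bdd_of_cont _ p.continuous
  obtain ⟨B2, hB2⟩ := bdd_of_cont _ hh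
  have hlimdiff : |C / Real.Gamma α *
        (∫ t in Set.Ioi (0:ℝ), t ^ (α - 1) * (Real.exp (-t) * p.eval (Real.exp (-t)))) -
      C / Real.Gamma α *
        ∫ t in Set.Ioi (0:ℝ), t ^ (α - 1) * (Real.exp (-t) * h (Real.exp (-t)))| ≤ ε * C := by
    rw [← mul_sub, ← integral_sub (integrable_h α hα _ p.continuous) (integrable_h α hα _ hh),
      abs_mul, abs_of_nonneg (by positivity : 0 ≤ C / Real.Gamma α)]
    have : |∫ t in Set.Ioi (0:ℝ), (t ^ (α - 1) * (Real.exp (-t) * p.eval (Real.exp (-t))) -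
        t ^ (α - 1) * (Real.exp (-t) * h (Real.exp (-t))))| ≤
        ∫ t in Set.Ioi (0:ℝ), ε * (Real.exp (-t) * t ^ (α - 1)) := by
      rw [← Real.norm_eq_abs]
      refine norm_integral_le_of_norm_le ((Real.GammaIntegral_convergent hα).const_mul ε) ?_
      filter_upwards [ae_restrict_mem measurableSet_Ioi] with t ht
      have ht' : (0:ℝ) < t := ht
      have hb := hp (Real.exp (-t)) ⟨(Real.exp_pos _).le, by simpa using ht'.le⟩
      have hpos : 0 ≤ Real.exp (-t) * t ^ (α - 1) := by positivity
      have e : t ^ (α - 1) * (Real.exp (-t) * p.eval (Real.exp (-t))) -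
        t ^ (α - 1) * (Real.exp (-t) * h (Real.exp (-t))) =
        (p.eval (Real.exp (-t)) - h (Real.exp (-t))) * (Real.exp (-t) * t ^ (α - 1)) := by ring
      rw [e, Real.norm_eq_abs, abs_mul, abs_of_nonneg hpos]
      exact mul_le_mul_of_nonneg_right hb.le hpos
    rw [integral_const_mul, ← Real.Gamma_eq_integral hα] at this
    calc _ ≤ C / Real.Gamma α * (ε * Real.Gamma α) :=
          mul_le_mul_of_nonneg_left this (by positivity)
      _ = ε * C := by field_simp
  have key : ∀ᶠ n in atTop, dist (r n * ∑' k : ℕ, s n ^ k * h (s n ^ k) * v n k)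
      (C / Real.Gamma α *
        ∫ t in Set.Ioi (0:ℝ), t ^ (α - 1) * (Real.exp (-t) * h (Real.exp (-t)))) < δ := by
    filter_upwards [hs, ev1, ev2] with n hn h1 h2
    have d1 : |(r n * ∑' k : ℕ, s n ^ k * h (s n ^ k) * v n k) -
        r n * ∑' k : ℕ, s n ^ k * p.eval (s n ^ k) * v n k| ≤
        ε * (r n * ∑' k, s n ^ k * v n k) := by
      rw [← mul_sub, ← (summ_h _ _ _ _ hn.1 hn.2 (hv n) (hM n) _ hB2).tsum_sub
        (summ_h _ _ _ _ hn.1 hn.2 (hv n) (hM n) _ hB1), abs_mul, abs_of_nonneg (hr n),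
        mul_left_comm, ← tsum_mul_left, ← Real.norm_eq_abs (tsum _)]
      refine mul_le_mul_of_nonneg_left ?_ (hr n)
      have hsm : Summable fun k => s n ^ k * v n k := by
        simpa using summ_h _ _ 1 _ hn.1 hn.2 (hv n) (hM n) (fun _ => 1) (by simp)
      refine tsum_of_norm_bounded (hsm.mul_left ε).hasSum ?_
      intro k
      have hk : s n ^ k ∈ Set.Icc (0:ℝ) 1 := ⟨pow_nonneg hn.1.le k, pow_le_one₀ hn.1.le hn.2.le⟩
      have hb := hp _ hk
      rw [abs_sub_comm] at hb
      have e : s n ^ k * h (s n ^ k) * v n k - s n ^ k * p.eval (s n ^ k) * v n k =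
        (h (s n ^ k) - p.eval (s n ^ k)) * (s n ^ k * v n k) := by ring
      rw [e, Real.norm_eq_abs, abs_mul, abs_of_nonneg (mul_nonneg hk.1 (hv n k))]
      exact mul_le_mul_of_nonneg_right hb.le (mul_nonneg hk.1 (hv n k))
    rw [Real.dist_eq] at h2 ⊢
    have d2 : ε * (r n * ∑' k, s n ^ k * v n k) ≤ ε * (C + 1) :=
      mul_le_mul_of_nonneg_left h1.le hεpos.le
    have := abs_sub_le (r n * ∑' k : ℕ, s n ^ k * h (s n ^ k) * v n k)
      (r n * ∑' k : ℕ, s n ^ k * p.eval (s n ^ k) * v n k) (C / Real.Gamma α *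
        ∫ t in Set.Ioi (0:ℝ), t ^ (α - 1) * (Real.exp (-t) * h (Real.exp (-t))))
    have := abs_sub_le (r n * ∑' k : ℕ, s n ^ k * p.eval (s n ^ k) * v n k) (C / Real.Gamma α *
        ∫ t in Set.Ioi (0:ℝ), t ^ (α - 1) * (Real.exp (-t) * p.eval (Real.exp (-t))))
        (C / Real.Gamma α *
        ∫ t in Set.Ioi (0:ℝ), t ^ (α - 1) * (Real.exp (-t) * h (Real.exp (-t))))
    nlinarith
  obtain ⟨N, hN⟩ := eventually_atTop.1 key
  exact ⟨N, fun n hn => hN n hn.le⟩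

lemma bump (α A B : ℝ) (hα : 0 < α) (hα1 : α ≤ 1) (hB : 0 < B) (hBA : B < A) :
    ∃ h : ℝ → ℝ, Continuous h ∧ (∀ y, 0 ≤ h y) ∧
      (∀ t, h (Real.exp (-t)) ≠ 0 → B < t ∧ t < A) ∧
      0 < ∫ t in Set.Ioi (0:ℝ), t ^ ((1:ℝ) - 1) * (Real.exp (-t) * h (Real.exp (-t))) ∧
      A ^ (α - 1) * (∫ t in Set.Ioi (0:ℝ), t ^ ((1:ℝ) - 1) * (Real.exp (-t) * h (Real.exp (-t)))) ≤
        ∫ t in Set.Ioi (0:ℝ), t ^ (α - 1) * (Real.exp (-t) * h (Real.exp (-t))) ∧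
      (∫ t in Set.Ioi (0:ℝ), t ^ (α - 1) * (Real.exp (-t) * h (Real.exp (-t)))) ≤
        B ^ (α - 1) * ∫ t in Set.Ioi (0:ℝ), t ^ ((1:ℝ) - 1) * (Real.exp (-t) * h (Real.exp (-t))) := by
  set h : ℝ → ℝ := fun y => max 0 ((y - Real.exp (-A)) * (Real.exp (-B) - y)) with hdef
  have hc : Continuous h := by fun_prop
  have hn : ∀ y, 0 ≤ h y := fun y => le_max_left _ _
  have hab : Real.exp (-A) < Real.exp (-B) := Real.exp_lt_exp.2 (by linarith)
  have hsupp : ∀ t, h (Real.exp (-t)) ≠ 0 ↔ B < t ∧ t < A := by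
    intro t
    have e1 : Real.exp (-A) < Real.exp (-t) ↔ t < A := by rw [Real.exp_lt_exp, neg_lt_neg_iff]
    have e2 : Real.exp (-t) < Real.exp (-B) ↔ B < t := by rw [Real.exp_lt_exp, neg_lt_neg_iff]
    rw [← e1, ← e2]
    constructor
    · intro hne
      have : 0 < (Real.exp (-t) - Real.exp (-A)) * (Real.exp (-B) - Real.exp (-t)) := by
        by_contra hle
        exact hne (max_eq_left (not_lt.1 hle))
      rcases mul_pos_iff.1 this with h1 | h1
      · exact ⟨by linarith [h1.2], by linarith [h1.1]⟩
      · exfalso; linarith [h1.1, h1.2]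
    · rintro ⟨h1, h2⟩
      exact (lt_max_of_lt_right (mul_pos (by linarith) (by linarith))).ne'
  have i1 := integrable_h 1 one_pos h hc
  have iα := integrable_h α hα h hc
  refine ⟨h, hc, hn, fun t => (hsupp t).1, ?_, ?_, ?_⟩
  · rw [setIntegral_pos_iff_support_of_nonneg_ae _ i1]
    · have hsub : Set.Ioo B A ⊆ Function.support
          (fun t : ℝ => t ^ ((1:ℝ) - 1) * (Real.exp (-t) * h (Real.exp (-t)))) ∩ Set.Ioi 0 := by
        intro t ht
        refine ⟨?_, hB.trans ht.1⟩
        have : h (Real.exp (-t)) ≠ 0 := (hsupp t).2 ht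
        simp [this, Real.exp_ne_zero]
      refine lt_of_lt_of_le ?_ (measure_mono hsub)
      simp [hBA]
    · refine Eventually.of_forall fun t => ?_
      have := hn (Real.exp (-t))
      simp only [sub_self, Real.rpow_zero, one_mul, Pi.zero_apply]
      positivity
  · rw [← integral_const_mul]
    refine setIntegral_mono_on (i1.const_mul _) iα measurableSet_Ioi ?_
    intro t ht
    have ht' : (0:ℝ) < t := ht
    have := hn (Real.exp (-t))
    by_cases h0 : h (Real.exp (-t)) = 0
    · simp [h0]
    · have hh := (hsupp t).1 h0
      simp only [sub_self, Real.rpow_zero, one_mul]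
      refine mul_le_mul_of_nonneg_right ?_ (by positivity)
      exact Real.rpow_le_rpow_of_nonpos ht' hh.2.le (by linarith)
  · rw [← integral_const_mul]
    refine setIntegral_mono_on iα (i1.const_mul _) measurableSet_Ioi ?_
    intro t ht
    have ht' : (0:ℝ) < t := ht
    have := hn (Real.exp (-t))
    by_cases h0 : h (Real.exp (-t)) = 0
    · simp [h0]
    · have hh := (hsupp t).1 h0
      simp only [sub_self, Real.rpow_zero, one_mul]
      refine mul_le_mul_of_nonneg_right ?_ (by positivity)
      exact Real.rpow_le_rpow_of_nonpos hB hh.1.le (by linarith)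

lemma exp_lim (c : ℝ) :
    Tendsto (fun n : ℕ => (n : ℝ) * (1 - Real.exp (-(c / n)))) atTop (nhds c) := by
  have h1 : HasDerivAt (fun t : ℝ => 1 - Real.exp (-(c * t))) c 0 := by
    have : HasDerivAt (fun t : ℝ => -(c * t)) (-c) 0 := by
      simpa using ((hasDerivAt_id (0:ℝ)).const_mul c).fun_neg
    simpa using this.exp.const_sub 1
  rw [hasDerivAt_iff_tendsto_slope_zero] at h1
  have h2 : Tendsto (fun n : ℕ => ((n : ℝ))⁻¹) atTop (nhdsWithin 0 {0}ᶜ) := by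
    rw [tendsto_nhdsWithin_iff]
    refine ⟨tendsto_inv_atTop_nhds_zero_nat, ?_⟩
    filter_upwards [eventually_gt_atTop 0] with n hn
    simp; omega
  refine (h1.comp h2).congr fun n => ?_
  simp [div_eq_mul_inv]

lemma s_pow (n k : ℕ) : Real.exp (-(1 / (n:ℝ))) ^ k = Real.exp (-((k:ℝ) / n)) := by
  rw [← Real.exp_nat_mul]; congr 1; ring

lemma s_range : ∀ᶠ n : ℕ in atTop, 0 < Real.exp (-(1 / (n:ℝ))) ∧ Real.exp (-(1 / (n:ℝ))) < 1 := by
  filter_upwards [eventually_gt_atTop 0] with n hn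
  refine ⟨Real.exp_pos _, ?_⟩
  rw [Real.exp_lt_one_iff]
  have : (0:ℝ) < n := by exact_mod_cast hn
  have : 0 < 1 / (n:ℝ) := by positivity
  linarith

lemma riemann (h : ℝ → ℝ) (hh : Continuous h) :
    Tendsto (fun n : ℕ => 1 / (n:ℝ) * ∑' k : ℕ, Real.exp (-(1 / (n:ℝ))) ^ k *
        h (Real.exp (-(1 / (n:ℝ))) ^ k)) atTop
      (nhds (∫ t in Set.Ioi (0:ℝ), t ^ ((1:ℝ) - 1) * (Real.exp (-t) * h (Real.exp (-t))))) := by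
  have := karamata 1 1 one_pos (fun n => 1 / (n:ℝ)) (fun n => Real.exp (-(1 / (n:ℝ))))
    (fun _ _ => 1) (fun _ => 1) (fun n => by positivity) s_range (fun _ _ => zero_le_one)
    (fun _ _ => le_rfl) ?_ h hh
  · simpa using this
  · intro m
    have h1 := (exp_lim ((m:ℝ) + 1)).inv₀ (by positivity)
    have e : (1:ℝ) * (1 / ((m:ℝ) + 1)) ^ (1:ℝ) = ((m:ℝ) + 1)⁻¹ := by simp
    rw [e]
    refine h1.congr' ?_
    filter_upwards [s_range] with n hn
    have hlt : Real.exp (-(1 / (n:ℝ))) ^ (m + 1) < 1 := pow_lt_one₀ hn.1.le hn.2 (by omega)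
    simp only [mul_one]
    rw [tsum_geometric_of_lt_one (pow_nonneg hn.1.le _) hlt, s_pow]
    push_cast
    rw [mul_inv, one_div]

lemma tauber (α C : ℝ) (hα : 0 < α) (hα1 : α ≤ 1) (hC : 0 ≤ C) (r : ℕ → ℝ) (v : ℕ → ℕ → ℝ)
    (hr : ∀ n, 0 ≤ r n) (hv : ∀ n k, 0 ≤ v n k) (hanti : ∀ n, Antitone (v n))
    (hlim : ∀ m : ℕ, Tendsto
      (fun n : ℕ => r n * ∑' k, (Real.exp (-(1 / (n:ℝ))) ^ (m + 1)) ^ k * v n k) atTop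
      (nhds (C * (1 / ((m : ℝ) + 1)) ^ α))) :
    Tendsto (fun n : ℕ => (n : ℝ) * r n * v n n) atTop (nhds (C / Real.Gamma α)) := by
  have hG := Real.Gamma_pos_of_pos hα
  have hM : ∀ n k, v n k ≤ v n 0 := fun n k => hanti n (Nat.zero_le k)
  have hD : 0 ≤ C / Real.Gamma α := by positivity
  set D := C / Real.Gamma α with hDdef
  rw [tendsto_order]
  have cont1 : Tendsto (fun A : ℝ => D * A ^ (α - 1)) (nhds 1) (nhds D) := by
    have : ContinuousAt (fun A : ℝ => D * A ^ (α - 1)) 1 :=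
      continuousAt_const.mul (Real.continuousAt_rpow_const 1 (α - 1) (Or.inl one_ne_zero))
    have h2 := this.tendsto
    simpa using h2
  constructor
  · intro c hc
    obtain ⟨A, hA1, hA⟩ : ∃ A : ℝ, 1 < A ∧ c < D * A ^ (α - 1) := by
      have e := ((tendsto_order.1 cont1).1 c hc).filter_mono
        (nhdsWithin_le_nhds (s := Set.Ioi 1))
      obtain ⟨A, h1, h2⟩ := (e.and self_mem_nhdsWithin).exists
      exact ⟨A, h2, h1⟩
    obtain ⟨h, hcont, hnn, hsupp, hJ, hI, -⟩ := bump α A 1 hα hα1 one_pos hA1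
    have l1 := karamata α C hα r (fun n => Real.exp (-(1 / (n:ℝ)))) v (fun n => v n 0) hr s_range
      hv hM hlim h hcont
    have l2 := riemann h hcont
    set J := ∫ t in Set.Ioi (0:ℝ), t ^ ((1:ℝ) - 1) * (Real.exp (-t) * h (Real.exp (-t)))
    set I := ∫ t in Set.Ioi (0:ℝ), t ^ (α - 1) * (Real.exp (-t) * h (Real.exp (-t)))
    have l3 := l1.div l2 hJ.ne'
    have hcl : c < D * I / J := by
      rw [lt_div_iff₀ hJ]
      calc c * J < D * A ^ (α - 1) * J := mul_lt_mul_of_pos_right hA hJ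
        _ = D * (A ^ (α - 1) * J) := by ring
        _ ≤ _ := mul_le_mul_of_nonneg_left hI hD
    filter_upwards [(tendsto_order.1 l3).1 c hcl, (tendsto_order.1 l2).1 0 hJ, s_range,
      eventually_gt_atTop 0] with n h1 h2 hsn hn
    refine h1.trans_le ?_
    have hn' : (0:ℝ) < n := by exact_mod_cast hn
    obtain ⟨B, hB⟩ := bdd_of_cont h hcont
    simp only [Pi.div_apply]
    rw [div_le_iff₀ h2]
    have : (n:ℝ) * r n * v n n * (1 / (n:ℝ) * ∑' k : ℕ, Real.exp (-(1 / (n:ℝ))) ^ k *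
        h (Real.exp (-(1 / (n:ℝ))) ^ k)) = r n * ∑' k : ℕ, Real.exp (-(1 / (n:ℝ))) ^ k *
        h (Real.exp (-(1 / (n:ℝ))) ^ k) * v n n := by
      rw [tsum_mul_right]; field_simp
    rw [this]
    refine mul_le_mul_of_nonneg_left ?_ (hr n)
    refine Summable.tsum_le_tsum ?_ (summ_h _ _ _ _ hsn.1 hsn.2 (hv n) (hM n) h hB)
      (summ_h (fun _ => v n n) _ _ _ hsn.1 hsn.2 (fun _ => hv n n) (fun _ => le_rfl) h hB)
    intro k
    by_cases h0 : h (Real.exp (-(1 / (n:ℝ))) ^ k) = 0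
    · rw [h0]; simp
    · have hk := h0
      rw [s_pow] at hk
      have hk1 := (hsupp _ hk).1
      rw [lt_div_iff₀ hn', one_mul] at hk1
      have hkn : n ≤ k := by exact_mod_cast hk1.le
      exact mul_le_mul_of_nonneg_left (hanti n hkn)
        (mul_nonneg (pow_nonneg hsn.1.le _) (hnn _))
  · intro c hc
    obtain ⟨B, hB0, hB1, hA⟩ : ∃ B : ℝ, 0 < B ∧ B < 1 ∧ D * B ^ (α - 1) < c := by
      have e := ((tendsto_order.1 cont1).2 c hc).filter_mono
        (nhdsWithin_le_nhds (s := Set.Iio 1))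
      have e2 : ∀ᶠ B : ℝ in nhdsWithin 1 (Set.Iio 1), 0 < B :=
        (lt_mem_nhds one_pos).filter_mono nhdsWithin_le_nhds
      obtain ⟨A, ⟨h1, h2⟩, h3⟩ := ((e.and self_mem_nhdsWithin).and e2).exists
      exact ⟨A, h3, h2, h1⟩
    obtain ⟨h, hcont, hnn, hsupp, hJ, -, hI⟩ := bump α 1 B hα hα1 hB0 hB1
    have l1 := karamata α C hα r (fun n => Real.exp (-(1 / (n:ℝ)))) v (fun n => v n 0) hr s_range
      hv hM hlim h hcont
    have l2 := riemann h hcont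
    set J := ∫ t in Set.Ioi (0:ℝ), t ^ ((1:ℝ) - 1) * (Real.exp (-t) * h (Real.exp (-t)))
    set I := ∫ t in Set.Ioi (0:ℝ), t ^ (α - 1) * (Real.exp (-t) * h (Real.exp (-t)))
    have l3 := l1.div l2 hJ.ne'
    have hcl : D * I / J < c := by
      rw [div_lt_iff₀ hJ]
      calc D * I ≤ D * (B ^ (α - 1) * J) := mul_le_mul_of_nonneg_left hI hD
        _ = D * B ^ (α - 1) * J := by ring
        _ < _ := mul_lt_mul_of_pos_right hA hJ
    filter_upwards [(tendsto_order.1 l3).2 c hcl, (tendsto_order.1 l2).1 0 hJ, s_range,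
      eventually_gt_atTop 0] with n h1 h2 hsn hn
    refine lt_of_le_of_lt ?_ h1
    have hn' : (0:ℝ) < n := by exact_mod_cast hn
    obtain ⟨B, hB⟩ := bdd_of_cont h hcont
    simp only [Pi.div_apply]
    rw [le_div_iff₀ h2]
    have : (n:ℝ) * r n * v n n * (1 / (n:ℝ) * ∑' k : ℕ, Real.exp (-(1 / (n:ℝ))) ^ k *
        h (Real.exp (-(1 / (n:ℝ))) ^ k)) = r n * ∑' k : ℕ, Real.exp (-(1 / (n:ℝ))) ^ k *
        h (Real.exp (-(1 / (n:ℝ))) ^ k) * v n n := by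
      rw [tsum_mul_right]; field_simp
    rw [this]
    refine mul_le_mul_of_nonneg_left ?_ (hr n)
    refine Summable.tsum_le_tsum ?_ 
      (summ_h (fun _ => v n n) _ _ _ hsn.1 hsn.2 (fun _ => hv n n) (fun _ => le_rfl) h hB)
      (summ_h _ _ _ _ hsn.1 hsn.2 (hv n) (hM n) h hB)
    intro k
    by_cases h0 : h (Real.exp (-(1 / (n:ℝ))) ^ k) = 0
    · rw [h0]; simp
    · have hk := h0
      rw [s_pow] at hk
      have hk1 := (hsupp _ hk).2
      rw [div_lt_iff₀ hn', one_mul] at hk1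
      have hkn : k ≤ n := by exact_mod_cast hk1.le
      exact mul_le_mul_of_nonneg_left (hanti n hkn)
        (mul_nonneg (pow_nonneg hsn.1.le _) (hnn _))

lemma regvar_real (W : ℕ → ℝ) (β t : ℝ) (hβ : 0 ≤ β) (ht : 0 < t) (hmono : Monotone W)
    (hpos : ∀ n, 0 < W n)
    (hWrat : ∀ p : ℕ, 0 < p → Tendsto (fun n : ℕ => W (p * n) / W n) atTop (nhds ((p:ℝ) ^ β))) :
    Tendsto (fun n : ℕ => W ⌊t * n⌋₊ / W n) atTop (nhds (t ^ β)) := by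
  have hratio : ∀ p q : ℕ, 0 < p → 0 < q →
      Tendsto (fun n : ℕ => W (p * n) / W (q * n)) atTop (nhds (((p:ℝ) / q) ^ β)) := by
    intro p q hp hq
    have hq' : (0:ℝ) < q := by exact_mod_cast hq
    have := (hWrat p hp).div (hWrat q hq) (Real.rpow_pos_of_pos hq' β).ne'
    rw [← Real.div_rpow (by positivity) hq'.le] at this
    refine this.congr fun n => ?_
    have := hpos n
    have := hpos (q * n)
    simp only [Pi.div_apply]
    field_simp
  have hdiv : ∀ q : ℕ, 0 < q → Tendsto (fun n : ℕ => n / q) atTop atTop := by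
    intro q hq
    exact Nat.tendsto_div_const_atTop hq.ne'
  have hq1 : Tendsto (fun q : ℕ => (q:ℝ) / ((q:ℝ) + 1)) atTop (nhds 1) := by
    have := tendsto_natCast_div_add_atTop (1:ℝ)
    exact this
  have hcont : ContinuousAt (fun x : ℝ => x ^ β) t :=
    Real.continuousAt_rpow_const t β (Or.inl ht.ne')
  have lo : Tendsto (fun q : ℕ => (((⌊t * q⌋₊ : ℕ) : ℝ) / ((q + 1 : ℕ) : ℝ)) ^ β) atTop
      (nhds (t ^ β)) := by
    refine hcont.tendsto.comp ?_
    have h1 := ((tendsto_nat_floor_mul_div_atTop ht.le).comp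
      (tendsto_natCast_atTop_atTop (R := ℝ))).mul hq1
    rw [mul_one] at h1
    refine h1.congr' ?_
    filter_upwards [eventually_gt_atTop 0] with q hq
    have : (0:ℝ) < q := by exact_mod_cast hq
    simp only [Function.comp]
    push_cast
    field_simp
  have hi : Tendsto (fun q : ℕ => (((⌈t * ((q + 1 : ℕ) : ℝ)⌉₊ : ℕ) : ℝ) / (q : ℝ)) ^ β) atTop
      (nhds (t ^ β)) := by
    refine hcont.tendsto.comp ?_
    have h0 : Tendsto (fun q : ℕ => ((q + 1 : ℕ) : ℝ)) atTop atTop :=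
      (tendsto_natCast_atTop_atTop (R := ℝ)).comp (tendsto_add_atTop_nat 1)
    have h1 := ((tendsto_nat_ceil_mul_div_atTop ht.le).comp h0).div hq1 one_ne_zero
    rw [div_one] at h1
    refine h1.congr' ?_
    filter_upwards [eventually_gt_atTop 0] with q hq
    have : (0:ℝ) < q := by exact_mod_cast hq
    simp only [Function.comp, Pi.div_apply]
    push_cast
    field_simp
  have hfl : ∀ᶠ q : ℕ in atTop, 0 < ⌊t * (q:ℝ)⌋₊ := by
    have : Tendsto (fun q : ℕ => t * (q:ℝ)) atTop atTop :=
      (tendsto_natCast_atTop_atTop (R := ℝ)).const_mul_atTop ht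
    filter_upwards [this.eventually_ge_atTop 1] with q hq
    exact Nat.floor_pos.2 hq
  rw [tendsto_order]
  constructor
  · intro c hc
    obtain ⟨q, ⟨hqc, hqf⟩, hq0⟩ :=
      (((tendsto_order.1 lo).1 c hc).and hfl |>.and (eventually_gt_atTop 0)).exists
    have l1 := (hratio _ (q + 1) hqf (by omega)).comp (hdiv q hq0)
    filter_upwards [(tendsto_order.1 l1).1 c hqc, (hdiv q hq0).eventually_ge_atTop q] with n hn hl
    refine hn.trans_le ?_
    simp only [Function.comp]
    set l := n / q with hldef
    have hl1 : q * l ≤ n := Nat.mul_div_le n q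
    have hl2 : n < q * (l + 1) := Nat.lt_mul_div_succ n hq0
    refine div_le_div₀ (hpos _).le (hmono ?_) (hpos n) (hmono (by nlinarith))
    apply Nat.le_floor
    push_cast
    have h1 : ((⌊t * (q:ℝ)⌋₊ : ℕ) : ℝ) ≤ t * q := Nat.floor_le (by positivity)
    have h2 : (q:ℝ) * l ≤ n := by exact_mod_cast hl1
    calc ((⌊t * (q:ℝ)⌋₊ : ℕ) : ℝ) * (l:ℝ) ≤ t * q * l :=
          mul_le_mul_of_nonneg_right h1 (by positivity)
      _ = t * (q * l) := by ring
      _ ≤ _ := mul_le_mul_of_nonneg_left h2 ht.le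
  · intro c hc
    obtain ⟨q, hqc, hq0⟩ :=
      (((tendsto_order.1 hi).2 c hc).and (eventually_gt_atTop 0)).exists
    have hcp : 0 < ⌈t * ((q + 1 : ℕ) : ℝ)⌉₊ := Nat.ceil_pos.2 (by positivity)
    have l1 := (hratio _ q hcp hq0).comp (hdiv q hq0)
    filter_upwards [(tendsto_order.1 l1).2 c hqc, (hdiv q hq0).eventually_ge_atTop q] with n hn hl
    refine lt_of_le_of_lt ?_ hn
    simp only [Function.comp]
    set l := n / q with hldef
    have hl1 : q * l ≤ n := Nat.mul_div_le n q
    have hl2 : n < q * (l + 1) := Nat.lt_mul_div_succ n hq0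
    refine div_le_div₀ (hpos _).le (hmono ?_) (hpos _) (hmono hl1)
    have hl3 : n ≤ (q + 1) * l := by nlinarith
    apply Nat.floor_le_of_le
    push_cast
    have h1 : t * ((q + 1 : ℕ) : ℝ) ≤ (⌈t * ((q + 1 : ℕ) : ℝ)⌉₊ : ℕ) := Nat.le_ceil _
    push_cast at h1
    have h2 : (n:ℝ) ≤ (q + 1) * l := by exact_mod_cast hl3
    calc t * n ≤ t * ((q + 1) * l) := mul_le_mul_of_nonneg_left h2 ht.le
      _ = t * (q + 1) * l := by ring
      _ ≤ _ := mul_le_mul_of_nonneg_right h1 (by positivity)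

lemma step_integral (g : ℕ → ℝ) (n : ℕ) (hn : 0 < n)
    (hi : IntegrableOn (fun t : ℝ => g ⌊t * n⌋₊) (Set.Ioi 0)) :
    1 / (n:ℝ) * ∑' k, g k = ∫ t in Set.Ioi (0:ℝ), g ⌊t * n⌋₊ := by
  have hn' : (0:ℝ) < n := by exact_mod_cast hn
  set I : ℕ → Set ℝ := fun k => Set.Ico ((k:ℝ) / n) (((k:ℝ) + 1) / n) with hI
  have hmem : ∀ k t, t ∈ I k → ⌊t * n⌋₊ = k := by
    intro k t ht
    have h1 := ht.1
    have h2 := ht.2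
    rw [div_le_iff₀ hn'] at h1
    rw [lt_div_iff₀ hn'] at h2
    exact (Nat.floor_eq_iff (le_trans (by positivity) h1)).2 ⟨h1, h2⟩
  have hU : ⋃ k, I k = Set.Ici 0 := by
    ext t
    simp only [Set.mem_iUnion, Set.mem_Ici]
    constructor
    · rintro ⟨k, hk⟩
      exact le_trans (by positivity) hk.1
    · intro ht
      refine ⟨⌊t * n⌋₊, ?_, ?_⟩
      · rw [div_le_iff₀ hn']; exact Nat.floor_le (by positivity)
      · rw [lt_div_iff₀ hn']; exact Nat.lt_floor_add_one _
  have hd : Pairwise (Function.onFun Disjoint I) := by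
    intro i j hij
    refine Set.disjoint_left.2 fun t h1 h2 => hij ?_
    rw [← hmem i t h1, hmem j t h2]
  have hs := hasSum_integral_iUnion (μ := volume) (f := fun t : ℝ => g ⌊t * n⌋₊)
    (fun k => (measurableSet_Ico : MeasurableSet (I k))) hd
    (by rw [hU, integrableOn_Ici_iff_integrableOn_Ioi]; exact hi)
  rw [hU, integral_Ici_eq_integral_Ioi] at hs
  rw [← hs.tsum_eq, ← tsum_mul_left]
  refine tsum_congr fun k => ?_
  rw [setIntegral_congr_fun measurableSet_Ico (fun t ht => by rw [hmem k t ht] : Set.EqOn _ (fun _ => g k) (I k))]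
  rw [setIntegral_const]
  have : volume.real (I k) = 1 / n := by
    rw [hI, Real.volume_real_Ico_of_le (by gcongr; linarith)]
    ring
  rw [this, smul_eq_mul]

lemma abelian (W : ℕ → ℝ) (β c : ℝ) (hβ : 0 ≤ β) (hc : 1 ≤ c) (hmono : Monotone W)
    (hpos : ∀ n, 0 < W n) (hsub : ∀ a b, W (a + b) ≤ W a + W b)
    (hWrat : ∀ p : ℕ, 0 < p → Tendsto (fun n : ℕ => W (p * n) / W n) atTop (nhds ((p:ℝ) ^ β))) :
    Tendsto (fun n : ℕ => 1 / (n:ℝ) * ∑' k : ℕ, Real.exp (-(c / n)) ^ k * (W k / W n)) atTop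
      (nhds ((1 / c) ^ (β + 1) * Real.Gamma (β + 1))) := by
  have hk : ∀ k n : ℕ, W ((k + 1) * n) ≤ (k + 1) * W n := by
    intro k n
    induction k with
    | zero => simp
    | succ k ih =>
      have := hsub ((k + 1) * n) n
      rw [show (k + 1 + 1) * n = (k + 1) * n + n by ring]
      push_cast
      linarith
  have hbd : ∀ n : ℕ, 0 < n → ∀ t : ℝ, 0 < t →
      ‖Real.exp (-(c / n)) ^ ⌊t * n⌋₊ * (W ⌊t * n⌋₊ / W n)‖ ≤
        2 * Real.exp c * Real.exp (-(1 / 2) * t) := by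
    intro n hn t ht
    have hn' : (1:ℝ) ≤ n := by exact_mod_cast hn
    have h1 : W ⌊t * n⌋₊ / W n ≤ t + 1 := by
      rw [div_le_iff₀ (hpos n)]
      have h2 : ⌊t * n⌋₊ ≤ (⌊t⌋₊ + 1) * n := by
        apply Nat.floor_le_of_le
        push_cast
        exact mul_le_mul_of_nonneg_right (Nat.lt_floor_add_one t).le (by positivity)
      have h3 : ((⌊t⌋₊ : ℕ) : ℝ) ≤ t := Nat.floor_le ht.le
      calc W ⌊t * n⌋₊ ≤ W ((⌊t⌋₊ + 1) * n) := hmono h2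
        _ ≤ ((⌊t⌋₊ : ℕ) + 1) * W n := hk _ _
        _ ≤ _ := mul_le_mul_of_nonneg_right (by linarith) (hpos n).le
    have h4 : Real.exp (-(c / n)) ^ ⌊t * n⌋₊ ≤ Real.exp c * Real.exp (-t) := by
      rw [← Real.exp_nat_mul, ← Real.exp_add, Real.exp_le_exp]
      have h5 : t * n < (⌊t * n⌋₊ : ℕ) + 1 := Nat.lt_floor_add_one _
      have h6 : t - 1 ≤ ((⌊t * n⌋₊ : ℕ) : ℝ) / n := by
        rw [le_div_iff₀ (by linarith)]; nlinarith
      have h7 : ((⌊t * n⌋₊ : ℕ) : ℝ) * -(c / n) = -(c * (((⌊t * n⌋₊ : ℕ) : ℝ) / n)) := by ring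
      rw [h7]
      nlinarith
    have h8 : t + 1 ≤ 2 * Real.exp ((1 / 2) * t) := by
      have := Real.add_one_le_exp ((1 / 2) * t); linarith
    have h9 : 0 ≤ W ⌊t * n⌋₊ / W n := div_nonneg (hpos _).le (hpos _).le
    rw [Real.norm_eq_abs, abs_of_nonneg (mul_nonneg (by positivity) h9)]
    calc _ ≤ (Real.exp c * Real.exp (-t)) * (2 * Real.exp ((1 / 2) * t)) :=
          mul_le_mul h4 (h1.trans h8) h9 (by positivity)
      _ = 2 * Real.exp c * (Real.exp (-t) * Real.exp ((1 / 2) * t)) := by ring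
      _ = _ := by rw [← Real.exp_add]; congr 2; ring
  have hmeas : ∀ n : ℕ, Measurable
      (fun t : ℝ => Real.exp (-(c / n)) ^ ⌊t * n⌋₊ * (W ⌊t * n⌋₊ / W n)) := by
    intro n
    exact (measurable_from_nat (f := fun k : ℕ => Real.exp (-(c / n)) ^ k * (W k / W n))).comp
      (Nat.measurable_floor.comp (measurable_id.mul_const _))
  have hbi : IntegrableOn (fun t : ℝ => 2 * Real.exp c * Real.exp (-(1 / 2) * t)) (Set.Ioi 0) :=
    (exp_neg_integrableOn_Ioi 0 (by norm_num)).const_mul _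
  have hlim : Tendsto (fun n : ℕ => ∫ t in Set.Ioi (0:ℝ),
      Real.exp (-(c / n)) ^ ⌊t * n⌋₊ * (W ⌊t * n⌋₊ / W n)) atTop
      (nhds (∫ t in Set.Ioi (0:ℝ), t ^ (β + 1 - 1) * Real.exp (-(c * t)))) := by
    refine tendsto_integral_filter_of_dominated_convergence _
      (Eventually.of_forall fun n => (hmeas n).aestronglyMeasurable) ?_ hbi ?_
    · filter_upwards [eventually_gt_atTop 0] with n hn
      filter_upwards [ae_restrict_mem measurableSet_Ioi] with t ht
      exact hbd n hn t ht
    · filter_upwards [ae_restrict_mem measurableSet_Ioi] with t ht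
      have ht' : (0:ℝ) < t := ht
      have l1 := regvar_real W β t hβ ht' hmono hpos hWrat
      have l2 : Tendsto (fun n : ℕ => Real.exp (-(c / n)) ^ ⌊t * n⌋₊) atTop
          (nhds (Real.exp (-(c * t)))) := by
        have h1 := (tendsto_nat_floor_mul_div_atTop ht'.le).comp
          (tendsto_natCast_atTop_atTop (R := ℝ))
        have h2 := (Real.continuous_exp.tendsto _).comp (h1.const_mul c).neg
        refine h2.congr fun n => ?_
        simp only [Function.comp]
        rw [← Real.exp_nat_mul]
        congr 1; ring
      rw [add_sub_cancel_right, mul_comm]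
      exact l2.mul l1
  rw [Real.integral_rpow_mul_exp_neg_mul_Ioi (by linarith) (by linarith)] at hlim
  refine hlim.congr' ?_
  filter_upwards [eventually_gt_atTop 0] with n hn
  rw [step_integral (fun k => Real.exp (-(c / n)) ^ k * (W k / W n)) n hn]
  refine hbi.mono' (hmeas n).aestronglyMeasurable ?_
  filter_upwards [ae_restrict_mem measurableSet_Ioi] with t ht
  exact hbd n hn t ht

lemma comparable_lim (X Y : ℕ → ℝ) (L : ℝ) (hY : Tendsto Y atTop (nhds L))
    (h : ∀ ε > 0, ∀ᶠ n in atTop, X n ≤ (1 + ε) * Y n ∧ Y n ≤ (1 + ε) * X n) :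
    Tendsto X atTop (nhds L) := by
  have hin : ∀ᶠ ε : ℝ in nhdsWithin 0 (Set.Ioi 0), 0 < ε := self_mem_nhdsWithin
  rw [tendsto_order]
  constructor
  · intro c hc
    have ct : ContinuousAt (fun ε : ℝ => L / (1 + ε)) 0 := by
      refine ContinuousAt.div (by fun_prop) (by fun_prop) (by norm_num)
    have ct' : Tendsto (fun ε : ℝ => L / (1 + ε)) (nhds 0) (nhds L) := by
      have := ct.tendsto; simpa using this
    obtain ⟨ε, h1, hε⟩ :=
      ((((tendsto_order.1 ct').1 c hc).filter_mono nhdsWithin_le_nhds).and hin).exists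
    have h2 := hY.div_const (1 + ε)
    filter_upwards [(tendsto_order.1 h2).1 c h1, h ε hε] with n h3 h4
    refine h3.trans_le ?_
    rw [div_le_iff₀ (by linarith)]
    linarith [h4.2]
  · intro c hc
    have ct : ContinuousAt (fun ε : ℝ => (1 + ε) * L) 0 := by fun_prop
    have ct' : Tendsto (fun ε : ℝ => (1 + ε) * L) (nhds 0) (nhds L) := by
      have := ct.tendsto; simpa using this
    obtain ⟨ε, h1, hε⟩ :=
      ((((tendsto_order.1 ct').2 c hc).filter_mono nhdsWithin_le_nhds).and hin).exists
    have h2 := hY.const_mul (1 + ε)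
    filter_upwards [(tendsto_order.1 h2).2 c h1, h ε hε] with n h3 h4
    exact h4.1.trans_lt h3

lemma abel_one (ρ : ℕ → ℝ) (h0 : ∀ n, 0 ≤ ρ n) (h1 : ∀ n, ρ n ≤ 1)
    (hρ : Tendsto ρ atTop (nhds 1)) (s : ℕ → ℝ) (hs : ∀ᶠ n in atTop, 0 < s n ∧ s n < 1)
    (hs1 : Tendsto s atTop (nhds 1)) :
    Tendsto (fun n => (1 - s n) * ∑' k, s n ^ k * ρ k) atTop (nhds 1) := by
  rw [tendsto_order]
  constructor
  · intro c hc
    obtain ⟨c', hcc', hc'⟩ := exists_between (max_lt hc one_pos)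
    have hc'0 : 0 < c' := (le_max_right _ _).trans_lt hcc'
    have hcc : c < c' := (le_max_left _ _).trans_lt hcc'
    obtain ⟨n0, hn0⟩ := eventually_atTop.1 ((tendsto_order.1 hρ).1 c' hc')
    have l : Tendsto (fun n => s n ^ n0 * c') atTop (nhds c') := by
      simpa using (hs1.pow n0).mul_const c'
    filter_upwards [hs, (tendsto_order.1 l).1 c hcc] with n hn h2
    refine h2.trans_le ?_
    have hsum := summ_bdd ρ 1 (s n) hn.1.le hn.2 h0 h1
    have hge : ∑' k, s n ^ k * (s n ^ n0 * c') ≤ ∑' k, s n ^ k * ρ k := by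
      rw [← hsum.sum_add_tsum_nat_add n0]
      have : 0 ≤ ∑ i ∈ Finset.range n0, s n ^ i * ρ i :=
        Finset.sum_nonneg fun i _ => mul_nonneg (pow_nonneg hn.1.le _) (h0 i)
      have h3 : ∑' k, s n ^ k * (s n ^ n0 * c') ≤ ∑' k, s n ^ (k + n0) * ρ (k + n0) := by
        refine Summable.tsum_le_tsum ?_ ((summable_geometric_of_lt_one hn.1.le hn.2).mul_right _)
          ((summable_nat_add_iff n0).2 hsum)
        intro k
        rw [← mul_assoc, ← pow_add]
        exact mul_le_mul_of_nonneg_left (hn0 _ (by omega)).le (pow_nonneg hn.1.le _)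
      linarith
    rw [tsum_mul_right, tsum_geometric_of_lt_one hn.1.le hn.2] at hge
    have h4 := mul_le_mul_of_nonneg_left hge (by linarith [hn.2] : 0 ≤ 1 - s n)
    rwa [← mul_assoc, mul_inv_cancel₀ (by linarith [hn.2]), one_mul] at h4
  · intro c hc
    filter_upwards [hs] with n hn
    refine lt_of_le_of_lt ?_ hc
    have hle : ∑' k, s n ^ k * ρ k ≤ ∑' k, s n ^ k := by
      refine Summable.tsum_le_tsum ?_ (summ_bdd ρ 1 (s n) hn.1.le hn.2 h0 h1)
        (summable_geometric_of_lt_one hn.1.le hn.2)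
      intro k
      exact mul_le_of_le_one_right (pow_nonneg hn.1.le _) (h1 k)
    rw [tsum_geometric_of_lt_one hn.1.le hn.2] at hle
    have h4 := mul_le_mul_of_nonneg_left hle (by linarith [hn.2] : 0 ≤ 1 - s n)
    rwa [mul_inv_cancel₀ (by linarith [hn.2])] at h4

lemma what_eq (w W : ℕ → ℝ) (hw : ∀ j, 0 ≤ w j) (hanti : Antitone w)
    (hW : ∀ n, W n = ∑ j ∈ Finset.range (n + 1), w j) (s : ℝ) (hs0 : 0 < s) (hs1 : s < 1) :
    ∑' j, s ^ j * w j = (1 - s) * ∑' n, s ^ n * W n := by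
  have hWle : ∀ n, W n ≤ (n + 1) * w 0 := by
    intro n
    rw [hW]
    have := Finset.sum_le_card_nsmul (Finset.range (n + 1)) w (w 0)
      (fun j _ => hanti (Nat.zero_le j))
    simpa using this
  have hWn : ∀ n, 0 ≤ W n := fun n => by
    rw [hW]; exact Finset.sum_nonneg fun j _ => hw j
  have hs : ‖s‖ < 1 := by rw [Real.norm_eq_abs, abs_of_pos hs0]; exact hs1
  have hsW : Summable fun n => s ^ n * W n := by
    have h1 : Summable fun n : ℕ => ((n:ℝ) * s ^ n + s ^ n) * w 0 := by
      refine Summable.mul_right _ (Summable.add ?_ (summable_geometric_of_lt_one hs0.le hs1))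
      simpa using summable_pow_mul_geometric_of_norm_lt_one 1 hs
    refine Summable.of_nonneg_of_le (fun n => mul_nonneg (by positivity) (hWn n)) (fun n => ?_) h1
    have := mul_le_mul_of_nonneg_left (hWle n) (by positivity : 0 ≤ s ^ n)
    linarith
  have hsw : Summable fun n => s ^ n * w n :=
    summ_bdd w (w 0) s hs0.le hs1 hw (fun j => hanti (Nat.zero_le j))
  have e1 := hsW.tsum_eq_zero_add
  have e2 := hsw.tsum_eq_zero_add
  have hW0 : W 0 = w 0 := by simp [hW]
  have e3 : ∑' n, s ^ (n + 1) * W (n + 1) - s * ∑' n, s ^ n * W n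
      = ∑' n, s ^ (n + 1) * w (n + 1) := by
    rw [← tsum_mul_left, ← ((summable_nat_add_iff 1).2 hsW).tsum_sub (hsW.mul_left s)]
    refine tsum_congr fun n => ?_
    rw [hW (n + 1), Finset.sum_range_succ, ← hW n]
    ring
  simp only [pow_zero, one_mul] at e1 e2
  linarith

lemma core {ι : Type*} (α : ℝ) (hα : 0 < α) (hα1 : α ≤ 1)
    (w W ρ : ℕ → ℝ) (g : ℕ → ℕ → ℝ) (v : ι → ℕ → ℝ) (i0 : ι)
    (hw : ∀ j, 0 ≤ w j) (hw0 : 0 < w 0) (hanti : Antitone w)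
    (hW : ∀ n, W n = ∑ j ∈ Finset.range (n + 1), w j)
    (hWrat : ∀ p : ℕ, 0 < p →
      Tendsto (fun n : ℕ => W (p * n) / W n) atTop (nhds ((p:ℝ) ^ (1 - α))))
    (hρ0 : ∀ n, 0 ≤ ρ n) (hρ1 : ∀ n, ρ n ≤ 1) (hρ : Tendsto ρ atTop (nhds 1))
    (hg0 : ∀ j k, 0 ≤ g j k) (hg1 : ∀ j k, g j k ≤ 1) (hgw : ∀ j k, w j = 0 → g j k = 0)
    (hρg : ∀ n, ρ n = ∑ x ∈ Finset.HasAntidiagonal.antidiagonal n, g x.1 x.2)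
    (hv : ∀ i k, 0 ≤ v i k) (hva : ∀ i, Antitone (v i)) (hv0 : 0 < v i0 0)
    (hvc : ∀ ε > 0, ∃ n0 : ℕ, ∀ n ≥ n0, ∀ i,
      ∑ k ∈ Finset.range n, v i k ≤ (1 + ε) * ∑ k ∈ Finset.range n, v i0 k ∧
      ∑ k ∈ Finset.range n, v i0 k ≤ (1 + ε) * ∑ k ∈ Finset.range n, v i k)
    (hgc : ∀ ε > 0, ∃ n0 : ℕ, ∀ n ≥ n0, ∀ j,
      ∑ k ∈ Finset.range n, g j k ≤ w j * ((1 + ε) * ∑ k ∈ Finset.range n, v i0 k) ∧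
      w j * ∑ k ∈ Finset.range n, v i0 k ≤ (1 + ε) * ∑ k ∈ Finset.range n, g j k)
    (x : ℕ → ι) :
    Tendsto (fun n => W n * v (x n) n) atTop
      (nhds (1 / (Real.Gamma α * Real.Gamma (2 - α)))) := by
  have hvM : ∀ i k, v i k ≤ v i 0 := fun i k => hva i (Nat.zero_le k)
  have hwM : ∀ j, w j ≤ w 0 := fun j => hanti (Nat.zero_le j)
  have hWpos : ∀ n, 0 < W n := by
    intro n
    rw [hW]
    refine lt_of_lt_of_le hw0 ?_
    exact Finset.single_le_sum (f := w) (fun j _ => hw j) (by simp)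
  have hWmono : Monotone W := by
    intro a b hab
    rw [hW, hW]
    exact Finset.sum_le_sum_of_subset_of_nonneg (Finset.range_mono (by omega)) (fun j _ _ => hw j)
  have hsub : ∀ a b, W (a + b) ≤ W a + W b := by
    intro a b
    rw [hW, hW, hW, show a + b + 1 = (a + 1) + b by ring, Finset.sum_range_add]
    have h1 : ∑ j ∈ Finset.range b, w (a + 1 + j) ≤ ∑ j ∈ Finset.range b, w j :=
      Finset.sum_le_sum fun j _ => hanti (by omega)
    have h2 : ∑ j ∈ Finset.range b, w j ≤ ∑ j ∈ Finset.range (b + 1), w j :=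
      Finset.sum_le_sum_of_subset_of_nonneg (Finset.range_mono (by omega)) (fun j _ _ => hw j)
    linarith
  -- renewal equation, generating functions
  have hR : ∀ s : ℝ, 0 < s → s < 1 →
      HasSum (fun j => s ^ j * ∑' k, s ^ k * g j k) (∑' n, s ^ n * ρ n) := by
    intro s hs0 hs1
    have hgeo := summable_geometric_of_lt_one hs0.le hs1
    have hF : Summable (fun p : ℕ × ℕ => s ^ p.1 * (s ^ p.2 * g p.1 p.2)) := by
      refine Summable.of_nonneg_of_le
        (fun p => mul_nonneg (by positivity) (mul_nonneg (by positivity) (hg0 _ _)))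
        (fun p => ?_) (hgeo.mul_of_nonneg hgeo (fun _ => by positivity) (fun _ => by positivity))
      refine mul_le_mul_of_nonneg_left ?_ (by positivity)
      exact mul_le_of_le_one_right (by positivity) (hg1 _ _)
    have e1 : ∑' n, s ^ n * ρ n = ∑' p : ℕ × ℕ, s ^ p.1 * (s ^ p.2 * g p.1 p.2) := by
      rw [← Finset.HasAntidiagonal.sigmaAntidiagonalEquivProd.tsum_eq
        (fun p : ℕ × ℕ => s ^ p.1 * (s ^ p.2 * g p.1 p.2))]
      have e2 := Summable.tsum_sigma' (fun n => (hasSum_fintype _).summable)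
        (Finset.HasAntidiagonal.sigmaAntidiagonalEquivProd.summable_iff.2 hF)
      simp only [Function.comp] at e2
      rw [e2]
      refine tsum_congr fun n => ?_
      rw [hρg, Finset.mul_sum, tsum_fintype, ← Finset.sum_coe_sort]
      refine Finset.sum_congr rfl fun p _ => ?_
      have hp := Finset.HasAntidiagonal.mem_antidiagonal.1 p.2
      simp only [Finset.HasAntidiagonal.sigmaAntidiagonalEquivProd_apply]
      rw [← mul_assoc, ← pow_add, hp]
    rw [e1]
    have := hF.hasSum.prod_fiberwise (fun j => (hF.prod_factor j).hasSum)
    refine this.congr_fun ?_ |> id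
    intro j
    simp only
    rw [tsum_mul_left]
  -- Step A
  have stepA : ∀ s : ℕ → ℝ, (∀ᶠ n in atTop, 0 < s n ∧ s n < 1) → Tendsto s atTop (nhds 1) →
      Tendsto (fun n => (1 - s n) * ((∑' j, s n ^ j * w j) * ∑' k, s n ^ k * v i0 k)) atTop
        (nhds 1) := by
    intro s hs hs1
    refine comparable_lim _ _ 1 (abel_one ρ hρ0 hρ1 hρ s hs hs1) ?_
    intro ε hε
    obtain ⟨s0, hs0, hcmp⟩ := abel_unif (ι := {j // 0 < w j}) (fun j k => g j k / w j) (v i0)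
      (fun j => 1 / w j) (fun j k => div_nonneg (hg0 _ _) (hw _))
      (fun j k => div_le_div_of_nonneg_right (hg1 _ _) (hw _)) (hv i0) hv0 (hvM i0)
      (by
        intro ε hε
        obtain ⟨n0, hn0⟩ := hgc ε hε
        refine ⟨n0, fun n hn j => ?_⟩
        obtain ⟨h1, h2⟩ := hn0 n hn j
        have hj := j.2
        rw [← Finset.sum_div]
        constructor
        · rw [div_le_iff₀ hj]; linarith
        · rw [mul_div_assoc', le_div_iff₀ hj]; linarith) ε hε
    have hcmp' : ∀ s, 0 ≤ s → s0 < s → s < 1 → ∀ j,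
        ∑' k, s ^ k * g j k ≤ (1 + ε) * (w j * ∑' k, s ^ k * v i0 k) ∧
        w j * ∑' k, s ^ k * v i0 k ≤ (1 + ε) * ∑' k, s ^ k * g j k := by
      intro s h1 h2 h3 j
      rcases (hw j).eq_or_lt with hj | hj
      · simp [hgw j _ hj.symm, hj.symm]
      · obtain ⟨a1, a2⟩ := hcmp s h1 h2 h3 ⟨j, hj⟩
        have e : ∑' k, s ^ k * (g j k / w j) = (∑' k, s ^ k * g j k) / w j := by
          rw [← tsum_div_const]
          exact tsum_congr fun k => by ring
        simp only at a1 a2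
        rw [e] at a1 a2
        rw [div_le_iff₀ hj] at a1
        rw [mul_div_assoc', le_div_iff₀ hj] at a2
        constructor <;> linarith
    filter_upwards [hs, (tendsto_order.1 hs1).1 s0 hs0] with n hn hn2
    have hRn := hR (s n) hn.1 hn.2
    have hwsum : Summable fun j => s n ^ j * w j := summ_bdd w (w 0) _ hn.1.le hn.2 hw hwM
    set V0 := ∑' k, s n ^ k * v i0 k with hV0
    have h1s : 0 ≤ 1 - s n := by linarith [hn.2]
    have A1 : ∑' m, s n ^ m * ρ m ≤ (1 + ε) * ((∑' j, s n ^ j * w j) * V0) := by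
      rw [← hRn.tsum_eq, ← tsum_mul_right, ← tsum_mul_left]
      refine Summable.tsum_le_tsum ?_ hRn.summable ((hwsum.mul_right _).mul_left _)
      intro j
      have := mul_le_mul_of_nonneg_left (hcmp' (s n) hn.1.le hn2 hn.2 j).1
        (pow_nonneg hn.1.le j)
      linarith
    have A2 : (∑' j, s n ^ j * w j) * V0 ≤ (1 + ε) * ∑' m, s n ^ m * ρ m := by
      rw [← hRn.tsum_eq, ← tsum_mul_right, ← tsum_mul_left]
      refine Summable.tsum_le_tsum ?_ (hwsum.mul_right _) (hRn.summable.mul_left _)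
      intro j
      have := mul_le_mul_of_nonneg_left (hcmp' (s n) hn.1.le hn2 hn.2 j).2
        (pow_nonneg hn.1.le j)
      linarith
    have B1 := mul_le_mul_of_nonneg_left A1 h1s
    have B2 := mul_le_mul_of_nonneg_left A2 h1s
    constructor <;> linarith
  have hG2 : 0 < Real.Gamma (2 - α) := Real.Gamma_pos_of_pos (by linarith)
  have final := tauber α (1 / Real.Gamma (2 - α)) hα hα1 (by positivity) (fun n => W n / n)
    (fun n => v (x n)) (fun n => div_nonneg (hWpos n).le (by positivity)) (fun n => hv _)
    (fun n => hva _) ?_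
  · have e : 1 / Real.Gamma (2 - α) / Real.Gamma α =
        1 / (Real.Gamma α * Real.Gamma (2 - α)) := by
      rw [div_div, mul_comm]
    rw [e] at final
    refine final.congr' ?_
    filter_upwards [eventually_gt_atTop 0] with n hn
    have : (0:ℝ) < n := by exact_mod_cast hn
    field_simp
  intro m
  set c : ℝ := (m:ℝ) + 1 with hc
  have hc1 : 1 ≤ c := by rw [hc]; have := Nat.cast_nonneg (α := ℝ) m; linarith
  have hcpos : 0 < c := by linarith
  set S : ℕ → ℝ := fun n => Real.exp (-(1 / (n:ℝ))) ^ (m + 1) with hS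
  have hSe : ∀ n, S n = Real.exp (-(c / n)) := by
    intro n; rw [hS]; simp only; rw [s_pow]; push_cast; rfl
  have hSr : ∀ᶠ n in atTop, 0 < S n ∧ S n < 1 := by
    filter_upwards [s_range] with n hn
    exact ⟨pow_pos hn.1 _, pow_lt_one₀ hn.1.le hn.2 (by omega)⟩
  have hS1 : Tendsto S atTop (nhds 1) := by
    have h1 : Tendsto (fun n : ℕ => -(c / (n:ℝ))) atTop (nhds 0) := by
      simpa using (tendsto_const_div_atTop_nhds_zero_nat c).neg
    have h2 := (Real.continuous_exp.tendsto _).comp h1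
    rw [Real.exp_zero] at h2
    exact h2.congr fun n => (hSe n).symm
  have lA := stepA S hSr hS1
  have lW := abelian W (1 - α) c (by linarith) hc1 hWmono hWpos hsub hWrat
  have lE := exp_lim c
  -- scalar limit
  have hGc : 0 < (1 / c) ^ (1 - α + 1) * Real.Gamma (1 - α + 1) := by
    have : 0 < Real.Gamma (1 - α + 1) := Real.Gamma_pos_of_pos (by linarith)
    positivity
  have l0 : Tendsto (fun n : ℕ => W n / n * ∑' k, S n ^ k * v i0 k) atTop
      (nhds (1 / Real.Gamma (2 - α) * (1 / c) ^ α)) := by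
    have l := lA.div ((lE.mul lE).mul lW) (by positivity)
    have e : 1 / (c * c * ((1 / c) ^ (1 - α + 1) * Real.Gamma (1 - α + 1)))
        = 1 / Real.Gamma (2 - α) * (1 / c) ^ α := by
      rw [show 1 - α + 1 = 2 - α by ring]
      have h2 : (1 / c) ^ (2 - α) * (1 / c) ^ α = (1 / c) * (1 / c) := by
        rw [← Real.rpow_add (by positivity), show 2 - α + α = (2:ℝ) by ring]
        rw [Real.rpow_two]; ring
      have h3 : 0 < (1 / c) ^ (2 - α) := by positivity
      rw [div_mul_eq_mul_div, one_mul, div_eq_div_iff (by positivity) (by positivity)]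
      calc 1 * Real.Gamma (2 - α) = c * c * ((1 / c) * (1 / c)) * Real.Gamma (2 - α) := by
            field_simp
        _ = _ := by rw [← h2]; ring
    rw [e] at l
    refine l.congr' ?_
    filter_upwards [hSr, eventually_gt_atTop 0] with n hn hn0
    have hn' : (0:ℝ) < n := by exact_mod_cast hn0
    simp only [Pi.div_apply]
    rw [what_eq w W hw hanti hW (S n) hn.1 hn.2, ← hSe n]
    have e2 : ∑' k, S n ^ k * (W k / W n) = (∑' k, S n ^ k * W k) / W n := by
      rw [← tsum_div_const]
      exact tsum_congr fun k => by ring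
    rw [e2]
    have hWn := hWpos n
    have h1 : 0 < 1 - S n := by linarith [hn.2]
    have hpos : 0 < ∑' k, S n ^ k * W k := by
      have := what_eq w W hw hanti hW (S n) hn.1 hn.2
      have h2 : 0 < ∑' j, S n ^ j * w j := by
        refine (summ_bdd w (w 0) _ hn.1.le hn.2 hw hwM).tsum_pos
          (fun j => mul_nonneg (pow_nonneg hn.1.le _) (hw j)) 0 (by simpa using hw0)
      rw [this] at h2
      exact (pos_iff_pos_of_mul_pos h2).1 h1
    field_simp
  refine comparable_lim _ _ _ l0 ?_
  intro ε hε
  obtain ⟨s0, hs0, hcmp⟩ := abel_unif v (v i0) (fun i => v i 0) hv hvM (hv i0) hv0 (hvM i0) hvc ε hε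
  filter_upwards [hSr, (tendsto_order.1 hS1).1 s0 hs0] with n hn hn2
  obtain ⟨a1, a2⟩ := hcmp (S n) hn.1.le hn2 hn.2 (x n)
  have hr : 0 ≤ W n / n := div_nonneg (hWpos n).le (by positivity)
  have b1 := mul_le_mul_of_nonneg_left a1 hr
  have b2 := mul_le_mul_of_nonneg_left a2 hr
  constructor <;> linarith

/-- Proposition 1 of the paper: if `A` is a uniform set for `f`, the wandering rate
`(W_n)` is regularly varying with exponent `1 - α` for some `α ∈ (0,1]`, and the
sequence `(T̂ⁿ f)|_A` is decreasing, then `W_n · T̂ⁿ f → 1/(Γ(α)Γ(2-α))` μ-a.e.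
uniformly on `A`; in particular `A` is uniformly returning for `f`. -/
theorem uniform_set_is_uniformly_returning {X : Type*} [MeasurableSpace X]
    (μ : Measure X) [SigmaFinite μ] (hμ : μ Set.univ = ⊤)
    (T : X → X) (hT : MeasurePreserving T μ μ)
    (hcons : Conservative T μ) (herg : Ergodic T μ)
    -- the transfer operator, characterized by `∫_B T̂g dμ = ∫_{T⁻¹B} g dμ`
    (That : (X → ℝ) → (X → ℝ))
    (hThat : ∀ g : X → ℝ, Integrable g μ → ∀ B : Set X, MeasurableSet B →
      ∫ x in B, That g x ∂μ = ∫ x in T ⁻¹' B, g x ∂μ)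
    -- `f` is a probability density w.r.t. `μ`
    (f : X → ℝ) (hf_nonneg : 0 ≤ f) (hf_int : Integrable f μ)
    (hf_density : ∫ x, f x ∂μ = 1)
    (A : Set X) (hA : MeasurableSet A) (hA0 : 0 < μ A) (hAfin : μ A < ⊤)
    -- the wandering rate of `A`
    (W : ℕ → ℝ)
    (hW : ∀ n, W n = (μ (⋃ k ∈ Finset.range (n + 1), T^[k] ⁻¹' A)).toReal)
    -- `A` is uniform for `f` with normalizing sequence `b`
    (b : ℕ → ℝ) (hb_pos : ∀ n, 0 < b n)
    (hUnif : ∃ N : Set X, μ N = 0 ∧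
      TendstoUniformlyOn
        (fun n x => (∑ k ∈ Finset.range n, That^[k] f x) / b n)
        (fun _ => 1) atTop (A \ N))
    -- `(W_n)` is regularly varying with exponent `1 - α`, `α ∈ (0,1]`
    (α : ℝ) (hα : α ∈ Set.Ioc (0 : ℝ) 1)
    (L : ℝ → ℝ) (hL : ∀ c > 0, Tendsto (fun t => L (c * t) / L t) atTop (nhds 1))
    (hWreg : ∀ᶠ n : ℕ in atTop, W n = (n : ℝ) ^ (1 - α) * L n)
    -- `(T̂ⁿ f)|_A` is decreasing
    (hdec : ∀ x ∈ A, Antitone fun n : ℕ => That^[n] f x) :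
    ∃ N : Set X, μ N = 0 ∧
      TendstoUniformlyOn (fun n x => W n * That^[n] f x)
        (fun _ => 1 / (Real.Gamma α * Real.Gamma (2 - α))) atTop (A \ N) := by
  obtain ⟨N, hN0, hU⟩ := hUnif
  have hTm := hT.measurable
  -- iterates
  have hit : ∀ k, Integrable (That^[k] f) μ ∧ ∫ x, That^[k] f x ∂μ = 1 := by
    intro k
    induction k with
    | zero => exact ⟨hf_int, hf_density⟩
    | succ k ih =>
      rw [Function.iterate_succ_apply']
      have h1 := hThat _ ih.1 Set.univ MeasurableSet.univ
      rw [Set.preimage_univ, setIntegral_univ, setIntegral_univ, ih.2] at h1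
      refine ⟨?_, h1⟩
      by_contra hni
      rw [integral_undef hni] at h1
      exact zero_ne_one h1
  have hstep : ∀ k B, MeasurableSet B →
      ∫ x in B, That^[k + 1] f x ∂μ = ∫ x in T ⁻¹' B, That^[k] f x ∂μ := by
    intro k B hB
    rw [Function.iterate_succ_apply']
    exact hThat _ (hit k).1 B hB
  have hnonneg : ∀ k B, MeasurableSet B → 0 ≤ ∫ x in B, That^[k] f x ∂μ := by
    intro k
    induction k with
    | zero => exact fun B _ => integral_nonneg hf_nonneg
    | succ k ih => exact fun B hB => by rw [hstep k B hB]; exact ih _ (hTm hB)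
  have hae : ∀ k, 0 ≤ᵐ[μ] That^[k] f := fun k =>
    ae_nonneg_of_forall_setIntegral_nonneg (hit k).1 (fun B hB _ => hnonneg k B hB)
  -- the sets
  let E : ℕ → Set X := fun n => Nat.rec A (fun _ S => A ∪ T ⁻¹' S) n
  have hE0 : E 0 = A := rfl
  have hES : ∀ n, E (n + 1) = A ∪ T ⁻¹' (E n) := fun n => rfl
  have hEm : ∀ n, MeasurableSet (E n) := by
    intro n
    induction n with
    | zero => exact hA
    | succ n ih => rw [hES]; exact hA.union (hTm ih)
  have hEeq : ∀ n, E n = ⋃ k ∈ Finset.range (n + 1), T^[k] ⁻¹' A := by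
    intro n
    induction n with
    | zero => simp [hE0]
    | succ n ih =>
      rw [hES, ih]
      ext x
      simp only [Set.mem_union, Set.mem_preimage, Set.mem_iUnion, Finset.mem_range, exists_prop]
      constructor
      · rintro (h | ⟨k, hk, h⟩)
        · exact ⟨0, by omega, h⟩
        · exact ⟨k + 1, by omega, h⟩
      · rintro ⟨k, hk, h⟩
        cases k with
        | zero => exact Or.inl h
        | succ k => exact Or.inr ⟨k, by omega, h⟩
  have hEmono : Monotone E := by
    intro a b hab
    rw [hEeq, hEeq]
    refine Set.biUnion_subset_biUnion_left ?_
    intro k hk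
    simp at hk ⊢
    omega
  have hEfin : ∀ n, μ (E n) < ⊤ := by
    intro n
    induction n with
    | zero => exact hAfin
    | succ n ih =>
      rw [hES]
      refine measure_union_lt_top hAfin ?_
      rw [hT.measure_preimage (hEm n).nullMeasurableSet]
      exact ih
  let P : ℕ → Set X := fun n => Nat.casesOn n A (fun m => A \ T ⁻¹' (E m))
  have hP0 : P 0 = A := rfl
  have hPS : ∀ n, P (n + 1) = A \ T ⁻¹' (E n) := fun n => rfl
  have hPm : ∀ n, MeasurableSet (P n) := by
    intro n
    cases n with
    | zero => exact hA
    | succ n => rw [hPS]; exact hA.diff (hTm (hEm n))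
  have hPA : ∀ n, P n ⊆ A := by
    intro n
    cases n with
    | zero => exact subset_rfl
    | succ n => rw [hPS]; exact Set.diff_subset
  have hPanti : Antitone P := by
    refine antitone_nat_of_succ_le fun n => ?_
    cases n with
    | zero => exact hPA 1
    | succ n =>
      show A \ T ⁻¹' (E (n + 1)) ⊆ A \ T ⁻¹' (E n)
      exact Set.sdiff_subset_sdiff_right (Set.preimage_mono (hEmono (Nat.le_succ n)))
  have hPfin : ∀ n, μ (P n) ≠ ⊤ := fun n => ((measure_mono (hPA n)).trans_lt hAfin).ne
  have hEdec : ∀ n, E (n + 1) = P (n + 1) ∪ T ⁻¹' (E n) := by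
    intro n; rw [hES, hPS, Set.diff_union_self]
  have hEdisj : ∀ n, Disjoint (P (n + 1)) (T ⁻¹' (E n)) := by
    intro n; rw [hPS]; exact Set.disjoint_sdiff_left
  have hWE : ∀ n, W n = μ.real (E n) := by
    intro n; rw [hW, hEeq]; rfl
  have hWsum : ∀ n, W n = ∑ j ∈ Finset.range (n + 1), μ.real (P j) := by
    intro n
    induction n with
    | zero => simp [hWE, hE0, hP0]
    | succ n ih =>
      rw [Finset.sum_range_succ, ← ih, hWE, hWE, hEdec,
        measureReal_union (hEdisj n) (hTm (hEm n)) (hPfin (n + 1))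
          (by rw [hT.measure_preimage (hEm n).nullMeasurableSet]; exact (hEfin n).ne)]
      rw [add_comm]
      congr 1
      simp only [Measure.real]
      rw [hT.measure_preimage (hEm n).nullMeasurableSet]
  have hren : ∀ n i, ∫ x in E n, That^[i] f x ∂μ =
      ∑ p ∈ Finset.HasAntidiagonal.antidiagonal n, ∫ x in P p.1, That^[p.2 + i] f x ∂μ := by
    intro n
    induction n with
    | zero => intro i; simp [hE0, hP0]
    | succ n ih =>
      intro i
      rw [Finset.Nat.sum_antidiagonal_succ', hEdec,
        setIntegral_union (hEdisj n) (hTm (hEm n)) (hit i).1.integrableOn (hit i).1.integrableOn,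
        ← hstep i _ (hEm n), ih (i + 1)]
      congr 1
      · simp
      · refine Finset.sum_congr rfl fun p _ => ?_
        rw [show p.2 + (i + 1) = p.2 + 1 + i by ring]
  -- conservativity and ergodicity
  have hEuniv : ∀ᵐ x ∂μ, x ∈ ⋃ n, E n := by
    let F : Set X := {x | ∃ᶠ n in atTop, T^[n] x ∈ A}
    have hFm : MeasurableSet F := by
      have : F = ⋂ m, ⋃ n, ⋃ (_ : m ≤ n), T^[n] ⁻¹' A := by
        ext x
        simp [F, frequently_atTop]
      rw [this]
      exact MeasurableSet.iInter fun m => MeasurableSet.iUnion fun n =>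
        MeasurableSet.iUnion fun _ => (hTm.iterate n) hA
    have hFinv : T ⁻¹' F = F := by
      ext x
      simp only [F, Set.mem_preimage, Set.mem_setOf_eq]
      simp only [← Function.iterate_succ_apply]
      have h : (∃ᶠ n in map (fun n : ℕ => n + 1) atTop, T^[n] x ∈ A) ↔
          ∃ᶠ n : ℕ in atTop, T^[n + 1] x ∈ A := frequently_map
      rw [map_add_atTop_eq_nat] at h
      exact h.symm
    have hrec := hcons.ae_mem_imp_frequently_image_mem hA.nullMeasurableSet
    rcases herg.toPreErgodic.ae_mem_or_ae_notMem hFm hFinv with h | h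
    · filter_upwards [h] with x hx
      obtain ⟨n, hn⟩ := Frequently.exists hx
      refine Set.mem_iUnion.2 ⟨n, ?_⟩
      rw [hEeq]
      exact Set.mem_biUnion (by simp : n ∈ Finset.range (n + 1)) hn
    · exfalso
      have : ∀ᵐ x ∂μ, x ∉ A := by
        filter_upwards [h, hrec] with x h1 h2 h3
        exact h1 (h2 h3)
      rw [ae_iff] at this
      simp only [not_not] at this
      exact hA0.ne' this
  have hρlim : Tendsto (fun n => ∫ x in E n, f x ∂μ) atTop (nhds 1) := by
    have h1 := tendsto_setIntegral_of_monotone (μ := μ) (f := f) hEm hEmono hf_int.integrableOn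
    have h2 : ∫ x in ⋃ n, E n, f x ∂μ = 1 := by
      rw [setIntegral_congr_set (t := Set.univ), setIntegral_univ, hf_density]
      exact eventuallyEq_univ.2 hEuniv
    rwa [h2] at h1
  have hgle : ∀ k B, MeasurableSet B → ∫ x in B, That^[k] f x ∂μ ≤ 1 := by
    intro k B hB
    rw [← (hit k).2]
    exact setIntegral_le_integral (hit k).1 (hae k)
  -- the good set
  let N' : Set X := N ∪ {x | ¬ ∀ k, 0 ≤ That^[k] f x}
  have hN' : μ N' = 0 := measure_union_null hN0 (ae_iff.1 (ae_all_iff.2 hae))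
  have hne : (A \ N').Nonempty := by
    apply nonempty_of_measure_ne_zero (μ := μ)
    rw [measure_diff_null hN']
    exact hA0.ne'
  obtain ⟨x0, hx0⟩ := hne
  have hgood : ∀ x ∈ A \ N', ∀ k, 0 ≤ That^[k] f x := by
    intro x hx
    by_contra h
    exact hx.2 (Or.inr h)
  have hsubN : A \ N' ⊆ A \ N := Set.sdiff_subset_sdiff_right Set.subset_union_left
  have hcomp : ∀ ε > 0, ∃ n0 : ℕ, ∀ n ≥ n0, ∀ x ∈ A \ N', ∀ y ∈ A \ N',
      ∑ k ∈ Finset.range n, That^[k] f x ≤ (1 + ε) * ∑ k ∈ Finset.range n, That^[k] f y := by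
    intro ε hε
    obtain ⟨η, hη0, hη1, hηε⟩ : ∃ η : ℝ, 0 < η ∧ η ≤ 1 / 4 ∧ 4 * η ≤ ε :=
      ⟨min (1 / 4) (ε / 4), by positivity, min_le_left _ _, by
        have := min_le_right (1 / 4) (ε / 4); linarith⟩
    obtain ⟨n0, hn0⟩ := eventually_atTop.1 (Metric.tendstoUniformlyOn_iff.1 hU η hη0)
    refine ⟨n0, fun n hn x hx y hy => ?_⟩
    have h1 := hn0 n hn x (hsubN hx)
    have h2 := hn0 n hn y (hsubN hy)
    rw [Real.dist_eq, abs_lt] at h1 h2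
    have hb := hb_pos n
    have hSy : 0 ≤ ∑ k ∈ Finset.range n, That^[k] f y :=
      Finset.sum_nonneg fun k _ => hgood y hy k
    have a1 : (∑ k ∈ Finset.range n, That^[k] f x) / b n ≤ 1 + η := by linarith [h1.1]
    have a2 : 1 - η ≤ (∑ k ∈ Finset.range n, That^[k] f y) / b n := by linarith [h2.2]
    rw [div_le_iff₀ hb] at a1
    rw [le_div_iff₀ hb] at a2
    have a3 : (1 + η) * b n ≤ (1 + 4 * η) * ((1 - η) * b n) := by
      have : (1 + η) ≤ (1 + 4 * η) * (1 - η) := by nlinarith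
      have := mul_le_mul_of_nonneg_right this hb.le
      linarith
    have a4 := mul_le_mul_of_nonneg_left a2 (by linarith : 0 ≤ 1 + 4 * η)
    have a5 := mul_le_mul_of_nonneg_right (by linarith : 1 + 4 * η ≤ 1 + ε) hSy
    linarith
  have hpos0 : 0 < That^[0] f x0 := by
    refine lt_of_le_of_ne (hgood x0 hx0 0) fun h0 => ?_
    have hz : ∀ k, That^[k] f x0 = 0 := fun k =>
      le_antisymm ((hdec x0 hx0.1 (Nat.zero_le k)).trans h0.symm.le) (hgood x0 hx0 k)
    obtain ⟨n0, hn0⟩ := eventually_atTop.1 (Metric.tendstoUniformlyOn_iff.1 hU 1 one_pos)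
    have := hn0 n0 le_rfl x0 (hsubN hx0)
    simp [hz] at this
  have haeA : ∀ j, ∀ᵐ x ∂(μ.restrict (P j)), x ∈ A \ N' := by
    intro j
    have h1 : ∀ᵐ x ∂μ, x ∉ N' := by
      rw [ae_iff]; simpa using hN'
    filter_upwards [ae_restrict_mem (hPm j), ae_restrict_of_ae h1] with x hx hx2
    exact ⟨hPA j hx, hx2⟩
  have hgc : ∀ ε > 0, ∃ n0 : ℕ, ∀ n ≥ n0, ∀ j,
      ∑ k ∈ Finset.range n, ∫ x in P j, That^[k] f x ∂μ ≤
        μ.real (P j) * ((1 + ε) * ∑ k ∈ Finset.range n, That^[k] f x0) ∧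
      μ.real (P j) * ∑ k ∈ Finset.range n, That^[k] f x0 ≤
        (1 + ε) * ∑ k ∈ Finset.range n, ∫ x in P j, That^[k] f x ∂μ := by
    intro ε hε
    obtain ⟨n0, hn0⟩ := hcomp ε hε
    refine ⟨n0, fun n hn j => ?_⟩
    have hconst : ∀ c : ℝ, Integrable (fun _ : X => c) (μ.restrict (P j)) :=
      fun c => integrableOn_const (hPfin j)
    have hi : Integrable (fun x => ∑ k ∈ Finset.range n, That^[k] f x) (μ.restrict (P j)) :=
      integrable_finset_sum _ fun k _ => (hit k).1.integrableOn
    rw [← integral_finset_sum _ fun k _ => (hit k).1.integrableOn]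
    constructor
    · have h1 : ∫ x in P j, (∑ k ∈ Finset.range n, That^[k] f x) ∂μ ≤
          ∫ x in P j, ((1 + ε) * ∑ k ∈ Finset.range n, That^[k] f x0) ∂μ := by
        refine integral_mono_ae hi (hconst _) ?_
        filter_upwards [haeA j] with x hx
        exact hn0 n hn x hx x0 hx0
      rwa [setIntegral_const, smul_eq_mul] at h1
    · have h1 : ∫ x in P j, (∑ k ∈ Finset.range n, That^[k] f x0) ∂μ ≤
          ∫ x in P j, ((1 + ε) * ∑ k ∈ Finset.range n, That^[k] f x) ∂μ := by
        refine integral_mono_ae (hconst _) (hi.const_mul _) ?_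
        filter_upwards [haeA j] with x hx
        exact hn0 n hn x0 hx0 x hx
      rwa [setIntegral_const, smul_eq_mul, integral_const_mul] at h1
  -- regular variation at integers
  have hWpos : ∀ n, 0 < W n := by
    intro n
    rw [hWE]
    refine ENNReal.toReal_pos ?_ (hEfin n).ne
    have : A ⊆ E n := hEmono (Nat.zero_le n)
    exact (hA0.trans_le (measure_mono this)).ne'
  have hWrat : ∀ p : ℕ, 0 < p →
      Tendsto (fun n : ℕ => W (p * n) / W n) atTop (nhds ((p:ℝ) ^ (1 - α))) := by
    intro p hp
    have hp' : (0:ℝ) < p := by exact_mod_cast hp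
    have h1 := (hL p hp').comp (tendsto_natCast_atTop_atTop (R := ℝ))
    have h2 := h1.const_mul ((p:ℝ) ^ (1 - α))
    rw [mul_one] at h2
    refine h2.congr' ?_
    have hpt : Tendsto (fun n : ℕ => p * n) atTop atTop :=
      tendsto_id.const_mul_atTop' hp
    filter_upwards [hWreg, hpt.eventually hWreg, eventually_gt_atTop 0] with n e1 e2 hn
    have hn' : (0:ℝ) < n := by exact_mod_cast hn
    rw [e1, e2]
    simp only [Function.comp]
    push_cast
    rw [Real.mul_rpow hp'.le hn'.le]
    have h3 : (n:ℝ) ^ (1 - α) ≠ 0 := (Real.rpow_pos_of_pos hn' _).ne'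
    have h4 : L n ≠ 0 := by
      intro h
      have := hWpos n
      rw [e1, h, mul_zero] at this
      exact lt_irrefl _ this
    field_simp
  have hcore := core (ι := {x // x ∈ A \ N'}) α hα.1 hα.2 (fun j => μ.real (P j)) W
    (fun n => ∫ x in E n, f x ∂μ) (fun j k => ∫ x in P j, That^[k] f x ∂μ)
    (fun x k => That^[k] f x) ⟨x0, hx0⟩ (fun j => measureReal_nonneg)
    (ENNReal.toReal_pos hA0.ne' hAfin.ne)
    (fun i j hij => measureReal_mono (hPanti hij) (hPfin i)) hWsum hWrat
    (fun n => hnonneg 0 _ (hEm n)) (fun n => hgle 0 _ (hEm n)) hρlim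
    (fun j k => hnonneg k _ (hPm j)) (fun j k => hgle k _ (hPm j))
    (fun j k hj => by
      have : μ (P j) = 0 := (measureReal_eq_zero_iff (hPfin j)).1 hj
      exact setIntegral_measure_zero _ this)
    (fun n => hren n 0) (fun x k => hgood x x.2 k) (fun x => hdec x x.2.1) hpos0
    (fun ε hε => by
      obtain ⟨n0, hn0⟩ := hcomp ε hε
      exact ⟨n0, fun n hn x => ⟨hn0 n hn x x.2 x0 hx0, hn0 n hn x0 hx0 x x.2⟩⟩) hgc
  refine ⟨N', hN', ?_⟩
  rw [Metric.tendstoUniformlyOn_iff]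
  intro ε hε
  by_contra hnot
  rw [not_eventually] at hnot
  have hch : ∀ n : ℕ, ∃ x : {x // x ∈ A \ N'},
      (¬ ∀ y ∈ A \ N', dist (1 / (Real.Gamma α * Real.Gamma (2 - α))) (W n * That^[n] f y) < ε) →
      ¬ dist (1 / (Real.Gamma α * Real.Gamma (2 - α))) (W n * That^[n] f x) < ε := by
    intro n
    by_cases h : ∀ y ∈ A \ N',
        dist (1 / (Real.Gamma α * Real.Gamma (2 - α))) (W n * That^[n] f y) < ε
    · exact ⟨⟨x0, hx0⟩, fun h' => absurd h h'⟩
    · push Not at h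
      obtain ⟨y, hy, hyε⟩ := h
      exact ⟨⟨y, hy⟩, fun _ => not_lt.2 hyε⟩
  choose xs hxs using hch
  have hev := Metric.tendsto_nhds.1 (hcore xs) ε hε
  obtain ⟨n, h1, h2⟩ := (hnot.and_eventually hev).exists
  rw [dist_comm] at h2
  exact hxs n h1 h2
end

section
/- The set A_1 = (1/2, 1] is uniformly returning for the Farey map for every f ∈ D: there exists a positive increasing sequence b_n (namely b_n ∼ log n) such that b_n · T̂^n f → 1 uniformly on A_1, where T̂ is the Farey transfer operator. -/
open MeasureTheory Filter

/-- The infinite invariant measure `dμ = (1/x) dλ` on `[0,1]`. -/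
noncomputable def fareyMeasure : Measure ℝ :=
  (volume.restrict (Set.Icc (0 : ℝ) 1)).withDensity fun x => ENNReal.ofReal (1 / x)

/-- The transfer operator of the Farey map with respect to `dμ = (1/x)dλ`. -/
noncomputable def fareyTransfer (f : ℝ → ℝ) (x : ℝ) : ℝ :=
  (f (x / (x + 1)) + x * f (1 / (x + 1))) / (x + 1)


/-- Nonnegative, nondecreasing, concave functions. -/
structure FGood (g : ℝ → ℝ) : Prop where
  nn : ∀ x ∈ Set.Ioo (0:ℝ) 1, 0 ≤ g x
  mono : MonotoneOn g (Set.Ioc (0:ℝ) 1)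
  conc : ConcaveOn ℝ (Set.Ioo (0:ℝ) 1) g

noncomputable def fG (g : ℝ → ℝ) (y : ℝ) : ℝ := (1 - y) * g y + y * g (1 - y)

lemma fareyTransfer_eq (g : ℝ → ℝ) (x : ℝ) (hx : 0 < x) :
    fareyTransfer g x = fG g (x / (x + 1)) := by
  unfold fareyTransfer fG
  have h : 1 - x / (x + 1) = 1 / (x + 1) := by field_simp; ring
  rw [h]; field_simp

lemma fG_mono {g : ℝ → ℝ} (h : FGood g) : MonotoneOn (fG g) (Set.Ioc 0 (1/2)) := by
  intro y hy z hz hyz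
  obtain ⟨hy0, hy1⟩ := hy
  obtain ⟨hz0, hz1⟩ := hz
  rcases eq_or_lt_of_le hyz with rfl | hlt
  · exact le_rfl
  have hd : 0 < 1 - 2 * y := by linarith
  have hm : g y ≤ g (1 - y) := h.mono ⟨hy0, by linarith⟩ ⟨by linarith, by linarith⟩ (by linarith)
  -- barycentric coordinate
  set t := (z - y) / (1 - 2 * y) with ht
  have htd : t * (1 - 2 * y) = z - y := div_mul_cancel₀ _ hd.ne'
  have ht0 : 0 ≤ t := div_nonneg (by linarith) hd.le
  have ht1 : t ≤ 1 := by rw [ht, div_le_one hd]; linarith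
  have hyI : y ∈ Set.Ioo (0:ℝ) 1 := ⟨hy0, by linarith⟩
  have hyI' : 1 - y ∈ Set.Ioo (0:ℝ) 1 := ⟨by linarith, by linarith⟩
  have e1 := h.conc.2 hyI hyI' (sub_nonneg.2 ht1) ht0 (by ring)
  have e2 := h.conc.2 hyI hyI' ht0 (sub_nonneg.2 ht1) (by ring)
  simp only [smul_eq_mul] at e1 e2
  have p1 : (1 - t) * y + t * (1 - y) = z := by linarith
  have p2 : t * y + (1 - t) * (1 - y) = 1 - z := by linarith
  rw [p1] at e1
  rw [p2] at e2
  unfold fG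
  have a1 := mul_le_mul_of_nonneg_left e1 (by linarith : 0 ≤ 1 - z)
  have a2 := mul_le_mul_of_nonneg_left e2 hz0.le
  have hz' : z = y + t * (1 - 2 * y) := by linarith
  have key : 0 ≤ (g (1 - y) - g y) * ((1 - z) * t + z * (1 - t) - y) := by
    apply mul_nonneg (by linarith)
    have : 0 ≤ t * (1 - z) := mul_nonneg ht0 (by linarith)
    have : z * (1 - t) - y + (1 - z) * t = (z - y) + t * (1 - 2 * z) := by ring
    have : 0 ≤ t * (1 - 2 * z) := mul_nonneg ht0 (by linarith)
    linarith
  nlinarith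

lemma fG_conc {g : ℝ → ℝ} (h : FGood g) : ConcaveOn ℝ (Set.Ioo 0 (1/2)) (fG g) := by
  have hc : Convex ℝ (Set.Ioo (0:ℝ) (1/2)) := convex_Ioo _ _
  have sub : Set.Ioo (0:ℝ) (1/2) ⊆ Set.Ioo 0 1 := Set.Ioo_subset_Ioo le_rfl (by norm_num)
  have c1 : ConcaveOn ℝ (Set.Ioo (0:ℝ) (1/2)) g := h.conc.subset sub hc
  have c2 : ConcaveOn ℝ (Set.Ioo (0:ℝ) (1/2)) (fun y => g (1 - y)) := by
    refine ⟨hc, ?_⟩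
    intro x hx y hy a b ha hb hab
    have := h.conc.2 (x := 1 - x) (y := 1 - y) ⟨by linarith [hx.2], by linarith [hx.1]⟩
      ⟨by linarith [hy.2], by linarith [hy.1]⟩ ha hb hab
    simp only [smul_eq_mul] at this ⊢
    have e : 1 - (a * x + b * y) = a * (1 - x) + b * (1 - y) := by linear_combination -hab
    rw [e]; exact this
  have l1 : ConcaveOn ℝ (Set.Ioo (0:ℝ) (1/2)) (fun y => 1 - y) := by
    refine ⟨hc, ?_⟩
    intro x hx y hy a b ha hb hab
    simp only [smul_eq_mul]
    apply le_of_eq; linear_combination hab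
  have l2 : ConcaveOn ℝ (Set.Ioo (0:ℝ) (1/2)) (fun y => y) := concaveOn_id hc
  have q1 := l1.mul c1 (fun {x} hx => by linarith [hx.2]) (fun {x} hx => h.nn x (sub hx)) (by
    intro i hi j hj hij
    have : i ≤ j := by
      by_contra hcon
      push Not at hcon
      exact absurd (h.mono ⟨hj.1, by linarith [hj.2]⟩ ⟨hi.1, by linarith [hi.2]⟩ hcon.le)
        (not_le.2 hij)
    simp only; linarith)
  have q2 := l2.mul c2 (fun {x} hx => hx.1.le)
    (fun {x} hx => h.nn (1 - x) ⟨by linarith [hx.2], by linarith [hx.1]⟩) (by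
    intro i hi j hj hij
    by_contra hcon
    push Not at hcon
    simp only at hij hcon
    exact absurd (h.mono (a := 1 - j) (b := 1 - i) ⟨by linarith [hj.2], by linarith [hj.1]⟩
      ⟨by linarith [hi.2], by linarith [hi.1]⟩ (by linarith)) (not_le.2 hij))
  exact q1.add q2

lemma fgood_transfer {g : ℝ → ℝ} (h : FGood g) : FGood (fareyTransfer g) := by
  have hy : ∀ x, 0 < x → x < 1 → x / (x + 1) ∈ Set.Ioo (0:ℝ) (1/2) := by
    intro x h0 h1
    refine ⟨by positivity, ?_⟩
    rw [div_lt_div_iff₀ (by linarith) (by norm_num)]; linarith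
  refine ⟨?_, ?_, ?_⟩
  · intro x hx
    obtain ⟨h0, h1⟩ := hx
    rw [fareyTransfer_eq g x h0]
    have := hy x h0 h1
    unfold fG
    have a1 := h.nn (x / (x+1)) ⟨this.1, by linarith [this.2]⟩
    have a2 := h.nn (1 - x / (x+1)) ⟨by linarith [this.2], by linarith [this.1]⟩
    exact add_nonneg (mul_nonneg (by linarith [this.2]) a1) (mul_nonneg this.1.le a2)
  · intro x hx z hz hxz
    rw [fareyTransfer_eq g x hx.1, fareyTransfer_eq g z hz.1]
    have h0 := hx.1
    have h0' := hz.1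
    apply fG_mono h
    · refine ⟨by positivity, ?_⟩
      rw [div_le_div_iff₀ (by linarith) (by norm_num)]; linarith [hx.2]
    · refine ⟨by positivity, ?_⟩
      rw [div_le_div_iff₀ (by linarith) (by norm_num)]; linarith [hz.2]
    · rw [div_le_div_iff₀ (by linarith) (by linarith)]; nlinarith
  · refine ⟨convex_Ioo _ _, ?_⟩
    intro x hx z hz a b ha hb hab
    have hm : a • x + b • z ∈ Set.Ioo (0:ℝ) 1 := convex_Ioo _ _ hx hz ha hb hab
    have e := (fG_conc h).2 (hy x hx.1 hx.2) (hy z hz.1 hz.2) ha hb hab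
    have hI := convex_Ioo _ _ (hy x hx.1 hx.2) (hy z hz.1 hz.2) ha hb hab
    have hI2 := hy _ hm.1 hm.2
    rw [fareyTransfer_eq g x hx.1, fareyTransfer_eq g z hz.1, fareyTransfer_eq g _ hm.1]
    refine e.trans (fG_mono h ⟨hI.1, hI.2.le⟩ ⟨hI2.1, hI2.2.le⟩ ?_)
    simp only [smul_eq_mul] at hm ⊢
    have hx0 := hx.1
    have hz0 := hz.1
    have hm0 := hm.1
    have hb' : b = 1 - a := by linarith
    subst hb'
    have e1 : (a * x + (1 - a) * z) / (a * x + (1 - a) * z + 1)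
       - (a * (x / (x + 1)) + (1 - a) * (z / (z + 1)))
       = a * (1 - a) * (x - z)^2 / ((a * x + (1 - a) * z + 1) * (x+1) * (z+1)) := by
      have : a * x + (1 - a) * z + 1 ≠ 0 := by linarith
      field_simp
      ring
    have e2 : 0 ≤ a * (1 - a) * (x - z)^2 / ((a * x + (1 - a) * z + 1) * (x+1) * (z+1)) := by
      have : 0 < a * x + (1 - a) * z + 1 := by linarith
      positivity
    linarith

lemma fgood_cont {g : ℝ → ℝ} (h : FGood g) : ContinuousOn g (Set.Ioo (0:ℝ) 1) :=
  h.conc.continuousOn isOpen_Ioo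

lemma fgood_int {g : ℝ → ℝ} (h : FGood g) {a b : ℝ} (ha : 0 < a) (hab : a ≤ b) (hb : b ≤ 1) :
    IntervalIntegrable (fun x => g x / x) volume a b := by
  have h1 : IntervalIntegrable g volume a b := by
    apply MonotoneOn.intervalIntegrable
    rw [Set.uIcc_of_le hab]
    exact h.mono.mono (fun x hx => ⟨ha.trans_le hx.1, hx.2.trans hb⟩)
  simp only [div_eq_mul_inv]
  apply h1.mul_continuousOn
  rw [Set.uIcc_of_le hab]
  exact continuousOn_inv₀.mono (fun x hx => (ha.trans_le hx.1).ne')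

lemma farey_mass {g : ℝ → ℝ} (h : FGood g) {a : ℝ} (ha : 0 < a) (ha1 : a ≤ 1) :
    ∫ x in a..1, fareyTransfer g x / x = ∫ x in (a / (a+1))..(1/(a+1)), g x / x := by
  have hA : (0:ℝ) < a / (a+1) := by positivity
  have hA2 : a / (a+1) ≤ 1/2 := by
    rw [div_le_div_iff₀ (by linarith) (by norm_num)]; linarith
  have hB2 : 1/2 ≤ 1 / (a+1) := by
    rw [div_le_div_iff₀ (by norm_num) (by linarith)]; linarith
  have hB : 1 / (a+1) < 1 := by
    rw [div_lt_one (by linarith)]; linarith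
  have hgc : ContinuousOn (fun x => g x / x) (Set.Ioo (0:ℝ) 1) :=
    (fgood_cont h).div continuousOn_id (fun x hx => hx.1.ne')
  have hU : Set.uIcc a 1 = Set.Icc a 1 := Set.uIcc_of_le ha1
  have i1 : ∫ x in a..1, ((fun x => g x / x) ∘ (fun x => x / (x+1))) x * (1 / (x+1)^2)
      = ∫ x in (a/(a+1))..(1/(1+1)), g x / x := by
    apply intervalIntegral.integral_comp_mul_deriv' (f := fun x => x / (x+1))
      (f' := fun x => 1/(x+1)^2)
    · intro x hx
      rw [hU] at hx
      have hx0 : x + 1 ≠ 0 := by linarith [hx.1]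
      have := (hasDerivAt_id x).div ((hasDerivAt_id x).add_const 1) hx0
      exact this.congr_deriv (by simp)
    · rw [hU]
      apply ContinuousOn.div continuousOn_const (by fun_prop)
      intro x hx
      have : 0 < x + 1 := by linarith [hx.1]
      positivity
    · apply hgc.mono
      rw [hU]
      rintro _ ⟨x, hx, rfl⟩
      have : 0 < x := by linarith [hx.1]
      refine ⟨by positivity, ?_⟩
      rw [div_lt_one (by linarith)]; linarith
  have i2 : ∫ x in a..1, ((fun x => g x / x) ∘ (fun x => 1 / (x+1))) x * (-1 / (x+1)^2)
      = ∫ x in (1/(a+1))..(1/(1+1)), g x / x := by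
    apply intervalIntegral.integral_comp_mul_deriv' (f := fun x => 1 / (x+1))
      (f' := fun x => -1/(x+1)^2)
    · intro x hx
      rw [hU] at hx
      have hx0 : x + 1 ≠ 0 := by linarith [hx.1]
      have := (hasDerivAt_const x (1:ℝ)).div ((hasDerivAt_id x).add_const 1) hx0
      exact this.congr_deriv (by simp)
    · rw [hU]
      apply ContinuousOn.div continuousOn_const (by fun_prop)
      intro x hx
      have : 0 < x + 1 := by linarith [hx.1]
      positivity
    · apply hgc.mono
      rw [hU]
      rintro _ ⟨x, hx, rfl⟩
      have : 0 < x := by linarith [hx.1]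
      refine ⟨by positivity, ?_⟩
      rw [div_lt_one (by linarith)]; linarith
  have j1 : IntervalIntegrable
      (fun x => ((fun x => g x / x) ∘ (fun x => x / (x+1))) x * (1 / (x+1)^2)) volume a 1 := by
    apply ContinuousOn.intervalIntegrable
    rw [hU]
    apply ContinuousOn.mul
    · apply hgc.comp
      · apply ContinuousOn.div continuousOn_id (by fun_prop)
        intro x hx
        have : 0 < x + 1 := by linarith [hx.1]
        positivity
      · intro x hx
        have : 0 < x := by linarith [hx.1]
        refine ⟨by positivity, ?_⟩
        simp only
        rw [div_lt_one (by linarith)]; linarith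
    · apply ContinuousOn.div continuousOn_const (by fun_prop)
      intro x hx
      have : 0 < x + 1 := by linarith [hx.1]
      positivity
  have j2 : IntervalIntegrable
      (fun x => ((fun x => g x / x) ∘ (fun x => 1 / (x+1))) x * (-1 / (x+1)^2)) volume a 1 := by
    apply ContinuousOn.intervalIntegrable
    rw [hU]
    apply ContinuousOn.mul
    · apply hgc.comp
      · apply ContinuousOn.div continuousOn_const (by fun_prop)
        intro x hx
        have : 0 < x + 1 := by linarith [hx.1]
        positivity
      · intro x hx
        have : 0 < x := by linarith [hx.1]
        refine ⟨by positivity, ?_⟩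
        simp only
        rw [div_lt_one (by linarith)]; linarith
    · apply ContinuousOn.div continuousOn_const (by fun_prop)
      intro x hx
      have : 0 < x + 1 := by linarith [hx.1]
      positivity
  have e : ∫ x in a..1, fareyTransfer g x / x =
      ∫ x in a..1, (((fun x => g x / x) ∘ (fun x => x / (x+1))) x * (1 / (x+1)^2)
        - ((fun x => g x / x) ∘ (fun x => 1 / (x+1))) x * (-1 / (x+1)^2)) := by
    apply intervalIntegral.integral_congr
    intro x hx
    rw [hU] at hx
    have : 0 < x := by linarith [hx.1]
    simp only [Function.comp, fareyTransfer]
    field_simp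
    ring
  rw [e, intervalIntegral.integral_sub j1 j2, i1, i2, intervalIntegral.integral_symm (1/(1+1)) (1/(a+1)),
    sub_neg_eq_add]
  apply intervalIntegral.integral_add_adjacent_intervals
  · exact fgood_int h hA (by norm_num; linarith) (by norm_num)
  · exact fgood_int h (by norm_num) (by norm_num at *; linarith) hB.le

/-- one-step estimate -/
lemma farey_step {g : ℝ → ℝ} (h : FGood g) (k : ℕ) :
    (∫ x in (1/((k:ℝ)+1))..1, fareyTransfer g x / x)
        + (Real.log (k+2) - Real.log (k+1)) * fareyTransfer g 1
      ≤ ∫ x in (1/((k:ℝ)+2))..1, g x / x ∧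
    (∫ x in (1/((k:ℝ)+2))..1, g x / x) ≤
      (∫ x in (1/((k:ℝ)+1))..1, fareyTransfer g x / x)
        + (Real.log (k+2) - Real.log (k+1)) * g 1 := by
  have hk : (0:ℝ) ≤ k := Nat.cast_nonneg k
  have ha : (0:ℝ) < 1/((k:ℝ)+1) := by positivity
  have ha1 : 1/((k:ℝ)+1) ≤ 1 := by rw [div_le_one (by linarith)]; linarith
  have m := farey_mass h ha ha1
  have e1 : 1/((k:ℝ)+1) / (1/((k:ℝ)+1) + 1) = 1/((k:ℝ)+2) := by field_simp; ring
  have e2 : 1 / (1/((k:ℝ)+1) + 1) = ((k:ℝ)+1)/((k:ℝ)+2) := by field_simp; ring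
  rw [e1, e2] at m
  set p := ((k:ℝ)+1)/((k:ℝ)+2) with hp
  have hp0 : 0 < p := by positivity
  have hp2 : 1/2 ≤ p := by rw [hp, div_le_div_iff₀ (by norm_num) (by linarith)]; linarith
  have hp1 : p ≤ 1 := by rw [hp, div_le_one (by linarith)]; linarith
  have hq : 1/((k:ℝ)+2) ≤ p := by rw [hp]; gcongr; linarith
  have hq0 : 0 < 1/((k:ℝ)+2) := by positivity
  have s := intervalIntegral.integral_add_adjacent_intervals (fgood_int h hq0 hq hp1)
    (fgood_int h hp0 hp1 le_rfl)
  have hlog : ∀ c : ℝ, ∫ x in p..1, c / x = (Real.log (k+2) - Real.log (k+1)) * c := by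
    intro c
    have : (fun x : ℝ => c / x) = fun x => c * x⁻¹ := by ext; rw [div_eq_mul_inv]
    rw [this, intervalIntegral.integral_const_mul, integral_inv_of_pos hp0 one_pos, hp]
    rw [one_div_div, Real.log_div (by linarith) (by linarith)]
    ring
  have hci : ∀ c : ℝ, IntervalIntegrable (fun x => c / x) volume p 1 := by
    intro c
    apply ContinuousOn.intervalIntegrable
    rw [Set.uIcc_of_le hp1]
    exact continuousOn_const.div continuousOn_id (fun x hx => (hp0.trans_le hx.1).ne')
  have hP1 : fareyTransfer g 1 = g (1/2) := by
    unfold fareyTransfer; norm_num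
  have u1 : ∫ x in p..1, g (1/2) / x ≤ ∫ x in p..1, g x / x := by
    apply intervalIntegral.integral_mono_on hp1 (hci _) (fgood_int h hp0 hp1 le_rfl)
    intro x hx
    have hx0 : 0 < x := hp0.trans_le hx.1
    apply div_le_div_of_nonneg_right _ hx0.le
    exact h.mono ⟨by norm_num, by norm_num⟩ ⟨hx0, hx.2⟩ (hp2.trans hx.1)
  have u2 : ∫ x in p..1, g x / x ≤ ∫ x in p..1, g 1 / x := by
    apply intervalIntegral.integral_mono_on hp1 (fgood_int h hp0 hp1 le_rfl) (hci _)
    intro x hx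
    have hx0 : 0 < x := hp0.trans_le hx.1
    apply div_le_div_of_nonneg_right _ hx0.le
    exact h.mono ⟨hx0, hx.2⟩ ⟨by norm_num, by norm_num⟩ hx.2
  rw [hlog] at u1 u2
  rw [hP1]
  constructor <;> linarith

/-- purely numerical part -/
lemma farey_numeric (c : ℕ → ℝ) (M : ℕ → ℕ → ℝ) (hc0 : ∀ n, 0 ≤ c n) (hc : Antitone c)
    (hM0 : ∀ n, M n 0 = 0)
    (h1 : ∀ n k : ℕ, M (n+1) k + (Real.log (k+2) - Real.log (k+1)) * c (n+1) ≤ M n (k+1))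
    (h2 : ∀ n k : ℕ, M n (k+1) ≤ M (n+1) k + (Real.log (k+2) - Real.log (k+1)) * c n)
    (hM : Tendsto (fun k => M 0 k) atTop (nhds 1)) :
    Tendsto (fun n : ℕ => Real.log (n+1) * c n) atTop (nhds 1) := by
  have hw0 : ∀ k : ℕ, 0 ≤ Real.log ((k:ℝ)+2) - Real.log (k+1) := by
    intro k
    have : Real.log ((k:ℝ)+1) ≤ Real.log (k+2) := Real.log_le_log (by positivity) (by linarith)
    linarith
  have hw1 : ∀ k : ℕ, Real.log ((k:ℝ)+2) - Real.log (k+1) ≤ 1/((k:ℝ)+1) := by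
    intro k
    rw [← Real.log_div (by positivity) (by positivity)]
    have := Real.log_le_sub_one_of_pos (x := ((k:ℝ)+2)/(k+1)) (by positivity)
    refine this.trans (le_of_eq ?_)
    field_simp; ring
  have up : ∀ k i : ℕ, Real.log (k+1) * c (i+k) ≤ M i k := by
    intro k
    induction k with
    | zero => intro i; simp [hM0]
    | succ k ih =>
      intro i
      have a := ih (i+1)
      have b := h1 i k
      have d := mul_le_mul_of_nonneg_left (hc (show i+1 ≤ i+1+k by omega)) (hw0 k)
      have e : i + (k+1) = i+1+k := by omega
      rw [e]; push_cast
      have e' : (k:ℝ)+1+1 = k+2 := by ring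
      rw [e']; nlinarith
  have lo : ∀ k i : ℕ, M i k ≤ Real.log (k+1) * c i := by
    intro k
    induction k with
    | zero => intro i; simp [hM0]
    | succ k ih =>
      intro i
      have a := ih (i+1)
      have b := h2 i k
      have hl : 0 ≤ Real.log ((k:ℝ)+1) := Real.log_nonneg (by linarith [Nat.cast_nonneg (α := ℝ) k])
      have d := mul_le_mul_of_nonneg_left (hc (show i ≤ i+1 by omega)) hl
      push_cast
      have e' : (k:ℝ)+1+1 = k+2 := by ring
      rw [e']; nlinarith
  have big : ∀ N k : ℕ, M 0 (k+N) ≤ M N k + 1/((k:ℝ)+1) * ∑ j ∈ Finset.range N, c j := by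
    intro N
    induction N with
    | zero => intro k; simp
    | succ N ih =>
      intro k
      have a := ih (k+1)
      have b := h2 N k
      have d := mul_le_mul_of_nonneg_right (hw1 k) (hc0 N)
      have hS : 0 ≤ ∑ j ∈ Finset.range N, c j := Finset.sum_nonneg (fun j _ => hc0 j)
      have f : 1/(((k+1:ℕ):ℝ)+1) * ∑ j ∈ Finset.range N, c j
          ≤ 1/((k:ℝ)+1) * ∑ j ∈ Finset.range N, c j := by
        apply mul_le_mul_of_nonneg_right _ hS
        push_cast
        gcongr
        linarith
      rw [Finset.sum_range_succ, mul_add, show k + (N+1) = k+1+N by omega]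
      linarith
  have hlogT : Tendsto (fun n : ℕ => Real.log ((n:ℝ)+1)) atTop atTop :=
    Real.tendsto_log_atTop.comp (tendsto_atTop_add_const_right _ _ tendsto_natCast_atTop_atTop)
  have hcT : Tendsto c atTop (nhds 0) := by
    have hq : Tendsto (fun n : ℕ => M 0 n / Real.log ((n:ℝ)+1)) atTop (nhds 0) :=
      hM.div_atTop hlogT
    refine squeeze_zero' (Eventually.of_forall hc0) ?_ hq
    filter_upwards [hlogT.eventually_gt_atTop 0] with n hn
    rw [le_div_iff₀ hn, mul_comm]
    simpa using up n 0
  have hces := hcT.cesaro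
  have hM2 : Tendsto (fun n : ℕ => M 0 (n+n)) atTop (nhds 1) :=
    hM.comp (tendsto_atTop_mono (fun n => Nat.le_add_left n n) tendsto_id)
  have hlow : Tendsto (fun n : ℕ => M 0 (n+n) - (n:ℝ)⁻¹ * ∑ j ∈ Finset.range n, c j) atTop (nhds 1) := by
    simpa using hM2.sub hces
  refine tendsto_of_tendsto_of_tendsto_of_le_of_le' hlow hM ?_ ?_
  · filter_upwards [eventually_gt_atTop 0] with n hn
    have hn' : (0:ℝ) < n := by exact_mod_cast hn
    have a := big n n
    have b := lo n n
    have hS : 0 ≤ ∑ j ∈ Finset.range n, c j := Finset.sum_nonneg (fun j _ => hc0 j)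
    have f : 1/((n:ℝ)+1) * ∑ j ∈ Finset.range n, c j ≤ (n:ℝ)⁻¹ * ∑ j ∈ Finset.range n, c j := by
      apply mul_le_mul_of_nonneg_right _ hS
      rw [one_div]; gcongr; linarith
    linarith
  · exact Eventually.of_forall (fun n => by simpa using up n 0)

lemma farey_limit (f g : ℝ → ℝ) (hfg : ∀ x ∈ Set.Ioo (0:ℝ) 1, f x = g x)
    (hf_density : ∫ x, f x ∂fareyMeasure = 1) :
    Tendsto (fun k : ℕ => ∫ x in (1/((k:ℝ)+1))..1, g x / x) atTop (nhds 1) := by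
  have hint : Integrable f fareyMeasure := by
    by_contra hcon
    rw [integral_undef hcon] at hf_density
    exact zero_ne_one hf_density
  have hmeas : Measurable (fun x : ℝ => ENNReal.ofReal (1 / x)) := by fun_prop
  have hlt : ∀ᵐ x ∂(volume.restrict (Set.Icc (0 : ℝ) 1)), ENNReal.ofReal (1 / x) < ⊤ :=
    Eventually.of_forall (fun x => ENNReal.ofReal_lt_top)
  unfold fareyMeasure at hint hf_density
  rw [integrable_withDensity_iff_integrable_smul' hmeas hlt] at hint
  rw [integral_withDensity_eq_integral_toReal_smul hmeas hlt] at hf_density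
  have hae : (fun x => (ENNReal.ofReal (1 / x)).toReal • f x)
      =ᵐ[volume.restrict (Set.Icc (0 : ℝ) 1)] (fun x => g x / x) := by
    rw [← Measure.restrict_congr_set (Ioo_ae_eq_Icc (α := ℝ) (μ := volume) (a := 0) (b := 1))]
    filter_upwards [ae_restrict_mem measurableSet_Ioo] with x hx
    have := hx.1
    rw [ENNReal.toReal_ofReal (by positivity), hfg x hx, smul_eq_mul]
    ring
  rw [integral_congr_ae hae] at hf_density
  have hint2 : IntegrableOn (fun x => g x / x) (Set.uIcc (0:ℝ) 1) volume := by
    rw [Set.uIcc_of_le zero_le_one]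
    exact hint.congr hae
  have hcont := intervalIntegral.continuousOn_primitive_interval_left hint2
  have h0 := hcont 0 Set.left_mem_uIcc
  have hv : ∫ x in (0:ℝ)..1, g x / x = 1 := by
    rw [intervalIntegral.integral_of_le zero_le_one, ← integral_Icc_eq_integral_Ioc]
    exact hf_density
  unfold ContinuousWithinAt at h0
  simp only [hv] at h0
  refine h0.comp (f := fun k : ℕ => 1/((k:ℝ)+1)) ?_
  refine tendsto_nhdsWithin_iff.2 ⟨tendsto_one_div_add_atTop_nhds_zero_nat, ?_⟩
  refine Eventually.of_forall (fun k => ?_)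
  rw [Set.uIcc_of_le zero_le_one]
  have hk : (0:ℝ) ≤ k := Nat.cast_nonneg k
  exact ⟨by positivity, by rw [div_le_one (by linarith)]; linarith⟩

lemma fgood_update (f : ℝ → ℝ) (hn : ∀ x ∈ Set.Ioo (0 : ℝ) 1, 0 ≤ f x)
    (hm : MonotoneOn f (Set.Ioo (0:ℝ) 1)) (hc : ConcaveOn ℝ (Set.Ioo (0:ℝ) 1) f) :
    FGood (Function.update f 1 (2 * f (1/2))) := by
  have e : ∀ x ∈ Set.Ioo (0:ℝ) 1, Function.update f 1 (2 * f (1/2)) x = f x :=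
    fun x hx => Function.update_of_ne hx.2.ne _ _
  have hb : ∀ x ∈ Set.Ioo (0:ℝ) 1, f x ≤ 2 * f (1/2) := by
    intro x hx
    have hx' : 1 - x ∈ Set.Ioo (0:ℝ) 1 := ⟨by linarith [hx.2], by linarith [hx.1]⟩
    have := hc.2 hx hx' (show (0:ℝ) ≤ 1/2 by norm_num) (show (0:ℝ) ≤ 1/2 by norm_num)
      (by norm_num)
    simp only [smul_eq_mul] at this
    rw [show 1/2 * x + 1/2 * (1 - x) = 1/2 by ring] at this
    linarith [hn _ hx']
  refine ⟨fun x hx => by rw [e x hx]; exact hn x hx, ?_, ?_⟩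
  · intro x hx y hy hxy
    rcases eq_or_lt_of_le hy.2 with rfl | hy1
    · rcases eq_or_lt_of_le hx.2 with rfl | hx1
      · exact le_rfl
      · rw [e x ⟨hx.1, hx1⟩, Function.update_self]
        exact hb x ⟨hx.1, hx1⟩
    · have hx1 := hxy.trans_lt hy1
      rw [e x ⟨hx.1, hx1⟩, e y ⟨hy.1, hy1⟩]
      exact hm ⟨hx.1, hx1⟩ ⟨hy.1, hy1⟩ hxy
  · exact hc.congr (fun x hx => (e x hx).symm)

lemma farey_eqOn (f g : ℝ → ℝ) (h : ∀ x ∈ Set.Ioo (0:ℝ) 1, f x = g x) :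
    ∀ x ∈ Set.Ioc (0:ℝ) 1, fareyTransfer f x = fareyTransfer g x := by
  intro x hx
  have hx0 := hx.1
  unfold fareyTransfer
  rw [h (x/(x+1)) ⟨by positivity, by rw [div_lt_one (by linarith)]; linarith⟩,
    h (1/(x+1)) ⟨by positivity, by rw [div_lt_one (by linarith)]; linarith⟩]

lemma farey_iter_eqOn (f g : ℝ → ℝ) (h : ∀ x ∈ Set.Ioo (0:ℝ) 1, f x = g x) (n : ℕ) :
    ∀ x ∈ Set.Ioo (0:ℝ) 1, (fareyTransfer^[n] f) x = (fareyTransfer^[n] g) x := by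
  induction n with
  | zero => exact h
  | succ n ih =>
    intro x hx
    rw [Function.iterate_succ_apply', Function.iterate_succ_apply']
    exact farey_eqOn _ _ ih x ⟨hx.1, hx.2.le⟩

lemma farey_log_ratio : Tendsto (fun n : ℕ => Real.log ((n:ℝ)+1) / Real.log n) atTop (nhds 1) := by
  have hlog : Tendsto (fun n : ℕ => Real.log (n:ℝ)) atTop atTop :=
    Real.tendsto_log_atTop.comp tendsto_natCast_atTop_atTop
  have h2 : Tendsto (fun n : ℕ => 1 + 1 / Real.log (n:ℝ)) atTop (nhds 1) := by
    simpa using (tendsto_const_nhds (x := (1:ℝ))).add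
      ((tendsto_const_nhds (x := (1:ℝ))).div_atTop hlog)
  refine tendsto_of_tendsto_of_tendsto_of_le_of_le' tendsto_const_nhds h2 ?_ ?_
  · filter_upwards [hlog.eventually_gt_atTop 0, eventually_gt_atTop 0] with n hn hn0
    have : (0:ℝ) < n := by exact_mod_cast hn0
    rw [le_div_iff₀ hn, one_mul]
    exact Real.log_le_log this (by linarith)
  · filter_upwards [hlog.eventually_gt_atTop 0, eventually_gt_atTop 0] with n hn hn0
    have h1 : (1:ℝ) ≤ n := by exact_mod_cast hn0
    rw [div_le_iff₀ hn, add_mul, one_mul, div_mul_cancel₀ _ hn.ne']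
    have e : Real.log ((n:ℝ)+1) - Real.log n ≤ 1 := by
      rw [← Real.log_div (by positivity) (by positivity)]
      have := Real.log_le_sub_one_of_pos (x := ((n:ℝ)+1)/n) (by positivity)
      refine this.trans ?_
      rw [sub_le_iff_le_add, div_le_iff₀ (by linarith)]
      linarith
    linarith

/-- The set `A₁ = (1/2,1]` is uniformly returning (for the Farey map) for every `f` in
the class `D`: there is a positive increasing sequence `bₙ ∼ log n` with
`bₙ · T̂ⁿ f → 1` uniformly on `A₁` (off a null set). -/
theorem A1_uniformly_returning (f : ℝ → ℝ)
    (hf_nonneg : ∀ x ∈ Set.Ioo (0 : ℝ) 1, 0 ≤ f x)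
    (hf_density : ∫ x, f x ∂fareyMeasure = 1)
    (hf_smooth : ContDiffOn ℝ 2 f (Set.Ioo (0 : ℝ) 1))
    (hf_deriv : ∀ x ∈ Set.Ioo (0 : ℝ) 1, 0 < deriv f x)
    (hf_deriv2 : ∀ x ∈ Set.Ioo (0 : ℝ) 1, deriv (deriv f) x ≤ 0) :
    ∃ b : ℕ → ℝ, (∀ n, 0 < b n) ∧ Monotone b ∧
      Tendsto (fun n : ℕ => b n / Real.log n) atTop (nhds 1) ∧
      ∃ N : Set ℝ, fareyMeasure N = 0 ∧
        TendstoUniformlyOn (fun n x => b n * (fareyTransfer^[n] f) x)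
          (fun _ => 1) atTop (Set.Ioc (1 / 2 : ℝ) 1 \ N) := by
  have hmono : MonotoneOn f (Set.Ioo (0:ℝ) 1) := by
    apply monotoneOn_of_deriv_nonneg (convex_Ioo _ _) hf_smooth.continuousOn
    · rw [interior_Ioo]; exact hf_smooth.differentiableOn (by norm_num)
    · rw [interior_Ioo]; exact fun x hx => (hf_deriv x hx).le
  have hconc : ConcaveOn ℝ (Set.Ioo (0:ℝ) 1) f := by
    apply concaveOn_of_deriv2_nonpos' (convex_Ioo _ _)
    · exact hf_smooth.differentiableOn (by norm_num)
    · have h := (contDiffOn_succ_iff_deriv_of_isOpen (n := 1) isOpen_Ioo).1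
        (by simpa [one_add_one_eq_two] using hf_smooth)
      exact h.2.2.differentiableOn (by norm_num)
    · exact hf_deriv2
  set g := Function.update f 1 (2 * f (1/2)) with hg
  have hG : FGood g := fgood_update f hf_nonneg hmono hconc
  have hfg : ∀ x ∈ Set.Ioo (0:ℝ) 1, f x = g x :=
    fun x hx => (Function.update_of_ne hx.2.ne _ _).symm
  have hGn : ∀ n, FGood (fareyTransfer^[n] g) := by
    intro n
    induction n with
    | zero => exact hG
    | succ n ih => rw [Function.iterate_succ_apply']; exact fgood_transfer ih
  have hsucc : ∀ n, (fareyTransfer^[n+1] g) 1 = (fareyTransfer^[n] g) (1/2) := by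
    intro n
    rw [Function.iterate_succ_apply']
    unfold fareyTransfer; norm_num
  have hhalf : (1/2:ℝ) ∈ Set.Ioc (0:ℝ) 1 := ⟨by norm_num, by norm_num⟩
  have hone : (1:ℝ) ∈ Set.Ioc (0:ℝ) 1 := ⟨by norm_num, by norm_num⟩
  have hanti : Antitone (fun n => (fareyTransfer^[n] g) 1) := by
    apply antitone_nat_of_succ_le
    intro n
    rw [hsucc]
    exact (hGn n).mono hhalf hone (by norm_num)
  have hnum : Tendsto (fun n : ℕ => Real.log (n+1) * (fareyTransfer^[n] g) 1) atTop (nhds 1) := by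
    refine farey_numeric (fun n => (fareyTransfer^[n] g) 1)
      (fun n k => ∫ x in (1/((k:ℝ)+1))..1, (fareyTransfer^[n] g) x / x) ?_ hanti ?_ ?_ ?_ ?_
    · intro n
      exact ((hGn n).nn (1/2) ⟨by norm_num, by norm_num⟩).trans
        ((hGn n).mono hhalf hone (by norm_num))
    · intro n; simp
    · intro n k
      have := (farey_step (hGn n) k).1
      rw [← Function.iterate_succ_apply' fareyTransfer n g] at this
      have e : ((k+1:ℕ):ℝ)+1 = (k:ℝ)+2 := by push_cast; ring
      simp only [e]
      exact this
    · intro n k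
      have := (farey_step (hGn n) k).2
      rw [← Function.iterate_succ_apply' fareyTransfer n g] at this
      have e : ((k+1:ℕ):ℝ)+1 = (k:ℝ)+2 := by push_cast; ring
      simp only [e]
      exact this
    · exact farey_limit f g hfg hf_density
  have hlog2 : Tendsto (fun n : ℕ => Real.log ((n:ℝ)+2) / Real.log ((n:ℝ)+1)) atTop (nhds 1) := by
    have := farey_log_ratio.comp (tendsto_add_atTop_nat 1)
    refine this.congr (fun n => ?_)
    simp only [Function.comp]
    push_cast
    rw [add_assoc, one_add_one_eq_two]
  have hup : Tendsto (fun n : ℕ => Real.log ((n:ℝ)+2) * (fareyTransfer^[n] g) 1) atTop (nhds 1) := by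
    have := hlog2.mul hnum
    rw [one_mul] at this
    refine this.congr' ?_
    filter_upwards [eventually_gt_atTop 0] with n hn
    have hn' : (0:ℝ) < n := by exact_mod_cast hn
    have : 0 < Real.log ((n:ℝ)+1) := Real.log_pos (by linarith)
    field_simp
  have hlow : Tendsto (fun n : ℕ => Real.log ((n:ℝ)+2) * (fareyTransfer^[n+1] g) 1)
      atTop (nhds 1) := by
    have := hnum.comp (tendsto_add_atTop_nat 1)
    refine this.congr (fun n => ?_)
    simp only [Function.comp]
    push_cast
    rw [add_assoc, one_add_one_eq_two]
  have hpos : ∀ n : ℕ, 0 < Real.log ((n:ℝ)+2) :=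
    fun n => Real.log_pos (by linarith [Nat.cast_nonneg (α := ℝ) n])
  refine ⟨fun n => Real.log ((n:ℝ)+2), hpos, ?_, ?_, ∅, measure_empty, ?_⟩
  · intro a b hab
    have : (a:ℝ) ≤ b := by exact_mod_cast hab
    exact Real.log_le_log (by positivity) (by linarith)
  · have := hlog2.mul farey_log_ratio
    rw [one_mul] at this
    refine this.congr' ?_
    filter_upwards [eventually_gt_atTop 0] with n hn
    have hn' : (0:ℝ) < n := by exact_mod_cast hn
    have : 0 < Real.log ((n:ℝ)+1) := Real.log_pos (by linarith)
    rw [div_mul_div_cancel₀ this.ne']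
  · rw [Metric.tendstoUniformlyOn_iff]
    intro ε hε
    have u := (Metric.tendsto_nhds.1 hup) ε hε
    have l := (Metric.tendsto_nhds.1 hlow) ε hε
    filter_upwards [u, l, eventually_gt_atTop 0] with n hu hl hn x hx
    obtain ⟨m, rfl⟩ : ∃ m, n = m + 1 := ⟨n - 1, by omega⟩
    have hx' := hx.1
    have hxI : x ∈ Set.Ioc (0:ℝ) 1 := ⟨by linarith [hx'.1], hx'.2⟩
    have e : (fareyTransfer^[m+1] f) x = (fareyTransfer^[m+1] g) x := by
      rw [Function.iterate_succ_apply', Function.iterate_succ_apply']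
      exact farey_eqOn _ _ (farey_iter_eqOn f g hfg m) x hxI
    rw [e]
    have b1 := (hGn (m+1)).mono hhalf hxI hx'.1.le
    have b2 := (hGn (m+1)).mono hxI hone hx'.2
    rw [← hsucc] at b1
    have c1 := mul_le_mul_of_nonneg_left b1 (hpos (m+1)).le
    have c2 := mul_le_mul_of_nonneg_left b2 (hpos (m+1)).le
    rw [Real.dist_eq, abs_lt] at hu hl ⊢
    constructor <;> linarith [hu.1, hu.2, hl.1, hl.2]
end

section
/- Let X_n(x) = max{S_k(x) : S_k(x) ≤ n, k ≥ 0} where S_k = a_1 + ⋯ + a_k are continued fraction digit sums. Then log(n - X_n)/log(n) converges in distribution, with respect to Lebesgue measure on [0,1], to a random variable uniformly distributed on [0,1]. -/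
open MeasureTheory Filter

/-- The digit sum `S_k = a_1 + ⋯ + a_k` of continued fraction digits, `a_{i+1}(x) =
⌊1 / Gⁱ(x)⌋`. -/
noncomputable def cfDigitSum (x : ℝ) (k : ℕ) : ℕ :=
  ∑ i ∈ Finset.range k, (⌊1 / (gaussMap^[i] x)⌋).toNat

/-- `X_n(x) = max{S_k(x) : S_k(x) ≤ n, k ∈ ℕ₀}`. -/
noncomputable def Xproc (n : ℕ) (x : ℝ) : ℕ :=
  sSup {m : ℕ | m ≤ n ∧ ∃ k : ℕ, cfDigitSum x k = m}


/-! ### Farey densities -/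

noncomputable def fg : ℕ → ℝ → ℝ
  | 0 => fun y => y
  | n + 1 => fun y => (fg n (y / (1 + y)) + y * fg n (1 / (1 + y))) / (1 + y)

noncomputable def fW : ℕ → ℝ → ℝ
  | 0 => fun y => y
  | n + 1 => fun y => fW n (y / (1 + y)) + 1 - fW n (1 / (1 + y))

noncomputable def fF (x : ℝ) : ℝ := if x < 1 / 2 then x / (1 - x) else (1 - x) / x

lemma s_mem {y : ℝ} (h0 : 0 ≤ y) (h1 : y ≤ 1) : 0 ≤ y / (1 + y) ∧ y / (1 + y) ≤ 1 / 2 := by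
  refine ⟨by positivity, ?_⟩
  rw [div_le_div_iff₀ (by linarith) (by norm_num)]; linarith

lemma r_mem {y : ℝ} (h0 : 0 ≤ y) (h1 : y ≤ 1) : 1 / 2 ≤ 1 / (1 + y) ∧ 1 / (1 + y) ≤ 1 := by
  constructor
  · rw [div_le_div_iff₀ (by norm_num) (by linarith)]; linarith
  · rw [div_le_one (by linarith)]; linarith

def GoodF (g : ℝ → ℝ) : Prop :=
  (∀ y, 0 ≤ y → y ≤ 1 → 0 ≤ g y) ∧
  (∀ x y, 0 ≤ x → x ≤ y → y ≤ 1 → g x ≤ g y) ∧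
  (∀ x y p q, 0 ≤ x → x ≤ 1 → 0 ≤ y → y ≤ 1 → 0 ≤ p → 0 ≤ q → p + q = 1 →
    p * g x + q * g y ≤ g (p * x + q * y))

lemma good_step {g : ℝ → ℝ} (hg : GoodF g) :
    GoodF (fun y => (g (y / (1 + y)) + y * g (1 / (1 + y))) / (1 + y)) := by
  obtain ⟨h0, hm, hc⟩ := hg
  set H : ℝ → ℝ := fun s => (1 - s) * g s + s * g (1 - s) with hH
  have hHc : ∀ x y p q, 0 ≤ x → x ≤ 1 → 0 ≤ y → y ≤ 1 → 0 ≤ p → 0 ≤ q → p + q = 1 →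
      p * H x + q * H y ≤ H (p * x + q * y) := by
    intro x y p q hx hx1 hy hy1 hp hq hpq
    have e1 := hc x y p q hx hx1 hy hy1 hp hq hpq
    have e2 := hc (1 - x) (1 - y) p q (by linarith) (by linarith) (by linarith) (by linarith)
      hp hq hpq
    have hq' : q = 1 - p := by linarith
    have e3 : p * (1 - x) + q * (1 - y) = 1 - (p * x + q * y) := by rw [hq']; ring
    rw [e3] at e2
    have b1 : 0 ≤ p * x + q * y := by positivity
    have b2 : 0 ≤ 1 - (p * x + q * y) := by
      rw [← e3]
      have : 0 ≤ 1 - x := by linarith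
      have : 0 ≤ 1 - y := by linarith
      positivity
    have m1 := mul_le_mul_of_nonneg_left e1 b2
    have m2 := mul_le_mul_of_nonneg_left e2 b1
    have k1 : 0 ≤ (x - y) * (g x - g y) := by
      rcases le_total x y with h | h
      · have := hm x y hx h hy1
        exact mul_nonneg_of_nonpos_of_nonpos (by linarith) (by linarith)
      · have := hm y x hy h hx1
        exact mul_nonneg (by linarith) (by linarith)
    have k2 : 0 ≤ (y - x) * (g (1 - x) - g (1 - y)) := by
      rcases le_total x y with h | h
      · have := hm (1 - y) (1 - x) (by linarith) (by linarith) (by linarith)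
        exact mul_nonneg (by linarith) (by linarith)
      · have := hm (1 - x) (1 - y) (by linarith) (by linarith) (by linarith)
        exact mul_nonneg_of_nonpos_of_nonpos (by linarith) (by linarith)
    have k3 := mul_nonneg (mul_nonneg hp hq) k1
    have k4 := mul_nonneg (mul_nonneg hp hq) k2
    simp only [hH]
    subst hq'
    nlinarith [m1, m2, k3, k4]
  have hHm : ∀ x y, 0 ≤ x → x ≤ y → y ≤ 1 / 2 → H x ≤ H y := by
    intro x y hx hxy hy
    rcases eq_or_lt_of_le hxy with h | h
    · rw [h]
    have hd : 0 < 1 - 2 * x := by linarith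
    have := hHc x (1 - x) ((1 - x - y) / (1 - 2 * x)) ((y - x) / (1 - 2 * x)) hx (by linarith)
      (by linarith) (by linarith) (div_nonneg (by linarith) hd.le)
      (div_nonneg (by linarith) hd.le) (by rw [← add_div, div_eq_one_iff_eq hd.ne']; ring)
    have e : (1 - x - y) / (1 - 2 * x) * x + (y - x) / (1 - 2 * x) * (1 - x) = y := by
      rw [div_mul_eq_mul_div, div_mul_eq_mul_div, ← add_div, div_eq_iff hd.ne']; ring
    have e2 : H (1 - x) = H x := by simp only [hH]; rw [sub_sub_cancel]; ring
    rw [e, e2, ← add_mul, ← add_div] at this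
    have e4 : (1 - x - y + (y - x)) / (1 - 2 * x) = 1 := by
      rw [div_eq_one_iff_eq hd.ne']; ring
    rwa [e4, one_mul] at this
  have key : ∀ y, 0 ≤ y → (g (y / (1 + y)) + y * g (1 / (1 + y))) / (1 + y) = H (y / (1 + y)) := by
    intro y hy
    have hy' : 0 < 1 + y := by linarith
    have e : 1 - y / (1 + y) = 1 / (1 + y) := by field_simp; ring
    simp only [hH]; rw [e]; field_simp
  have hs : ∀ x y : ℝ, 0 ≤ x → x ≤ y → x / (1 + x) ≤ y / (1 + y) := by
    intro x y hx hxy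
    rw [div_le_div_iff₀ (by linarith) (by linarith)]; nlinarith
  refine ⟨?_, ?_, ?_⟩
  · intro y hy hy1
    have a := h0 _ (s_mem hy hy1).1 (by linarith [(s_mem hy hy1).2])
    have b := h0 _ (by linarith [(r_mem hy hy1).1]) (r_mem hy hy1).2
    positivity
  · intro x y hx hxy hy
    simp only
    rw [key x hx, key y (hx.trans hxy)]
    exact hHm _ _ (s_mem hx (hxy.trans hy)).1 (hs x y hx hxy) (s_mem (hx.trans hxy) hy).2
  · intro x y p q hx hx1 hy hy1 hp hq hpq
    have hz : 0 ≤ p * x + q * y := by positivity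
    have hz1 : p * x + q * y ≤ 1 := by nlinarith
    simp only
    rw [key x hx, key y hy, key _ hz]
    have sx := s_mem hx hx1
    have sy := s_mem hy hy1
    refine (hHc _ _ p q sx.1 (by linarith) sy.1 (by linarith) hp hq hpq).trans ?_
    refine hHm _ _ (add_nonneg (mul_nonneg hp sx.1) (mul_nonneg hq sy.1)) ?_ (s_mem hz hz1).2
    have hx' : 0 < 1 + x := by linarith
    have hy' : 0 < 1 + y := by linarith
    have hz' : 0 < 1 + (p * x + q * y) := by linarith
    rw [le_div_iff₀ hz', ← sub_nonneg]
    have hq' : q = 1 - p := by linarith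
    have : p * x + q * y - (p * (x / (1 + x)) + q * (y / (1 + y))) * (1 + (p * x + q * y))
        = p * q * (x - y) ^ 2 / ((1 + x) * (1 + y)) := by
      subst hq'
      field_simp; ring
    rw [this]; positivity

lemma fg_good (n : ℕ) : GoodF (fg n) := by
  induction n with
  | zero =>
    refine ⟨fun y h _ => h, fun x y _ h _ => h, fun x y p q _ _ _ _ _ _ _ => le_refl _⟩
  | succ n ih => exact good_step ih

lemma fg_succ_one (n : ℕ) : fg (n + 1) 1 = fg n (1 / 2) := by
  simp only [fg]; norm_num

lemma fg_le (n : ℕ) {y : ℝ} (h0 : 0 ≤ y) (h1 : y ≤ 1) : fg n y ≤ fg n 1 :=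
  (fg_good n).2.1 y 1 h0 h1 le_rfl

lemma fg_one_anti (n : ℕ) : fg (n + 1) 1 ≤ fg n 1 := by
  rw [fg_succ_one]; exact fg_le n (by norm_num) (by norm_num)

lemma fg_one_le (n : ℕ) : fg n 1 ≤ 1 := by
  induction n with
  | zero => simp [fg]
  | succ n ih => exact (fg_one_anti n).trans ih

lemma fg_one_nonneg (n : ℕ) : 0 ≤ fg n 1 := (fg_good n).1 1 (by norm_num) le_rfl

lemma fg_lower (n : ℕ) : ∀ y, 0 ≤ y → y ≤ 1 → fg n 1 * (n * y / (1 + n * y)) ≤ fg n y := by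
  induction n with
  | zero => intro y h _; simpa [fg] using h
  | succ n ih =>
    intro y h0 h1
    have s := s_mem h0 h1
    have r := r_mem h0 h1
    have i1 := ih _ s.1 (by linarith)
    have i2 : fg (n + 1) 1 ≤ fg n (1 / (1 + y)) := by
      rw [fg_succ_one]; exact (fg_good n).2.1 _ _ (by norm_num) r.1 r.2
    have e : (n * (y / (1 + y)) / (1 + n * (y / (1 + y))) : ℝ) = n * y / (1 + (n + 1) * y) := by
      field_simp; ring
    rw [e] at i1
    have i3 : fg (n + 1) 1 * (n * y / (1 + (n + 1) * y)) ≤ fg n (y / (1 + y)) :=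
      (mul_le_mul_of_nonneg_right (fg_one_anti n) (by positivity)).trans i1
    have i4 := mul_le_mul_of_nonneg_left i2 h0
    have : fg (n + 1) y = (fg n (y / (1 + y)) + y * fg n (1 / (1 + y))) / (1 + y) := rfl
    rw [this, le_div_iff₀ (by linarith)]
    refine le_trans (le_of_eq ?_) (add_le_add i3 i4)
    push_cast
    field_simp
    ring

lemma fW_deriv (n : ℕ) : ∀ y, 0 < y → HasDerivAt (fW n) (fg n y / y) y := by
  induction n with
  | zero =>
    intro y hy
    simp only [fg, div_self hy.ne']
    exact hasDerivAt_id y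
  | succ n ih =>
    intro y hy
    have hy' : (1 + y) ≠ 0 := by positivity
    have d0 : HasDerivAt (fun z : ℝ => 1 + z) 1 y := (hasDerivAt_id y).const_add 1
    have d1 : HasDerivAt (fun z : ℝ => z / (1 + z)) ((1 * (1 + y) - y * 1) / (1 + y) ^ 2) y :=
      (hasDerivAt_id y).div d0 hy'
    have d2 : HasDerivAt (fun z : ℝ => 1 / (1 + z)) ((0 * (1 + y) - 1 * 1) / (1 + y) ^ 2) y :=
      (hasDerivAt_const y (1 : ℝ)).div d0 hy'
    have c1 := HasDerivAt.comp y (ih (y / (1 + y)) (by positivity)) d1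
    have c2 := HasDerivAt.comp y (ih (1 / (1 + y)) (by positivity)) d2
    have := (c1.add_const 1).sub c2
    refine HasDerivAt.congr_deriv this ?_
    simp only [fg]
    field_simp
    ring

lemma fW_one (n : ℕ) : fW n 1 = 1 := by
  induction n with
  | zero => rfl
  | succ n ih => simp only [fW]; norm_num

lemma fW_zero (n : ℕ) : fW n 0 = 0 := by
  induction n with
  | zero => rfl
  | succ n ih => simp only [fW]; norm_num [ih, fW_one]

lemma mono_aux {f f' : ℝ → ℝ} {a : ℝ} (ha : 0 < a) (ha1 : a ≤ 1)
    (hd : ∀ y, 0 < y → HasDerivAt f (f' y) y) (h0 : ∀ y, 0 < y → y ≤ 1 → 0 ≤ f' y) :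
    f a ≤ f 1 := by
  have : MonotoneOn f (Set.Icc a 1) := by
    apply monotoneOn_of_deriv_nonneg (convex_Icc a 1)
    · intro y hy
      exact (hd y (ha.trans_le hy.1)).continuousAt.continuousWithinAt
    · intro y hy
      rw [interior_Icc] at hy
      exact (hd y (ha.trans hy.1)).differentiableAt.differentiableWithinAt
    · intro y hy
      rw [interior_Icc] at hy
      rw [(hd y (ha.trans hy.1)).deriv]
      exact h0 y (ha.trans hy.1) hy.2.le
  exact this ⟨le_rfl, ha1⟩ ⟨ha1, le_rfl⟩ ha1

lemma fW_upper (n : ℕ) {a : ℝ} (ha : 0 < a) (ha1 : a ≤ 1) :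
    1 - fW n a ≤ fg n 1 * (- Real.log a) := by
  have := mono_aux (f := fun y => fg n 1 * Real.log y - fW n y)
    (f' := fun y => fg n 1 * y⁻¹ - fg n y / y) ha ha1
    (fun y hy => ((Real.hasDerivAt_log hy.ne').const_mul _).sub (fW_deriv n y hy))
    (fun y hy hy1 => by
      rw [← div_eq_mul_inv, ← sub_div]
      exact div_nonneg (sub_nonneg.2 (fg_le n hy.le hy1)) hy.le)
  simp only [Real.log_one, fW_one] at this
  linarith

lemma fW_lower (n : ℕ) {a : ℝ} (ha : 0 < a) (ha1 : a ≤ 1) :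
    fg n 1 * (Real.log (1 + n) - Real.log (1 + n * a)) ≤ 1 - fW n a := by
  have := mono_aux (f := fun y => fW n y - fg n 1 * Real.log (1 + n * y))
    (f' := fun y => fg n y / y - fg n 1 * ((n * 1) / (1 + n * y))) ha ha1
    (fun y hy => (fW_deriv n y hy).sub
      (((((hasDerivAt_id y).const_mul (n : ℝ)).const_add 1).log (by positivity)).const_mul _))
    (fun y hy hy1 => by
      have := fg_lower n y hy.le hy1
      rw [sub_nonneg, le_div_iff₀ hy]
      refine le_trans (le_of_eq ?_) this
      ring)
  simp only [mul_one, fW_one] at this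
  linarith

lemma fW_le_one (n : ℕ) {a : ℝ} (ha : 0 < a) (ha1 : a ≤ 1) : fW n a ≤ 1 := by
  have h := fW_lower n ha ha1
  have : 0 ≤ fg n 1 * (Real.log (1 + n) - Real.log (1 + n * a)) := by
    apply mul_nonneg (fg_one_nonneg n)
    rw [sub_nonneg]
    apply Real.log_le_log (by positivity)
    have : (n : ℝ) * a ≤ n := mul_le_of_le_one_right (by positivity) ha1
    linarith
  linarith

lemma fW_nonneg (n : ℕ) : ∀ a, 0 ≤ a → a ≤ 1 → 0 ≤ fW n a := by
  induction n with
  | zero => intro a h _; exact h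
  | succ n ih =>
    intro a h h1
    have s := s_mem h h1
    have := ih _ s.1 (by linarith)
    have := fW_le_one n (a := 1 / (1 + a)) (by positivity) (r_mem h h1).2
    simp only [fW]; linarith

lemma fW_le_mul (n : ℕ) : ∀ a, 0 ≤ a → a ≤ 1 → fW n a ≤ (n + 1) * a := by
  induction n with
  | zero => intro a h _; simp [fW]
  | succ n ih =>
    intro a h h1
    have s := s_mem h h1
    have i1 := ih _ s.1 (by linarith)
    have i2 := fW_upper n (a := 1 / (1 + a)) (by positivity) (r_mem h h1).2
    have i3 : -Real.log (1 / (1 + a)) ≤ a := by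
      rw [one_div, Real.log_inv, neg_neg]
      have := Real.log_le_sub_one_of_pos (x := 1 + a) (by positivity)
      linarith
    have i4 : fg n 1 * -Real.log (1 / (1 + a)) ≤ 1 * a := by
      have : 0 ≤ -Real.log (1 / (1 + a)) := by
        have := Real.log_nonpos (x := 1 / (1 + a)) (by positivity) (r_mem h h1).2
        linarith
      exact mul_le_mul (fg_one_le n) i3 this zero_le_one
    have i5 : (n + 1 : ℝ) * (a / (1 + a)) ≤ (n + 1) * a := by
      apply mul_le_mul_of_nonneg_left _ (by positivity)
      exact div_le_self h (by linarith)
    simp only [fW]; push_cast; linarith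

lemma fg_one_log_le (n : ℕ) : fg n 1 * Real.log (1 + n) ≤ 1 := by
  apply le_of_forall_pos_le_add
  intro ε hε
  set a : ℝ := min 1 (ε / (n + 1)) with haa
  have ha : 0 < a := by positivity
  have ha1 : a ≤ 1 := min_le_left _ _
  have ha2 : (n : ℝ) * a ≤ ε := by
    have : a ≤ ε / (n + 1) := min_le_right _ _
    rw [le_div_iff₀ (by positivity)] at this
    nlinarith
  have h1 := fW_lower n ha ha1
  have h2 := fW_nonneg n a ha.le ha1
  have h3 : Real.log (1 + n * a) ≤ n * a := by
    have := Real.log_le_sub_one_of_pos (x := 1 + n * a) (by positivity)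
    linarith
  have h0 : 0 ≤ Real.log (1 + n * a) := Real.log_nonneg (by
    have : 0 ≤ (n : ℝ) * a := by positivity
    linarith)
  have h4 : fg n 1 * Real.log (1 + n * a) ≤ 1 * ε :=
    mul_le_mul (fg_one_le n) (h3.trans ha2) h0 zero_le_one
  linarith

lemma fg_one_lower (n : ℕ) {K : ℝ} (hK : 1 ≤ K) :
    1 - 1 / K ≤ fg n 1 * (Real.log (n + 1) + Real.log K) := by
  have hp : (1 : ℝ) ≤ (n + 1) * K := by
    have : (1 : ℝ) ≤ n + 1 := by linarith [(Nat.cast_nonneg n : (0 : ℝ) ≤ n)]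
    nlinarith
  set a : ℝ := 1 / ((n + 1) * K) with haa
  have ha : 0 < a := by positivity
  have ha1 : a ≤ 1 := by rw [haa, div_le_one (by linarith)]; exact hp
  have h1 := fW_upper n ha ha1
  have h2 := fW_le_mul n a ha.le ha1
  have h3 : (n + 1 : ℝ) * a = 1 / K := by rw [haa]; field_simp
  have h4 : - Real.log a = Real.log (n + 1) + Real.log K := by
    rw [haa, one_div, Real.log_inv, neg_neg, Real.log_mul (by positivity) (by positivity)]
  rw [h4] at h1
  linarith

/-! ### Distribution of the Farey iterates -/

lemma fF_mem {x : ℝ} (h0 : 0 ≤ x) (h1 : x ≤ 1) : 0 ≤ fF x ∧ fF x ≤ 1 := by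
  unfold fF
  split_ifs with h
  · exact ⟨div_nonneg h0 (by linarith), by rw [div_le_one (by linarith)]; linarith⟩
  · push Not at h
    exact ⟨div_nonneg (by linarith) h0, by rw [div_le_one (by linarith)]; linarith⟩

lemma fF_iter_mem (n : ℕ) {x : ℝ} (h0 : 0 ≤ x) (h1 : x ≤ 1) :
    0 ≤ fF^[n] x ∧ fF^[n] x ≤ 1 := by
  induction n with
  | zero => exact ⟨h0, h1⟩
  | succ n ih => rw [Function.iterate_succ_apply']; exact fF_mem ih.1 ih.2

lemma fF_meas : Measurable fF := by
  unfold fF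
  refine Measurable.ite (measurableSet_lt measurable_id measurable_const) ?_ ?_ <;> fun_prop

lemma fF_lt {x z : ℝ} (h0 : 0 ≤ x) (h1 : x ≤ 1) (hz : 0 ≤ z) (hz1 : z ≤ 1) :
    fF x < z ↔ x < z / (1 + z) ∨ 1 / (1 + z) < x := by
  have s := s_mem hz hz1
  have r := r_mem hz hz1
  unfold fF
  split_ifs with h
  · have : ¬ (1 / (1 + z) < x) := by linarith
    rw [or_iff_left this, div_lt_iff₀ (by linarith), lt_div_iff₀ (by linarith)]
    constructor <;> intro h <;> nlinarith
  · have : ¬ (x < z / (1 + z)) := by linarith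
    rw [or_iff_right this, div_lt_iff₀ (by linarith), div_lt_iff₀ (by linarith)]
    constructor <;> intro h <;> nlinarith

lemma fF_le {x z : ℝ} (h0 : 0 ≤ x) (h1 : x ≤ 1) (hz : 0 ≤ z) (hz1 : z < 1) :
    fF x ≤ z ↔ x ≤ z / (1 + z) ∨ 1 / (1 + z) ≤ x := by
  have s : z / (1 + z) < 1 / 2 := by
    rw [div_lt_div_iff₀ (by linarith) (by norm_num)]; linarith
  have r : 1 / 2 < 1 / (1 + z) := by
    rw [div_lt_div_iff₀ (by norm_num) (by linarith)]; linarith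
  unfold fF
  split_ifs with h
  · have : ¬ (1 / (1 + z) ≤ x) := by linarith
    rw [or_iff_left this, div_le_iff₀ (by linarith), le_div_iff₀ (by linarith)]
    constructor <;> intro h <;> nlinarith
  · have : ¬ (x ≤ z / (1 + z)) := by linarith
    rw [or_iff_right this, div_le_iff₀ (by linarith), div_le_iff₀ (by linarith)]
    constructor <;> intro h <;> nlinarith

noncomputable def mu01 : Measure ℝ := volume.restrict (Set.Icc (0 : ℝ) 1)

instance : IsProbabilityMeasure mu01 := ⟨by simp [mu01]⟩

lemma mu01_ae : ∀ᵐ x ∂mu01, 0 ≤ x ∧ x ≤ 1 :=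
  ae_restrict_mem measurableSet_Icc

lemma iter_dist (n : ℕ) : ∀ z, 0 ≤ z → z ≤ 1 →
    mu01.real {x | fF^[n] x ≤ z} = fW n z ∧ mu01.real {x | fF^[n] x < z} = fW n z := by
  induction n with
  | zero =>
    intro z h0 h1
    have e1 : {x : ℝ | x ≤ z} ∩ Set.Icc 0 1 = Set.Icc 0 z := by
      ext x; simp only [Set.mem_inter_iff, Set.mem_ofPred_eq, Set.mem_Icc]
      constructor
      · rintro ⟨a, b, c⟩; exact ⟨b, a⟩
      · rintro ⟨a, b⟩; exact ⟨b, a, b.trans h1⟩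
    have e2 : {x : ℝ | x < z} ∩ Set.Icc 0 1 = Set.Ico 0 z := by
      ext x; simp only [Set.mem_inter_iff, Set.mem_ofPred_eq, Set.mem_Icc, Set.mem_Ico]
      constructor
      · rintro ⟨a, b, c⟩; exact ⟨b, a⟩
      · rintro ⟨a, b⟩; exact ⟨b, a, b.le.trans h1⟩
    simp only [Function.iterate_zero, id, fW, mu01]
    constructor
    · change (volume.restrict (Set.Icc (0:ℝ) 1)).real (Set.Iic z) = z
      rw [measureReal_restrict_apply measurableSet_Iic, show Set.Iic z ∩ Set.Icc 0 1 = Set.Icc 0 z from e1]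
      simp [h0]
    · change (volume.restrict (Set.Icc (0:ℝ) 1)).real (Set.Iio z) = z
      rw [measureReal_restrict_apply measurableSet_Iio, show Set.Iio z ∩ Set.Icc 0 1 = Set.Ico 0 z from e2]
      simp [h0]
  | succ n ih =>
    intro z h0 h1
    have hm : Measurable (fF^[n]) := fF_meas.iterate n
    have s := s_mem h0 h1
    have r := r_mem h0 h1
    have is := ih (z / (1 + z)) s.1 (by linarith)
    have ir := ih (1 / (1 + z)) (by linarith) r.2
    constructor
    · rcases eq_or_lt_of_le h1 with rfl | h1'
      · have : mu01.real {x | fF^[n + 1] x ≤ 1} = mu01.real Set.univ := by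
          apply measureReal_congr
          filter_upwards [mu01_ae] with x hx
          have := fF_iter_mem (n + 1) hx.1 hx.2
          exact propext ⟨fun _ => trivial, fun _ => this.2⟩
        rw [this, fW_one]; simp
      have e : mu01.real {x | fF^[n + 1] x ≤ z}
          = mu01.real ({x | fF^[n] x ≤ z / (1 + z)} ∪ {x | fF^[n] x < 1 / (1 + z)}ᶜ) := by
        apply measureReal_congr
        filter_upwards [mu01_ae] with x hx
        have := fF_iter_mem n hx.1 hx.2
        apply propext
        change fF^[n + 1] x ≤ z ↔ (fF^[n] x ≤ z / (1 + z) ∨ ¬ (fF^[n] x < 1 / (1 + z)))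
        rw [Function.iterate_succ_apply', fF_le this.1 this.2 h0 h1', not_lt]
      rw [e, measureReal_union _ (measurableSet_lt hm measurable_const).compl,
        probReal_compl_eq_one_sub (measurableSet_lt hm measurable_const), is.1, ir.2]
      · simp only [fW]; ring
      · rw [Set.disjoint_compl_right_iff_subset]
        intro x hx
        have : z / (1 + z) < 1 / (1 + z) := by
          apply div_lt_div_of_pos_right h1' (by linarith)
        exact lt_of_le_of_lt hx this
    · have e : mu01.real {x | fF^[n + 1] x < z}
          = mu01.real ({x | fF^[n] x < z / (1 + z)} ∪ {x | fF^[n] x ≤ 1 / (1 + z)}ᶜ) := by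
        apply measureReal_congr
        filter_upwards [mu01_ae] with x hx
        have := fF_iter_mem n hx.1 hx.2
        apply propext
        change fF^[n + 1] x < z ↔ (fF^[n] x < z / (1 + z) ∨ ¬ (fF^[n] x ≤ 1 / (1 + z)))
        rw [Function.iterate_succ_apply', fF_lt this.1 this.2 h0 h1, not_le]
      rw [e, measureReal_union _ (measurableSet_le hm measurable_const).compl,
        probReal_compl_eq_one_sub (measurableSet_le hm measurable_const), is.2, ir.1]
      · simp only [fW]; ring
      · rw [Set.disjoint_compl_right_iff_subset]
        intro x hx
        have : z / (1 + z) ≤ 1 / (1 + z) := by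
          apply div_le_div_of_nonneg_right h1 (by linarith)
        exact (lt_of_lt_of_le hx this).le

/-! ### Combinatorics of digit sums -/

def IrrU (x : ℝ) : Prop := Irrational x ∧ 0 < x ∧ x < 1

lemma dsum_succ (x : ℝ) (k : ℕ) :
    cfDigitSum x (k + 1) = (⌊1 / x⌋).toNat + cfDigitSum (gaussMap x) k := by
  unfold cfDigitSum
  rw [Finset.sum_range_succ', add_comm]
  simp [Function.iterate_succ_apply]

lemma irr_F {x : ℝ} (h : IrrU x) : IrrU (fF x) := by
  obtain ⟨hi, h0, h1⟩ := h
  have hne : x ≠ 1 / 2 := by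
    intro e; apply hi.ne_rat (1 / 2); rw [e]; norm_num
  unfold fF
  split_ifs with h
  · refine ⟨?_, div_pos h0 (by linarith), by rw [div_lt_one (by linarith)]; linarith⟩
    have : x / (1 - x) = (x⁻¹ - (1 : ℕ))⁻¹ := by
      have : 1 - x ≠ 0 := by linarith
      push_cast
      rw [← one_div, ← one_div, div_sub' h0.ne', one_div_div, mul_one]
    rw [this]
    exact ((hi.inv).sub_natCast 1).inv
  · have h' : 1 / 2 < x := lt_of_le_of_ne (not_lt.1 h) (Ne.symm hne)
    refine ⟨?_, div_pos (by linarith) h0, by rw [div_lt_one (by linarith)]; linarith⟩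
    have : (1 - x) / x = x⁻¹ - (1 : ℕ) := by push_cast; field_simp
    rw [this]
    exact (hi.inv).sub_natCast 1

lemma floor_one_le {x : ℝ} (h : IrrU x) : 1 ≤ ⌊1 / x⌋ := by
  rw [Int.le_floor, le_div_iff₀ h.2.1]; push_cast; linarith [h.2.2]

/-- positive hits -/
def Hit (x : ℝ) (v : ℕ) : Prop := ∃ k, cfDigitSum x (k + 1) = v

lemma hit_F {x : ℝ} (h : IrrU x) (v : ℕ) (hv : 1 ≤ v) : Hit (fF x) v ↔ Hit x (v + 1) := by
  have h0 := h.2.1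
  have h1 := h.2.2
  by_cases hx : x < 1 / 2
  · have e : 1 / fF x = 1 / x - 1 := by
      unfold fF; rw [if_pos hx, one_div_div]; field_simp
    have hFne : fF x ≠ 0 := (irr_F h).2.1.ne'
    have eg : gaussMap (fF x) = gaussMap x := by
      unfold gaussMap
      rw [if_neg hFne, if_neg h0.ne', e, Int.fract_sub_one]
    have ea : (⌊1 / fF x⌋).toNat + 1 = (⌊1 / x⌋).toNat := by
      have := floor_one_le (irr_F h)
      rw [e, Int.floor_sub_one] at *
      omega
    unfold Hit
    refine exists_congr fun k => ?_
    rw [dsum_succ, dsum_succ, eg]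
    omega
  · have hF : fF x = gaussMap x := by
      have hf : ⌊1 / x⌋ = 1 := by
        rw [Int.floor_eq_iff]
        constructor
        · rw [le_div_iff₀ h0]; push_cast; linarith
        · rw [div_lt_iff₀ h0]; push_cast
          have : x ≠ 1 / 2 := by
            intro e; apply h.1.ne_rat (1 / 2); rw [e]; norm_num
          have : 1 / 2 < x := lt_of_le_of_ne (not_lt.1 hx) (Ne.symm this)
          linarith
      unfold fF gaussMap
      rw [if_neg hx, if_neg h0.ne', Int.fract, hf]
      push_cast; field_simp
    have ha : (⌊1 / x⌋).toNat = 1 := by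
      have a := floor_one_le h
      have : ⌊1 / x⌋ < 2 := by
        rw [Int.floor_lt, div_lt_iff₀ h0]; push_cast
        have : x ≠ 1 / 2 := by
          intro e; apply h.1.ne_rat (1 / 2); rw [e]; norm_num
        have : 1 / 2 < x := lt_of_le_of_ne (not_lt.1 hx) (Ne.symm this)
        linarith
      omega
    unfold Hit
    constructor
    · rintro ⟨k, hk⟩
      refine ⟨k + 1, ?_⟩
      rw [dsum_succ, ha, ← hF, hk, add_comm]
    · rintro ⟨k, hk⟩
      rw [dsum_succ, ha, ← hF] at hk
      cases k with
      | zero => simp [cfDigitSum] at hk; omega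
      | succ k => exact ⟨k, by omega⟩

lemma hit_iter (m s : ℕ) : ∀ x, IrrU x →
    ((∀ v, s < v → v ≤ s + m → ¬ Hit x v) ↔ fF^[s] x < 1 / ((m : ℝ) + 1)) := by
  induction s with
  | zero =>
    intro x h
    have h0 := h.2.1
    have hfl := floor_one_le h
    have key : x < 1 / ((m : ℝ) + 1) ↔ (m : ℤ) + 1 ≤ ⌊1 / x⌋ := by
      rw [Int.le_floor, le_div_iff₀ h0, lt_div_iff₀ (by positivity)]
      push_cast
      rw [mul_comm x]
      constructor
      · exact le_of_lt
      · intro hle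
        refine lt_of_le_of_ne hle fun e => ?_
        have hx : x = ((1 / ((m : ℚ) + 1) : ℚ) : ℝ) := by
          push_cast
          rw [eq_div_iff (by positivity), mul_comm]; exact e
        exact h.1.ne_rat _ hx
    simp only [Function.iterate_zero, id]
    rw [key]
    constructor
    · intro hh
      by_contra hc
      push Not at hc
      refine hh (⌊1 / x⌋).toNat (by omega) (by omega) ⟨0, ?_⟩
      rw [dsum_succ]; simp [cfDigitSum]
    · rintro hh v hv hv2 ⟨k, hk⟩
      rw [dsum_succ] at hk
      omega
  | succ s ih =>
    intro x h
    rw [Function.iterate_succ_apply, ← ih (fF x) (irr_F h)]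
    constructor
    · intro hh v hv hv2
      rw [hit_F h v (by omega)]
      exact hh (v + 1) (by omega) (by omega)
    · intro hh v hv hv2
      obtain ⟨w, rfl⟩ : ∃ w, v = w + 1 := ⟨v - 1, by omega⟩
      rw [← hit_F h w (by omega)]
      exact hh w (by omega) (by omega)

lemma Xproc_mem (n : ℕ) (x : ℝ) : Xproc n x ≤ n ∧ ∃ k, cfDigitSum x k = Xproc n x := by
  have : Xproc n x ∈ {m : ℕ | m ≤ n ∧ ∃ k : ℕ, cfDigitSum x k = m} := by
    apply Nat.sSup_mem
    · exact ⟨0, Nat.zero_le _, 0, by simp [cfDigitSum]⟩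
    · exact ⟨n, fun m hm => hm.1⟩
  exact this

lemma Xproc_le_iff (s m : ℕ) {x : ℝ} (h : IrrU x) :
    Xproc (s + m) x ≤ s ↔ fF^[s] x < 1 / ((m : ℝ) + 1) := by
  rw [← hit_iter m s x h]
  constructor
  · rintro hX v hv hv2 ⟨k, hk⟩
    have : v ≤ Xproc (s + m) x := le_csSup ⟨s + m, fun m hm => hm.1⟩ ⟨hv2, k + 1, hk⟩
    omega
  · intro hh
    by_contra hc
    obtain ⟨h1, k, hk⟩ := Xproc_mem (s + m) x
    cases k with
    | zero => simp [cfDigitSum] at hk; omega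
    | succ k => exact hh _ (by omega) h1 ⟨k, hk⟩

lemma mu01_irr : ∀ᵐ x ∂mu01, IrrU x := by
  have h1 : ∀ᵐ x ∂(volume : Measure ℝ), Irrational x := by
    have : (volume : Measure ℝ) (Set.range ((↑) : ℚ → ℝ)) = 0 :=
      (Set.countable_range _).measure_zero _
    exact measure_eq_zero_iff_ae_notMem.1 this
  filter_upwards [ae_restrict_of_ae h1, mu01_ae] with x hx hm
  refine ⟨hx, lt_of_le_of_ne hm.1 ?_, lt_of_le_of_ne hm.2 ?_⟩
  · exact fun e => hx.ne_zero e.symm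
  · exact hx.ne_one

lemma prob_eq (s m : ℕ) : mu01.real {x | s < Xproc (s + m) x} = 1 - fW s (1 / ((m : ℝ) + 1)) := by
  have hm : Measurable (fF^[s]) := fF_meas.iterate s
  have h1 : (1 : ℝ) / (m + 1) ≤ 1 := by
    rw [div_le_one (by positivity)]; linarith [(Nat.cast_nonneg m : (0 : ℝ) ≤ m)]
  rw [← (iter_dist s (1 / ((m : ℝ) + 1)) (by positivity) h1).2,
    ← probReal_compl_eq_one_sub (measurableSet_lt hm measurable_const)]
  apply measureReal_congr
  filter_upwards [mu01_irr] with x hx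
  apply propext
  change s < Xproc (s + m) x ↔ ¬ (fF^[s] x < 1 / ((m : ℝ) + 1))
  rw [← Xproc_le_iff s m hx, not_le]

lemma vol_eq (n : ℕ) (t : ℝ) :
    (volume {x ∈ Set.Icc (0 : ℝ) 1 |
      Real.log ((n : ℝ) - (Xproc n x : ℝ)) / Real.log n ≤ t}).toReal
    = mu01.real {x | Real.log ((n : ℝ) - (Xproc n x : ℝ)) / Real.log n ≤ t} := by
  rw [mu01, Measure.real, Measure.restrict_apply' measurableSet_Icc]
  congr 2
  ext x
  exact and_comm

lemma event_iff {n X : ℕ} {t : ℝ} (hn : 2 ≤ n) (ht : 0 ≤ t) (hX : X ≤ n)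
    (hp : ⌊(n : ℝ) ^ t⌋₊ + 1 ≤ n) :
    Real.log ((n : ℝ) - (X : ℝ)) / Real.log n ≤ t ↔ n - (⌊(n : ℝ) ^ t⌋₊ + 1) < X := by
  have hn' : (1 : ℝ) < n := by exact_mod_cast hn
  have hL : 0 < Real.log n := Real.log_pos hn'
  have e : n - (⌊(n : ℝ) ^ t⌋₊ + 1) < X ↔ n - X ≤ ⌊(n : ℝ) ^ t⌋₊ := by omega
  have hnt : (0 : ℝ) < (n : ℝ) ^ t := by positivity
  rw [e, Nat.le_floor_iff hnt.le, Nat.cast_sub hX, div_le_iff₀ hL, ← Real.log_rpow (by linarith)]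
  rcases eq_or_lt_of_le hX with h | h
  · subst h
    simp only [sub_self, Real.log_zero]
    exact ⟨fun _ => hnt.le, fun _ => Real.log_nonneg (Real.one_le_rpow hn'.le ht)⟩
  · have : (X : ℝ) < n := by exact_mod_cast h
    exact Real.log_le_log_iff (by linarith) hnt

lemma bounds {n : ℕ} {t : ℝ} (hn : 3 ≤ n) (ht : 0 ≤ t)
    (hh : (n : ℝ) ^ t ≤ n / 2) :
    (1 - 1 / Real.log n) / (1 + Real.log (Real.log n) / Real.log n)
        * max 0 (t - 2 * Real.log 2 / Real.log n) ≤
      mu01.real {x | Real.log ((n : ℝ) - (Xproc n x : ℝ)) / Real.log n ≤ t} ∧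
    mu01.real {x | Real.log ((n : ℝ) - (Xproc n x : ℝ)) / Real.log n ≤ t} ≤
      (t + Real.log 3 / Real.log n) / (1 - Real.log 2 / Real.log n) := by
  have hn' : (3 : ℝ) ≤ n := by exact_mod_cast hn
  have hn0 : (0 : ℝ) < n := by linarith
  set L := Real.log n with hLdef
  have hL1 : 1 ≤ L := by
    rw [hLdef, Real.le_log_iff_exp_le hn0]
    linarith [Real.exp_one_lt_d9]
  have hL2 : Real.log 2 < L := Real.log_lt_log (by norm_num) (by linarith)
  set p := ⌊(n : ℝ) ^ t⌋₊ with hp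
  have hnt1 : 1 ≤ (n : ℝ) ^ t := Real.one_le_rpow (by linarith) ht
  have hple : (p : ℝ) ≤ (n : ℝ) ^ t := Nat.floor_le (by linarith)
  have hplt : (n : ℝ) ^ t < p + 1 := Nat.lt_floor_add_one _
  have hpn : p + 1 ≤ n := by
    have : (p : ℝ) + 1 ≤ n := by linarith
    exact_mod_cast this
  obtain ⟨N, hN⟩ : ∃ N, n = N + (p + 1) := ⟨n - (p + 1), by omega⟩
  have hNr : (n : ℝ) = N + (p + 1) := by exact_mod_cast hN
  have hset : {x | Real.log ((n : ℝ) - (Xproc n x : ℝ)) / L ≤ t}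
      = {x | N < Xproc (N + (p + 1)) x} := by
    ext x
    change Real.log ((n : ℝ) - (Xproc n x : ℝ)) / L ≤ t ↔ N < Xproc (N + (p + 1)) x
    rw [event_iff (by omega) ht (Xproc_mem n x).1 hpn, ← hN]
    have : n - (⌊(n : ℝ) ^ t⌋₊ + 1) = N := by omega
    rw [this]
  rw [hset, prob_eq]
  have hcast : ((p + 1 : ℕ) : ℝ) + 1 = p + 2 := by push_cast; ring
  rw [hcast]
  have ha : (0 : ℝ) < 1 / (p + 2) := by positivity
  have ha1 : (1 : ℝ) / (p + 2) ≤ 1 := by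
    rw [div_le_one (by positivity)]; linarith [(Nat.cast_nonneg p : (0 : ℝ) ≤ p)]
  have hlogt : Real.log ((n : ℝ) ^ t) = t * L := Real.log_rpow hn0 t
  have hm1 : t * L ≤ Real.log (p + 2) := by
    rw [← hlogt]; exact Real.log_le_log (by linarith) (by linarith)
  have hm2 : Real.log (p + 2) ≤ t * L + Real.log 3 := by
    rw [← hlogt, ← Real.log_mul (by linarith) (by norm_num)]
    exact Real.log_le_log (by positivity) (by linarith)
  have hN1 : L - Real.log 2 ≤ Real.log (1 + N) := by
    rw [hLdef, ← Real.log_div (by linarith) (by norm_num)]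
    exact Real.log_le_log (by positivity) (by linarith)
  have hN2 : Real.log (1 + N) ≤ L :=
    Real.log_le_log (by positivity) (by linarith [(Nat.cast_nonneg p : (0 : ℝ) ≤ p)])
  have hU := fW_upper N ha ha1
  have hD := fW_lower N ha ha1
  have hc1 := fg_one_log_le N
  have hc0 := fg_one_nonneg N
  have hc2 := fg_one_lower N hL1
  have hLL : 0 ≤ Real.log L := Real.log_nonneg hL1
  rw [one_div, Real.log_inv, neg_neg] at hU
  rw [← one_div] at hU
  constructor
  · have hb : t * L - 2 * Real.log 2 ≤ Real.log (1 + N) - Real.log (1 + N * (1 / (p + 2))) := by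
      have e : (1 + N * (1 / (p + 2)) : ℝ) = (n + 1) / (p + 2) := by
        rw [hNr]; field_simp; ring
      rw [e, Real.log_div (by positivity) (by positivity)]
      have : Real.log (n + 1) ≤ L + Real.log 2 := by
        rw [hLdef, ← Real.log_mul (by linarith) (by norm_num)]
        exact Real.log_le_log (by positivity) (by linarith)
      linarith
    have hP0 : 0 ≤ 1 - fW N (1 / (p + 2)) := by linarith [fW_le_one N ha ha1]
    have hden : 0 < L + Real.log L := by linarith
    have hfg : (1 - 1 / L) / (L + Real.log L) ≤ fg N 1 := by
      rw [div_le_iff₀ hden]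
      refine hc2.trans (mul_le_mul_of_nonneg_left ?_ hc0)
      rw [add_comm (N : ℝ) 1]; linarith
    have h1L : 0 ≤ 1 - 1 / L := by
      rw [sub_nonneg, div_le_one (by linarith)]; exact hL1
    rcases le_total 0 (t - 2 * Real.log 2 / L) with h | h
    · rw [max_eq_right h]
      have hLp : 0 < L := by linarith
      have e : (1 - 1 / L) / (1 + Real.log L / L) * (t - 2 * Real.log 2 / L)
          = (1 - 1 / L) / (L + Real.log L) * (t * L - 2 * Real.log 2) := by
        have e1 : 1 + Real.log L / L = (L + Real.log L) / L := by field_simp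
        have e2 : t - 2 * Real.log 2 / L = (t * L - 2 * Real.log 2) / L := by field_simp
        rw [e1, e2, div_div_eq_mul_div]
        field_simp
      have h' : 0 ≤ t * L - 2 * Real.log 2 := by
        have := mul_nonneg h hLp.le
        rwa [sub_mul, div_mul_cancel₀ _ hLp.ne'] at this
      rw [e]
      exact (mul_le_mul hfg hb h' hc0).trans hD
    · rw [max_eq_left h, mul_zero]; exact hP0
  · have hLp : 0 < L := by linarith
    have e : (t + Real.log 3 / L) / (1 - Real.log 2 / L)
        = (t * L + Real.log 3) / (L - Real.log 2) := by
      have e1 : 1 - Real.log 2 / L = (L - Real.log 2) / L := by field_simp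
      have e2 : t + Real.log 3 / L = (t * L + Real.log 3) / L := by field_simp
      rw [e1, e2, div_div_div_cancel_right₀ hLp.ne']
    have hd : 0 < L - Real.log 2 := by linarith
    rw [e, le_div_iff₀ hd]
    have hlog0 : 0 ≤ Real.log ((p : ℝ) + 2) := le_trans (by positivity) hm1
    calc (1 - fW N (1 / (p + 2))) * (L - Real.log 2)
        ≤ (fg N 1 * Real.log (p + 2)) * (L - Real.log 2) := by
          exact mul_le_mul_of_nonneg_right hU hd.le
      _ = Real.log (p + 2) * (fg N 1 * (L - Real.log 2)) := by ring
      _ ≤ Real.log (p + 2) * 1 := by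
          apply mul_le_mul_of_nonneg_left _ hlog0
          exact (mul_le_mul_of_nonneg_left hN1 hc0).trans hc1
      _ ≤ t * L + Real.log 3 := by linarith

lemma tendsto_logs : Tendsto (fun n : ℕ => Real.log n) atTop atTop :=
  Real.tendsto_log_atTop.comp tendsto_natCast_atTop_atTop

/-- Uniform law: `log(n - Xₙ)/log n` converges in distribution (w.r.t. Lebesgue measure
on `[0,1]`) to a random variable uniformly distributed on `[0,1]`. -/
theorem uniform_law_for_digit_sums :
    ∀ t ∈ Set.Icc (0 : ℝ) 1,
      Tendsto (fun n : ℕ =>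
          (volume {x ∈ Set.Icc (0 : ℝ) 1 |
            Real.log ((n : ℝ) - (Xproc n x : ℝ)) / Real.log n ≤ t}).toReal)
        atTop (nhds t) := by
  intro t ⟨ht0, ht1⟩
  simp only [vol_eq]
  rcases eq_or_lt_of_le ht1 with rfl | ht1
  · apply tendsto_const_nhds.congr'
    filter_upwards [eventually_ge_atTop 3] with n hn
    have : {x | Real.log ((n : ℝ) - (Xproc n x : ℝ)) / Real.log n ≤ 1} = Set.univ := by
      apply Set.eq_univ_of_forall
      intro x
      change Real.log ((n : ℝ) - (Xproc n x : ℝ)) / Real.log n ≤ 1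
      have hn' : (1 : ℝ) < n := by exact_mod_cast (by omega : 1 < n)
      rw [div_le_one (Real.log_pos hn')]
      have hX : (Xproc n x : ℝ) ≤ n := by exact_mod_cast (Xproc_mem n x).1
      rcases eq_or_lt_of_le hX with h | h
      · rw [h, sub_self, Real.log_zero]; exact Real.log_nonneg hn'.le
      · exact Real.log_le_log (by linarith)
          (by linarith [(Nat.cast_nonneg (Xproc n x) : (0 : ℝ) ≤ _)])
    rw [this]; simp
  · have hinv : ∀ c : ℝ, Tendsto (fun L : ℝ => c / L) atTop (nhds 0) :=
      fun c => tendsto_const_nhds.div_atTop tendsto_id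
    have hloglog : Tendsto (fun L : ℝ => Real.log L / L) atTop (nhds 0) :=
      Real.isLittleO_log_id_atTop.tendsto_div_nhds_zero
    have lo : Tendsto (fun L : ℝ => (1 - 1 / L) / (1 + Real.log L / L)
        * max 0 (t - 2 * Real.log 2 / L)) atTop (nhds t) := by
      have := ((tendsto_const_nhds (x := (1 : ℝ))).sub (hinv 1)).div
        ((tendsto_const_nhds (x := (1 : ℝ))).add hloglog) (by norm_num)
      have := this.mul ((tendsto_const_nhds (x := (0 : ℝ))).max
        ((tendsto_const_nhds (x := t)).sub (hinv (2 * Real.log 2))))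
      simpa [ht0] using this
    have up : Tendsto (fun L : ℝ => (t + Real.log 3 / L) / (1 - Real.log 2 / L))
        atTop (nhds t) := by
      have := ((tendsto_const_nhds (x := t)).add (hinv (Real.log 3))).div
        ((tendsto_const_nhds (x := (1 : ℝ))).sub (hinv (Real.log 2))) (by norm_num)
      rw [add_zero, sub_zero, div_one] at this
      exact this
    have hsmall : ∀ᶠ n : ℕ in atTop, (n : ℝ) ^ t ≤ n / 2 := by
      have h1 : Tendsto (fun x : ℝ => x ^ (-(1 - t))) atTop (nhds 0) :=
        tendsto_rpow_neg_atTop (by linarith)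
      have h2 := (h1.comp tendsto_natCast_atTop_atTop).eventually
        (ge_mem_nhds (show (0 : ℝ) < 1 / 2 by norm_num))
      filter_upwards [h2, eventually_ge_atTop 1] with n hn hn1
      have hn0 : (0 : ℝ) < n := by exact_mod_cast hn1
      have e : (n : ℝ) ^ t = (n : ℝ) ^ (-(1 - t)) * n := by
        nth_rewrite 3 [← Real.rpow_one (n : ℝ)]
        rw [← Real.rpow_add hn0]; congr 1; ring
      rw [e]
      have := mul_le_mul_of_nonneg_right hn hn0.le
      simp only [Function.comp] at this
      linarith
    refine tendsto_of_tendsto_of_tendsto_of_le_of_le' (lo.comp tendsto_logs)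
      (up.comp tendsto_logs) ?_ ?_
    · filter_upwards [hsmall, eventually_ge_atTop 3] with n h1 h3
      exact (bounds h3 ht0 h1).1
    · filter_upwards [hsmall, eventually_ge_atTop 3] with n h1 h3
      exact (bounds h3 ht0 h1).2
end
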